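/- arXiv:1709.03127 — 2 statements merged into one kernel-verified Lean document; each statement's English description precedes it below -/
import Mathlib

section
/- Let φ ∈ 𝒮(ℝ^n) with φ̂(0) = 1. Then there exists a constant C > 0, depending only on n and φ, such that for every b ∈ BMO(ℝ^n) and every cube Q ⊂ ℝ^n with side length ℓ(Q), Σ_{k∈ℤ : 2^k ≤ ℓ(Q)} ∫_Q |Φ_k b(x) − E_k b(x)|² dx ≤ C ‖b‖_{BMO}² |Q|. Equivalently, dν(x,t) = Σ_{k∈ℤ} |Φ_k b(x) − E_k b(x)|² dx δ_{2^k}(t) is a Carleson measure on ℝ^{n+1}_+ with norm at most C‖b‖_{BMO}². -/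
open MeasureTheory ENNReal NNReal
noncomputable section

/-- The dyadic cube of side length `2^j` (from the grid `∏ (m_i 2^j, (m_i+1) 2^j]`)
containing the point `x`. -/
def dyadicCubeOf (n : ℕ) (j : ℤ) (x : EuclideanSpace ℝ (Fin n)) :
    Set (EuclideanSpace ℝ (Fin n)) :=
  {y | ∀ i, ((⌈x i / (2:ℝ) ^ j⌉ : ℝ) - 1) * (2:ℝ) ^ j < y i ∧
        y i ≤ (⌈x i / (2:ℝ) ^ j⌉ : ℝ) * (2:ℝ) ^ j}

/-- The dyadic conditional expectation `E_j f (x)`: the average of `f` over the dyadic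
cube of side length `2^j` containing `x`. -/
def dyadicAvg (n : ℕ) (j : ℤ) (f : EuclideanSpace ℝ (Fin n) → ℝ)
    (x : EuclideanSpace ℝ (Fin n)) : ℝ :=
  ⨍ y in dyadicCubeOf n j x, f y

/-- The (half-open) cube with corner `a` and side length `ℓ`. -/
def cube (n : ℕ) (a : EuclideanSpace ℝ (Fin n)) (ℓ : ℝ) :
    Set (EuclideanSpace ℝ (Fin n)) :=
  {y | ∀ i, a i < y i ∧ y i ≤ a i + ℓ}

/-- `t : ℝⁿ → ℤ` is a dyadic stopping time: it is measurable and each level set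
`{t = j}` is a union of dyadic cubes in `𝒟_j`, i.e. `t` is constant on the dyadic cube
of scale `t x` containing `x`. -/
def IsDyadicStopping (n : ℕ) (t : EuclideanSpace ℝ (Fin n) → ℤ) : Prop :=
  Measurable t ∧ ∀ x y, y ∈ dyadicCubeOf n (t x) x → t y = t x

/-- `Φ_k g = φ_k ∗ g` where `φ_k(x) = 2^{-kn} φ(2^{-k} x)`. -/
def schwartzConv (n : ℕ) (φ : SchwartzMap (EuclideanSpace ℝ (Fin n)) ℝ) (k : ℤ)
    (g : EuclideanSpace ℝ (Fin n) → ℝ) (x : EuclideanSpace ℝ (Fin n)) : ℝ :=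
  ∫ y, (2:ℝ) ^ (-(k * (n:ℤ))) * φ ((2:ℝ) ^ (-k) • (x - y)) * g y


abbrev EE (n : ℕ) := EuclideanSpace ℝ (Fin n)

/-- the model kernel -/
def kap (n N : ℕ) (s : ℝ) (z : EE n) : ℝ≥0∞ :=
  ENNReal.ofReal ((s ^ n)⁻¹ * ((1 + ‖z‖ / s) ^ N)⁻¹)

lemma kap_meas (n N : ℕ) (s : ℝ) : Measurable (kap n N s) := by
  unfold kap; fun_prop

lemma kap_neg (n N : ℕ) (s : ℝ) (z : EE n) : kap n N s (-z) = kap n N s z := by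
  simp [kap]

lemma kap_symm (n N : ℕ) (s : ℝ) (x y : EE n) : kap n N s (x - y) = kap n N s (y - x) := by
  rw [← kap_neg, neg_sub]

lemma kap_ne_top (n N : ℕ) (s : ℝ) (z : EE n) : kap n N s z ≠ ∞ := ENNReal.ofReal_ne_top

lemma kap_int (n N : ℕ) (hN : n + 1 ≤ N) :
    ∃ C : ℝ≥0, ∀ s : ℝ, 0 < s → ∫⁻ z, kap n N s z ≤ C := by
  have hfin : (∫⁻ z : EE n, kap n N 1 z) < ∞ := by
    have h := finite_integral_one_add_norm (E := EE n) (μ := volume) (r := (N : ℝ))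
      (by simp; exact_mod_cast hN)
    refine lt_of_le_of_lt (lintegral_mono fun z => ?_) h
    simp only [kap, one_pow, inv_one, one_mul, div_one]
    rw [Real.rpow_neg (by positivity), Real.rpow_natCast]
  refine ⟨(∫⁻ z : EE n, kap n N 1 z).toNNReal, fun s hs => ?_⟩
  rw [ENNReal.coe_toNNReal hfin.ne]
  have hmap := Measure.map_addHaar_smul (volume : Measure (EE n)) (r := s) hs.ne'
  have h1 : ∀ z : EE n, kap n N 1 z = ENNReal.ofReal (s ^ n) * kap n N s (s • z) := by
    intro z
    rw [kap, kap, ← ENNReal.ofReal_mul (by positivity)]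
    congr 1
    rw [norm_smul, Real.norm_eq_abs, abs_of_pos hs, mul_div_cancel_left₀ _ hs.ne', one_pow, div_one,
      ← mul_assoc, mul_inv_cancel₀ (by positivity), inv_one]
  calc ∫⁻ z, kap n N s z
      = ENNReal.ofReal (s ^ n) * ∫⁻ z, kap n N s z ∂(Measure.map (s • ·) volume) := by
        rw [hmap, lintegral_smul_measure, smul_eq_mul, ← mul_assoc, ← ENNReal.ofReal_mul (by positivity)]
        simp only [finrank_euclideanSpace, Fintype.card_fin]
        rw [abs_of_pos (by positivity), mul_inv_cancel₀ (by positivity)]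
        simp
    _ = ENNReal.ofReal (s ^ n) * ∫⁻ z, kap n N s (s • z) := by
        rw [lintegral_map (kap_meas n N s) (by fun_prop)]
    _ = ∫⁻ z, kap n N 1 z := by
        rw [← lintegral_const_mul _ (by have := kap_meas n N s; fun_prop)]
        exact lintegral_congr fun z => (h1 z).symm
    _ ≤ _ := le_rfl

lemma one_add_comp {s D : ℝ} (hs : 0 < s) (hD : 0 ≤ D) {n : ℕ} {y y' : EE n}
    (h : ‖y - y'‖ ≤ D * s) : (1 + ‖y'‖ / s) ≤ (1 + D) * (1 + ‖y‖ / s) := by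
  have h1 : ‖y'‖ ≤ ‖y‖ + ‖y - y'‖ := by
    have := norm_sub_le y (y - y'); simpa using this
  have h2 : ‖y'‖ / s ≤ ‖y‖ / s + D := by
    rw [div_le_iff₀ hs, add_mul, div_mul_cancel₀ _ hs.ne']; linarith
  have : 0 ≤ D * (‖y‖ / s) := by positivity
  nlinarith

lemma kap_comp (n N : ℕ) {s D : ℝ} (hs : 0 < s) (hD : 0 ≤ D) {y y' : EE n}
    (h : ‖y - y'‖ ≤ D * s) :
    kap n N s y ≤ ENNReal.ofReal ((1 + D) ^ N) * kap n N s y' := by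
  rw [kap, kap, ← ENNReal.ofReal_mul (by positivity)]
  apply ENNReal.ofReal_le_ofReal
  have := pow_le_pow_left₀ (by positivity) (one_add_comp hs hD h) N
  rw [mul_pow] at this
  have h3 : ((1 + ‖y‖ / s) ^ N)⁻¹ ≤ (1 + D) ^ N * ((1 + ‖y'‖ / s) ^ N)⁻¹ := by
    rw [inv_le_iff_one_le_mul₀ (by positivity), mul_right_comm,
      ← div_eq_mul_inv, le_div_iff₀ (by positivity)]
    linarith
  calc _ ≤ (s ^ n)⁻¹ * ((1 + D) ^ N * ((1 + ‖y'‖ / s) ^ N)⁻¹) := by gcongr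
    _ = _ := by ring

lemma kap_mul_pow (n N p : ℕ) {s : ℝ} (hs : 0 < s) (z : EE n) :
    kap n (N + p) s z * ENNReal.ofReal ((1 + ‖z‖ / s) ^ p) = kap n N s z := by
  rw [kap, kap, ← ENNReal.ofReal_mul (by positivity)]
  congr 1
  rw [pow_add]
  have : (0:ℝ) < 1 + ‖z‖ / s := by positivity
  field_simp

lemma kap_mono (n : ℕ) {N N' : ℕ} (h : N ≤ N') {s : ℝ} (hs : 0 < s) (z : EE n) :
    kap n N' s z ≤ kap n N s z := by
  apply ENNReal.ofReal_le_ofReal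
  have : (1:ℝ) ≤ 1 + ‖z‖ / s := by have : 0 ≤ ‖z‖ / s := by positivity
                                   linarith
  gcongr

lemma kap_peetre (n N p : ℕ) {s S : ℝ} (hs : 0 < s) (hS : s ≤ S) (a x y : EE n) :
    kap n p S (x - a) * kap n (N + p) s (x - y) ≤ kap n p S (y - a) * kap n N s (x - y) := by
  have hS0 : 0 < S := hs.trans_le hS
  have h := kap_comp n p (s := S) (D := ‖x - y‖ / S) hS0 (by positivity) (y := x - a) (y' := y - a)
    (by rw [div_mul_cancel₀ _ hS0.ne']; simp)
  calc kap n p S (x - a) * kap n (N + p) s (x - y)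
      ≤ (ENNReal.ofReal ((1 + ‖x - y‖ / S) ^ p) * kap n p S (y - a)) * kap n (N + p) s (x - y) := by
        gcongr
    _ ≤ (ENNReal.ofReal ((1 + ‖x - y‖ / s) ^ p) * kap n p S (y - a)) * kap n (N + p) s (x - y) := by
        gcongr
    _ = _ := by
        rw [← kap_mul_pow n N p hs]; ring

lemma schwartz_decay (n N : ℕ) (φ : SchwartzMap (EE n) ℝ) :
    ∃ C : ℝ≥0, ∀ z, |φ z| ≤ C * ((1 + ‖z‖) ^ N)⁻¹ := by
  refine ⟨Real.toNNReal (2 ^ N * (Finset.Iic (N, 0)).sup (fun m => SchwartzMap.seminorm ℝ m.1 m.2) φ), fun z => ?_⟩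
  have h := SchwartzMap.one_add_le_sup_seminorm_apply (𝕜 := ℝ) (m := (N, 0)) (k := N) (n := 0)
    le_rfl le_rfl φ z
  rw [norm_iteratedFDeriv_zero, Real.norm_eq_abs] at h
  rw [Real.coe_toNNReal _ (by positivity), ← div_eq_mul_inv, le_div_iff₀ (by positivity), mul_comm]
  exact h

lemma schwartz_diff (n N : ℕ) (φ : SchwartzMap (EE n) ℝ) (D : ℝ) (hD : 0 ≤ D) :
    ∃ C : ℝ≥0, ∀ z z', ‖z - z'‖ ≤ D →
      |φ z - φ z'| ≤ C * ‖z - z'‖ * ((1 + ‖z‖) ^ N)⁻¹ := by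
  set A : ℝ := 2 ^ N * (Finset.Iic (N, 1)).sup (fun m => SchwartzMap.seminorm ℝ m.1 m.2) φ with hA
  have hA0 : 0 ≤ A := by positivity
  refine ⟨Real.toNNReal ((1 + D) ^ N * A), fun z z' hz => ?_⟩
  have hder : ∀ u : EE n, ‖fderiv ℝ φ u‖ ≤ A * ((1 + ‖u‖) ^ N)⁻¹ := by
    intro u
    have h := SchwartzMap.one_add_le_sup_seminorm_apply (𝕜 := ℝ) (m := (N, 1)) (k := N) (n := 1)
      le_rfl le_rfl φ u
    rw [norm_iteratedFDeriv_one] at h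
    rw [← div_eq_mul_inv, le_div_iff₀ (by positivity), mul_comm]
    exact h
  have hseg : ∀ u ∈ segment ℝ z' z, ‖fderiv ℝ φ u‖ ≤ (1 + D) ^ N * A * ((1 + ‖z‖) ^ N)⁻¹ := by
    intro u hu
    have hu' : ‖u - z‖ ≤ D := by
      have := norm_sub_le_of_mem_segment (segment_symm ℝ z' z ▸ hu)
      rw [norm_sub_rev z z'] at hz
      exact this.trans hz
    have h1 := one_add_comp (n := n) (s := 1) one_pos hD (y := u) (y' := z) (by simpa using hu')
    simp only [div_one] at h1
    have h2 := pow_le_pow_left₀ (by positivity) h1 N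
    rw [mul_pow] at h2
    refine (hder u).trans ?_
    have h3 : ((1 + ‖u‖) ^ N)⁻¹ ≤ (1 + D) ^ N * ((1 + ‖z‖) ^ N)⁻¹ := by
      rw [inv_le_iff_one_le_mul₀ (by positivity), mul_right_comm,
        ← div_eq_mul_inv, le_div_iff₀ (by positivity)]
      linarith
    calc _ ≤ A * ((1 + D) ^ N * ((1 + ‖z‖) ^ N)⁻¹) := by gcongr
      _ = _ := by ring
  have := Convex.norm_image_sub_le_of_norm_fderiv_le (𝕜 := ℝ) (f := φ) (s := segment ℝ z' z)
    (fun u _ => φ.differentiableAt) hseg (convex_segment z' z) (left_mem_segment ℝ z' z)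
    (right_mem_segment ℝ z' z)
  rw [Real.norm_eq_abs] at this
  refine this.trans (le_of_eq ?_)
  rw [Real.coe_toNNReal _ (by positivity)]; ring

/-- rescaled convolution kernel -/
def ker (n : ℕ) (φ : SchwartzMap (EE n) ℝ) (k : ℤ) (z : EE n) : ℝ :=
  (2:ℝ) ^ (-(k * (n:ℤ))) * φ ((2:ℝ) ^ (-k) • z)

lemma two_zpow_n (n : ℕ) (k : ℤ) : (2:ℝ) ^ (-(k * (n:ℤ))) = (((2:ℝ) ^ k) ^ n)⁻¹ := by
  rw [zpow_neg, zpow_mul, zpow_natCast]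

lemma two_norm_smul {n : ℕ} (k : ℤ) (z : EE n) :
    ‖(2:ℝ) ^ (-k) • z‖ = ‖z‖ / (2:ℝ) ^ k := by
  rw [norm_smul, Real.norm_eq_abs, abs_of_pos (by positivity), zpow_neg]; field_simp

lemma ker_cont (n : ℕ) (φ : SchwartzMap (EE n) ℝ) (k : ℤ) : Continuous (ker n φ k) := by
  unfold ker
  have := φ.continuous
  fun_prop

lemma ker_bound (n N : ℕ) (φ : SchwartzMap (EE n) ℝ) :
    ∃ C : ℝ≥0, ∀ k z, ‖ker n φ k z‖ₑ ≤ C * kap n N ((2:ℝ) ^ k) z := by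
  obtain ⟨C, hC⟩ := schwartz_decay n N φ
  refine ⟨C, fun k z => ?_⟩
  rw [kap, ← ENNReal.ofReal_coe_nnreal, ← ENNReal.ofReal_mul (by positivity),
    Real.enorm_eq_ofReal_abs]
  apply ENNReal.ofReal_le_ofReal
  rw [ker, abs_mul, two_zpow_n, abs_of_pos (by positivity)]
  have := hC ((2:ℝ) ^ (-k) • z)
  rw [two_norm_smul] at this
  calc _ ≤ (((2:ℝ) ^ k) ^ n)⁻¹ * (C * ((1 + ‖z‖ / 2 ^ k) ^ N)⁻¹) := by gcongr
    _ = _ := by ring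

lemma ker_diff (n N : ℕ) (φ : SchwartzMap (EE n) ℝ) (D : ℝ) (hD : 0 ≤ D) :
    ∃ C : ℝ≥0, ∀ k : ℤ, ∀ z z' : EE n, ∀ r : ℝ, 0 ≤ r → ‖z - z'‖ ≤ D * r * 2 ^ k → r ≤ 1 →
      ‖ker n φ k z - ker n φ k z'‖ₑ ≤ C * ENNReal.ofReal r * kap n N ((2:ℝ) ^ k) z := by
  obtain ⟨C, hC⟩ := schwartz_diff n N φ D hD
  refine ⟨C * Real.toNNReal D, fun k z z' r hr h hr1 => ?_⟩
  rw [kap, ← ENNReal.ofReal_coe_nnreal, ← ENNReal.ofReal_mul (by positivity),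
    ← ENNReal.ofReal_mul (by positivity), Real.enorm_eq_ofReal_abs]
  apply ENNReal.ofReal_le_ofReal
  rw [ker, ker, ← mul_sub, abs_mul, two_zpow_n, abs_of_pos (by positivity)]
  have hn : ‖(2:ℝ) ^ (-k) • z - (2:ℝ) ^ (-k) • z'‖ ≤ D * r := by
    rw [← smul_sub, two_norm_smul, div_le_iff₀ (by positivity)]; exact h
  have := hC ((2:ℝ) ^ (-k) • z) ((2:ℝ) ^ (-k) • z') (hn.trans (by nlinarith))
  rw [two_norm_smul] at this
  calc _ ≤ (((2:ℝ) ^ k) ^ n)⁻¹ * (C * (D * r) * ((1 + ‖z‖ / 2 ^ k) ^ N)⁻¹) := by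
        gcongr; exact this.trans (by gcongr)
    _ = _ := by rw [NNReal.coe_mul, Real.coe_toNNReal _ hD]; ring

lemma ker_integral (n : ℕ) (φ : SchwartzMap (EE n) ℝ) (hφ : ∫ x, φ x = 1) (k : ℤ) (x : EE n) :
    ∫ y, ker n φ k (x - y) = 1 := by
  rw [integral_sub_left_eq_self (fun z => ker n φ k z) volume x]
  unfold ker
  rw [integral_const_mul, Measure.integral_comp_smul, hφ, two_zpow_n]
  simp only [finrank_euclideanSpace, Fintype.card_fin, smul_eq_mul, mul_one]
  rw [abs_of_pos (by positivity), zpow_neg]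
  have : (0:ℝ) < 2 ^ k := by positivity
  rw [inv_pow, inv_inv, inv_mul_cancel₀ (by positivity)]

lemma schwartzConv_eq (n : ℕ) (φ : SchwartzMap (EE n) ℝ) (k : ℤ) (g : EE n → ℝ) (x : EE n) :
    schwartzConv n φ k g x = ∫ y, ker n φ k (x - y) * g y := rfl

lemma lint_CS {α : Type*} [MeasurableSpace α] (μ : Measure α) {f u : α → ℝ≥0∞}
    (hf : AEMeasurable f μ) (hu : AEMeasurable u μ) :
    (∫⁻ a, f a * u a ∂μ) ^ 2 ≤ (∫⁻ a, f a ∂μ) * ∫⁻ a, f a * u a ^ 2 ∂μ := by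
  have h := ENNReal.lintegral_mul_le_Lp_mul_Lq μ Real.HolderConjugate.two_two
    (f := fun a => f a ^ (1/2:ℝ)) (g := fun a => f a ^ (1/2:ℝ) * u a) (by fun_prop) (by fun_prop)
  have e1 : ∀ a, f a ^ (1/2:ℝ) * f a ^ (1/2:ℝ) = f a := by
    intro a
    rw [← ENNReal.rpow_add_of_nonneg _ _ (by norm_num) (by norm_num)]; norm_num
  have e2 : ∀ c : ℝ≥0∞, (c ^ (1/2:ℝ)) ^ (2:ℝ) = c := by
    intro c; rw [← ENNReal.rpow_mul]; norm_num
  have e3 : ∀ c : ℝ≥0∞, (c ^ (1/2:ℝ)) ^ 2 = c := by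
    intro c; rw [← ENNReal.rpow_natCast]; exact_mod_cast e2 c
  simp only [Pi.mul_apply, ← mul_assoc, e1, e2, ENNReal.mul_rpow_of_nonneg _ _ (zero_le_two (α := ℝ))] at h
  calc _ ≤ _ := pow_le_pow_left' h 2
    _ = _ := by rw [mul_pow, e3, e3]; simp


def idx (n : ℕ) (m : ℤ) (x : EE n) : Fin n → ℤ := fun i => ⌈x i / (2:ℝ) ^ m⌉

lemma idx_meas (n : ℕ) (m : ℤ) : Measurable (idx n m) := by
  unfold idx
  refine measurable_pi_lambda _ fun i => ?_
  have : Measurable fun x : EE n => x i / (2:ℝ) ^ m := by fun_prop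
  exact this.ceil

lemma mem_Q {n : ℕ} {m : ℤ} {x y : EE n} :
    y ∈ dyadicCubeOf n m x ↔ idx n m y = idx n m x := by
  have h2 : (0:ℝ) < 2 ^ m := by positivity
  simp only [dyadicCubeOf, Set.mem_setOf_eq, idx, funext_iff, Int.ceil_eq_iff]
  refine forall_congr' fun i => ?_
  rw [lt_div_iff₀ h2, div_le_iff₀ h2]

lemma Q_eq_pre (n : ℕ) (m : ℤ) (x : EE n) :
    dyadicCubeOf n m x = idx n m ⁻¹' {idx n m x} := by
  ext y; simp [mem_Q]

lemma Q_meas (n : ℕ) (m : ℤ) (x : EE n) : MeasurableSet (dyadicCubeOf n m x) := by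
  rw [Q_eq_pre]; exact idx_meas n m (measurableSet_singleton _)

lemma Q_self {n : ℕ} (m : ℤ) (x : EE n) : x ∈ dyadicCubeOf n m x := mem_Q.2 rfl

lemma Q_congr {n : ℕ} {m : ℤ} {x y : EE n} (h : y ∈ dyadicCubeOf n m x) :
    dyadicCubeOf n m y = dyadicCubeOf n m x := by
  rw [Q_eq_pre, Q_eq_pre, mem_Q.1 h]

lemma vol_box (n : ℕ) (t : Fin n → Set ℝ) (ht : ∀ i, MeasurableSet (t i)) :
    volume {y : EE n | ∀ i, y i ∈ t i} = ∏ i, volume (t i) := by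
  have h := (PiLp.volume_preserving_ofLp (Fin n)).measure_preimage
    (s := Set.univ.pi t) (MeasurableSet.univ_pi ht).nullMeasurableSet
  rw [volume_pi_pi] at h
  rw [← h]; congr 1; ext y; simp

lemma cube_eq (n : ℕ) (a : EE n) (ℓ : ℝ) :
    cube n a ℓ = {y : EE n | ∀ i, y i ∈ Set.Ioc (a i) (a i + ℓ)} := rfl

lemma cube_meas (n : ℕ) (a : EE n) (ℓ : ℝ) : MeasurableSet (cube n a ℓ) := by
  have : cube n a ℓ = ⋂ i, (fun y : EE n => y i) ⁻¹' (Set.Ioc (a i) (a i + ℓ)) := by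
    ext y; simp [cube_eq]
  rw [this]
  refine MeasurableSet.iInter fun i => ?_
  exact (by fun_prop : Measurable fun y : EE n => y i) measurableSet_Ioc

lemma cube_vol (n : ℕ) (a : EE n) {ℓ : ℝ} (hℓ : 0 < ℓ) :
    volume (cube n a ℓ) = ENNReal.ofReal (ℓ ^ n) := by
  rw [cube_eq, vol_box _ _ (fun i => measurableSet_Ioc)]
  simp [Real.volume_Ioc, ENNReal.ofReal_pow hℓ.le]

lemma Q_eq_cube (n : ℕ) (m : ℤ) (x : EE n) :
    dyadicCubeOf n m x =
      cube n (WithLp.toLp 2 fun i => ((⌈x i / (2:ℝ) ^ m⌉ : ℝ) - 1) * (2:ℝ) ^ m) ((2:ℝ) ^ m) := by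
  ext y
  simp only [dyadicCubeOf, cube, Set.mem_setOf_eq]
  refine forall_congr' fun i => ?_
  rw [sub_mul, one_mul, sub_add_cancel]

def VV (n : ℕ) (m : ℤ) : ℝ≥0∞ := ENNReal.ofReal (((2:ℝ) ^ m) ^ n)

lemma Q_vol (n : ℕ) (m : ℤ) (x : EE n) : volume (dyadicCubeOf n m x) = VV n m := by
  rw [Q_eq_cube, cube_vol _ _ (by positivity)]; rfl

lemma VV_ne_zero (n : ℕ) (m : ℤ) : VV n m ≠ 0 := by
  have : (0:ℝ) < ((2:ℝ) ^ m) ^ n := by positivity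
  simp [VV, this]

lemma VV_ne_top (n : ℕ) (m : ℤ) : VV n m ≠ ∞ := ENNReal.ofReal_ne_top

lemma VV_succ (n : ℕ) (m : ℤ) : VV n (m + 1) = 2 ^ n * VV n m := by
  rw [VV, VV, zpow_add_one₀ two_ne_zero, mul_pow, mul_comm, ENNReal.ofReal_mul (by positivity)]
  congr 1
  rw [ENNReal.ofReal_pow (by norm_num)]; simp

lemma Q_coord {n : ℕ} {m : ℤ} {x y : EE n} (h : y ∈ dyadicCubeOf n m x) (i : Fin n) :
    |y i - x i| < (2:ℝ) ^ m := by
  have h1 := h i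
  have h2 := Q_self m x i
  rw [abs_lt]; constructor <;> nlinarith

lemma norm_le_coord {n : ℕ} (z : EE n) {r : ℝ} (hr : 0 ≤ r) (h : ∀ i, |z i| ≤ r) :
    ‖z‖ ≤ n * r := by
  rw [EuclideanSpace.norm_eq]
  apply Real.sqrt_le_iff.2 ⟨by positivity, ?_⟩
  calc ∑ i, ‖z i‖ ^ 2 ≤ ∑ i : Fin n, r ^ 2 := by
        gcongr with i; exact h i
    _ = n * r ^ 2 := by simp
    _ ≤ (n * r) ^ 2 := by
        rw [mul_pow]
        gcongr
        have : n ≤ n ^ 2 := Nat.le_self_pow (by norm_num) n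
        exact_mod_cast this

lemma coord_le_norm {n : ℕ} (z : EE n) (i : Fin n) : |z i| ≤ ‖z‖ := by
  have := PiLp.norm_apply_le z i
  simpa using this

lemma Q_dist {n : ℕ} {m : ℤ} {x y : EE n} (h : y ∈ dyadicCubeOf n m x) :
    ‖y - x‖ ≤ n * (2:ℝ) ^ m :=
  norm_le_coord _ (by positivity) fun i => by
    simpa using (Q_coord h i).le

lemma Q_succ {n : ℕ} (m : ℤ) (x : EE n) :
    dyadicCubeOf n m x ⊆ dyadicCubeOf n (m + 1) x := by
  intro y hy i
  have hy' := congrFun (mem_Q.1 hy) i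
  have h2 : (0:ℝ) < 2 ^ m := by positivity
  have h1 := Q_self (m + 1) x i
  rw [zpow_add_one₀ two_ne_zero] at h1 ⊢
  set c := ⌈x i / (2 ^ m * 2)⌉ with hc
  simp only [idx] at hy'
  have hx1 : (2 * c - 2 : ℤ) < ⌈x i / 2 ^ m⌉ := by
    rw [Int.lt_ceil, lt_div_iff₀ h2]; push_cast; nlinarith
  have hx2 : ⌈x i / 2 ^ m⌉ ≤ 2 * c := by
    rw [Int.ceil_le, div_le_iff₀ h2]; push_cast; nlinarith
  rw [← hy', Int.lt_ceil, lt_div_iff₀ h2] at hx1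
  rw [← hy', Int.ceil_le, div_le_iff₀ h2] at hx2
  push_cast at hx1 hx2
  constructor <;> nlinarith

lemma Q_mono {n : ℕ} {l m : ℤ} (h : l ≤ m) (x : EE n) :
    dyadicCubeOf n l x ⊆ dyadicCubeOf n m x := by
  induction m, h using Int.le_induction with
  | base => exact subset_rfl
  | succ m _ ih => exact ih.trans (Q_succ m x)

/-- `ℝ≥0∞`-valued averages. -/
def AA (n : ℕ) (m : ℤ) (u : EE n → ℝ≥0∞) (x : EE n) : ℝ≥0∞ :=
  (VV n m)⁻¹ * ∫⁻ y in dyadicCubeOf n m x, u y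

lemma AA_congr {n : ℕ} {m : ℤ} (u : EE n → ℝ≥0∞) {x y : EE n} (h : y ∈ dyadicCubeOf n m x) :
    AA n m u y = AA n m u x := by
  rw [AA, AA, Q_congr h]

lemma AA_mono {n : ℕ} {m : ℤ} {u v : EE n → ℝ≥0∞} {x : EE n}
    (h : ∀ y ∈ dyadicCubeOf n m x, u y ≤ v y) : AA n m u x ≤ AA n m v x := by
  unfold AA
  gcongr 1
  exact setLIntegral_mono' (Q_meas n m x) h

lemma AA_eq {n : ℕ} {m : ℤ} {u v : EE n → ℝ≥0∞} {x : EE n}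
    (h : ∀ y ∈ dyadicCubeOf n m x, u y = v y) : AA n m u x = AA n m v x :=
  le_antisymm (AA_mono fun y hy => (h y hy).le) (AA_mono fun y hy => (h y hy).ge)

lemma AA_const {n : ℕ} {m : ℤ} {u : EE n → ℝ≥0∞} {x : EE n} {c : ℝ≥0∞}
    (h : ∀ y ∈ dyadicCubeOf n m x, u y = c) : AA n m u x = c := by
  rw [AA_eq h, AA, setLIntegral_const, Q_vol, mul_comm, mul_assoc,
    ENNReal.mul_inv_cancel (VV_ne_zero n m) (VV_ne_top n m), mul_one]

lemma AA_add {n : ℕ} {m : ℤ} {u v : EE n → ℝ≥0∞} (hv : AEMeasurable v) {x : EE n} :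
    AA n m (fun y => u y + v y) x = AA n m u x + AA n m v x := by
  unfold AA
  rw [lintegral_add_right' _ hv.restrict, mul_add]

lemma AA_const_mul {n : ℕ} {m : ℤ} {u : EE n → ℝ≥0∞} (hu : AEMeasurable u) (c : ℝ≥0∞) {x : EE n} :
    AA n m (fun y => c * u y) x = c * AA n m u x := by
  unfold AA
  rw [lintegral_const_mul'' _ hu.restrict]; ring

lemma meas_of_idx {n : ℕ} {m : ℤ} {β : Type*} [MeasurableSpace β] {f : EE n → β}
    (h : ∀ x y, y ∈ dyadicCubeOf n m x → f y = f x) : Measurable f := by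
  intro s hs
  have : f ⁻¹' s = idx n m ⁻¹' (idx n m '' (f ⁻¹' s)) := by
    ext y
    constructor
    · intro hy; exact ⟨y, hy, rfl⟩
    · rintro ⟨x, hx, hxy⟩
      have := h x y (mem_Q.2 hxy.symm)
      simpa [this] using hx
  rw [this]
  exact idx_meas n m (Set.to_countable _).measurableSet

lemma AA_meas (n : ℕ) (m : ℤ) (u : EE n → ℝ≥0∞) : Measurable (AA n m u) :=
  meas_of_idx (m := m) fun _ _ h => AA_congr u h

lemma same_meas (n : ℕ) (m : ℤ) :
    MeasurableSet {p : EE n × EE n | p.2 ∈ dyadicCubeOf n m p.1} := by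
  simp only [mem_Q]
  exact measurableSet_eq_fun ((idx_meas n m).comp measurable_snd) ((idx_meas n m).comp measurable_fst)

lemma Q_symm {n : ℕ} {m : ℤ} {x y : EE n} :
    y ∈ dyadicCubeOf n m x ↔ x ∈ dyadicCubeOf n m y := by
  rw [mem_Q, mem_Q, eq_comm]

open Classical in
lemma AA_sa {n : ℕ} {m : ℤ} {u v : EE n → ℝ≥0∞} (hu : AEMeasurable u) (hv : AEMeasurable v) :
    ∫⁻ x, u x * AA n m v x = ∫⁻ x, AA n m u x * v x := by
  have key : ∀ (u v : EE n → ℝ≥0∞), AEMeasurable v → ∀ x, u x * AA n m v x =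
      ∫⁻ y, (VV n m)⁻¹ * ({p : EE n × EE n | p.2 ∈ dyadicCubeOf n m p.1}.indicator
        (fun p => u p.1 * v p.2) (x, y)) := by
    intro u v hv x
    have e : ∀ y, ({p : EE n × EE n | p.2 ∈ dyadicCubeOf n m p.1}.indicator
        (fun p => u p.1 * v p.2) (x, y)) = u x * (dyadicCubeOf n m x).indicator v y := by
      intro y
      by_cases h : y ∈ dyadicCubeOf n m x <;> simp [Set.indicator, h]
    simp_rw [e]
    have hvi := hv.indicator (Q_meas n m x)
    rw [lintegral_const_mul'' _ (by fun_prop), lintegral_const_mul'' _ hvi,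
      lintegral_indicator (Q_meas n m x), AA]
    ring
  simp_rw [key u v hv, mul_comm (AA n m u _), key v u hu]
  rw [lintegral_lintegral_swap]
  · refine lintegral_congr fun y => lintegral_congr fun x => ?_
    congr 1
    simp only [Set.indicator, Set.mem_setOf_eq]
    simp only [Q_symm (x := x) (y := y)]
    simp only [mul_comm]
  · have h1 : AEMeasurable (fun p : EE n × EE n => u p.1 * v p.2) (volume.prod volume) := by
      fun_prop
    exact (h1.indicator (same_meas n m)).const_mul _

lemma AA_tower {n : ℕ} {l m : ℤ} (h : l ≤ m) {u : EE n → ℝ≥0∞} (hu : AEMeasurable u) (x : EE n) :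
    AA n m (AA n l u) x = AA n m u x := by
  unfold AA
  congr 1
  change ∫⁻ y in dyadicCubeOf n m x, AA n l u y = _
  rw [← lintegral_indicator (Q_meas n m x), ← lintegral_indicator (Q_meas n m x)]
  have e : ∀ f : EE n → ℝ≥0∞, (dyadicCubeOf n m x).indicator f =
      fun y => (dyadicCubeOf n m x).indicator 1 y * f y := by
    intro f; ext y; by_cases hy : y ∈ dyadicCubeOf n m x <;> simp [hy]
  rw [e, e u, AA_sa ((measurable_one.indicator (Q_meas n m x)).aemeasurable) hu]
  refine lintegral_congr fun y => ?_
  congr 1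
  apply AA_const
  intro z hz
  have hz' := Q_mono h y hz
  have : z ∈ dyadicCubeOf n m x ↔ y ∈ dyadicCubeOf n m x := by
    rw [mem_Q, mem_Q, mem_Q.1 hz']
  by_cases hy : y ∈ dyadicCubeOf n m x <;> simp [this, hy]

lemma AA_succ {n : ℕ} {m : ℤ} (u : EE n → ℝ≥0∞) (x : EE n) :
    AA n m u x ≤ 2 ^ n * AA n (m + 1) u x := by
  unfold AA
  rw [VV_succ, ENNReal.mul_inv (by simp) (by simp), ← mul_assoc, ← mul_assoc,
    ENNReal.mul_inv_cancel (by simp) (by simp), one_mul]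
  gcongr
  exact Q_succ m x


structure BM (n : ℕ) (b : EE n → ℝ) (M : ℝ) : Prop where
  li : LocallyIntegrable b volume
  nn : 0 ≤ M
  osc : ∀ (a : EE n) (ℓ : ℝ), 0 < ℓ →
        ⨍ y in cube n a ℓ, |b y - ⨍ z in cube n a ℓ, b z| ≤ M

lemma cube_intOn {n : ℕ} {b : EE n → ℝ} (hb : LocallyIntegrable b volume) (a : EE n) (ℓ : ℝ) :
    IntegrableOn b (cube n a ℓ) := by
  refine (hb.integrableOn_isCompact (isCompact_closedBall a (n * |ℓ|))).mono_set ?_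
  intro y hy
  rw [Metric.mem_closedBall, dist_eq_norm]
  refine norm_le_coord _ (by positivity) fun i => ?_
  have := hy i
  have h2 := le_abs_self ℓ
  simp only [PiLp.sub_apply]
  rw [abs_le]; constructor <;> linarith [abs_nonneg ℓ]

lemma Q_intOn {n : ℕ} {b : EE n → ℝ} (hb : LocallyIntegrable b volume) (m : ℤ) (x : EE n) :
    IntegrableOn b (dyadicCubeOf n m x) := by
  rw [Q_eq_cube]; exact cube_intOn hb _ _

lemma Q_real (n : ℕ) (m : ℤ) (x : EE n) : volume.real (dyadicCubeOf n m x) = ((2:ℝ) ^ m) ^ n := by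
  rw [Measure.real, Q_vol, VV, ENNReal.toReal_ofReal (by positivity)]

lemma dyadicAvg_eq (n : ℕ) (m : ℤ) (f : EE n → ℝ) (x : EE n) :
    dyadicAvg n m f x = (((2:ℝ) ^ m) ^ n)⁻¹ * ∫ y in dyadicCubeOf n m x, f y := by
  rw [dyadicAvg, setAverage_eq, Q_real, smul_eq_mul]

lemma X_congr {n : ℕ} {m : ℤ} (b : EE n → ℝ) {x y : EE n} (h : y ∈ dyadicCubeOf n m x) :
    dyadicAvg n m b y = dyadicAvg n m b x := by
  rw [dyadicAvg, dyadicAvg, Q_congr h]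

lemma X_meas (n : ℕ) (m : ℤ) (b : EE n → ℝ) : Measurable (dyadicAvg n m b) :=
  meas_of_idx (m := m) fun _ _ h => X_congr b h

lemma setavg_sub_le {n : ℕ} {s : Set (EE n)} {f : EE n → ℝ} (hf : IntegrableOn f s)
    (h0 : volume s ≠ 0) (ht : volume s ≠ ∞) (c : ℝ) :
    ‖(⨍ y in s, f y) - c‖ₑ ≤ (volume s)⁻¹ * ∫⁻ y in s, ‖f y - c‖ₑ := by
  have hc : IntegrableOn (fun _ : EE n => c) s := integrableOn_const ht
  have h1 : (⨍ y in s, f y) - c = (volume.real s)⁻¹ * ∫ y in s, (f y - c) := by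
    rw [integral_sub hf hc, setAverage_eq, smul_eq_mul, setIntegral_const, smul_eq_mul, mul_sub,
      ← mul_assoc, inv_mul_cancel₀, one_mul]
    exact (ENNReal.toReal_ne_zero.2 ⟨h0, ht⟩)
  rw [h1, enorm_mul]
  gcongr
  · rw [Real.enorm_eq_ofReal (by positivity), Measure.real, ← ENNReal.toReal_inv,
      ENNReal.ofReal_toReal (by simp [h0])]
  · exact enorm_integral_le_lintegral_enorm _

lemma X_sub_le {n : ℕ} {m : ℤ} {b : EE n → ℝ} {x : EE n}
    (hb : IntegrableOn b (dyadicCubeOf n m x)) (c : ℝ) :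
    ‖dyadicAvg n m b x - c‖ₑ ≤ AA n m (fun y => ‖b y - c‖ₑ) x := by
  have := setavg_sub_le hb (by rw [Q_vol]; exact VV_ne_zero n m)
    (by rw [Q_vol]; exact VV_ne_top n m) c
  rwa [Q_vol] at this

lemma osc_lint {n : ℕ} {b : EE n → ℝ} {M : ℝ} (hb : BM n b M) (a : EE n) {ℓ : ℝ} (hℓ : 0 < ℓ) :
    (volume (cube n a ℓ))⁻¹ * ∫⁻ y in cube n a ℓ, ‖b y - ⨍ z in cube n a ℓ, b z‖ₑ
      ≤ ENNReal.ofReal M := by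
  have hv := cube_vol n a hℓ
  have hpos : (0:ℝ) < ℓ ^ n := by positivity
  have h := hb.osc a ℓ hℓ
  have hi : IntegrableOn (fun y => b y - ⨍ z in cube n a ℓ, b z) (cube n a ℓ) :=
    (cube_intOn hb.li a ℓ).sub (integrableOn_const (by rw [hv]; exact ENNReal.ofReal_ne_top))
  rw [← ofReal_integral_norm_eq_lintegral_enorm hi, hv, ← ENNReal.ofReal_inv_of_pos hpos,
    ← ENNReal.ofReal_mul (by positivity)]
  apply ENNReal.ofReal_le_ofReal
  rw [setAverage_eq, Measure.real, hv, ENNReal.toReal_ofReal hpos.le, smul_eq_mul] at h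
  exact h

lemma X_osc {n : ℕ} {b : EE n → ℝ} {M : ℝ} (hb : BM n b M) (m : ℤ) (x : EE n) :
    AA n m (fun y => ‖b y - dyadicAvg n m b x‖ₑ) x ≤ ENNReal.ofReal M := by
  have := osc_lint hb (WithLp.toLp 2 fun i => ((⌈x i / (2:ℝ) ^ m⌉ : ℝ) - 1) * (2:ℝ) ^ m)
    (ℓ := (2:ℝ) ^ m) (by positivity)
  rw [← Q_eq_cube, Q_vol] at this
  exact this

lemma X_osc' {n : ℕ} {b : EE n → ℝ} {M : ℝ} (hb : BM n b M) (m : ℤ) (x : EE n) :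
    AA n m (fun y => ‖b y - dyadicAvg n m b y‖ₑ) x ≤ ENNReal.ofReal M := by
  refine (AA_eq fun y hy => ?_).trans_le (X_osc hb m x)
  rw [X_congr b hy]

lemma X_jump {n : ℕ} {b : EE n → ℝ} {M : ℝ} (hb : BM n b M) (m : ℤ) (x : EE n) :
    ‖dyadicAvg n m b x - dyadicAvg n (m + 1) b x‖ₑ ≤ 2 ^ n * ENNReal.ofReal M :=
  (X_sub_le (Q_intOn hb.li m x) _).trans <| (AA_succ _ x).trans <| by
    gcongr; exact X_osc hb (m + 1) x

lemma X_growth {n : ℕ} {b : EE n → ℝ} {M : ℝ} (hb : BM n b M) (m : ℤ) (x y : EE n) :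
    ‖dyadicAvg n m b x - dyadicAvg n m b y‖ₑ ≤
      2 * 2 ^ n * ENNReal.ofReal M * ENNReal.ofReal ((1 + ‖x - y‖ / 2 ^ m) ^ n) := by
  have h2 : (0:ℝ) < 2 ^ m := by positivity
  set r : ℝ := ‖x - y‖ + 2 ^ m with hr
  have hr0 : 0 < r := by positivity
  set a : EE n := WithLp.toLp 2 fun i => x i - r with ha
  set S := cube n a (2 * r) with hS
  set e : ℝ := ⨍ z in S, b z with he
  have hsub : ∀ z, ‖x - z‖ ≤ ‖x - y‖ → dyadicCubeOf n m z ⊆ S := by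
    intro z hz u hu i
    have h1 := Q_coord hu i
    have h3 := (coord_le_norm (x - z) i).trans hz
    simp only [PiLp.sub_apply] at h3
    rw [abs_lt] at h1
    rw [abs_le] at h3
    simp only [ha]
    constructor <;> linarith
  have hosc := osc_lint hb a (ℓ := 2 * r) (by positivity)
  have key : ∀ z, ‖x - z‖ ≤ ‖x - y‖ → ‖dyadicAvg n m b z - e‖ₑ ≤
      2 ^ n * ENNReal.ofReal M * ENNReal.ofReal ((1 + ‖x - y‖ / 2 ^ m) ^ n) := by
    intro z hz
    have hVS : volume S = 2 ^ n * ENNReal.ofReal ((1 + ‖x - y‖ / 2 ^ m) ^ n) * VV n m := by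
      rw [hS, cube_vol _ _ (by positivity), VV, mul_assoc, ← ENNReal.ofReal_mul (by positivity),
        ← mul_pow, mul_pow, ENNReal.ofReal_mul (by positivity), ENNReal.ofReal_pow (by norm_num)]
      congr 2
      · simp
      · congr 1; rw [hr]; field_simp; ring
    calc ‖dyadicAvg n m b z - e‖ₑ ≤ AA n m (fun u => ‖b u - e‖ₑ) z := X_sub_le (Q_intOn hb.li m z) _
      _ ≤ (VV n m)⁻¹ * ∫⁻ u in S, ‖b u - e‖ₑ := by
        unfold AA; gcongr; exact hsub z hz
      _ = (VV n m)⁻¹ * volume S * ((volume S)⁻¹ * ∫⁻ u in S, ‖b u - e‖ₑ) := by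
        have h0 : volume S ≠ 0 := by
          rw [hS, cube_vol _ _ (by positivity)]; simp; positivity
        have h1 : volume S ≠ ∞ := by
          rw [hS, cube_vol _ _ (by positivity)]; simp
        rw [mul_assoc, ← mul_assoc (volume S), ENNReal.mul_inv_cancel h0 h1, one_mul]
      _ ≤ (VV n m)⁻¹ * volume S * ENNReal.ofReal M := by gcongr
      _ = _ := by
        rw [hVS, mul_comm _ (VV n m), ← mul_assoc,
          ENNReal.inv_mul_cancel (VV_ne_zero n m) (VV_ne_top n m)]
        ring
  have e1 : dyadicAvg n m b x - dyadicAvg n m b y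
    = (dyadicAvg n m b x - e) - (dyadicAvg n m b y - e) := by ring
  rw [e1]
  calc _ ≤ _ := enorm_sub_le
    _ ≤ _ := add_le_add (key x (by simp)) (key y le_rfl)
    _ = _ := by ring

lemma bm_aem {n : ℕ} {b : EE n → ℝ} {M : ℝ} (hb : BM n b M) : AEMeasurable b :=
  hb.li.aestronglyMeasurable.aemeasurable

lemma X_trunc {n : ℕ} {b : EE n → ℝ} {M : ℝ} (hb : BM n b M) {l m : ℤ} (h : l ≤ m) (x : EE n) :
    AA n m (fun y => ‖dyadicAvg n l b y - dyadicAvg n m b x‖ₑ) x ≤ ENNReal.ofReal M := by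
  have hm := bm_aem hb
  calc _ ≤ AA n m (AA n l (fun y => ‖b y - dyadicAvg n m b x‖ₑ)) x :=
        AA_mono fun y _ => X_sub_le (Q_intOn hb.li l y) _
    _ = AA n m (fun y => ‖b y - dyadicAvg n m b x‖ₑ) x := AA_tower h (by fun_prop) x
    _ ≤ _ := X_osc hb m x

lemma real_sa {n : ℕ} {m : ℤ} {u v : EE n → ℝ} (hu : AEStronglyMeasurable u)
    (hv : AEStronglyMeasurable v) (hfin : ∫⁻ x, ‖u x‖ₑ * AA n m (fun y => ‖v y‖ₑ) x ≠ ∞) :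
    ∫ x, u x * dyadicAvg n m v x = ∫ x, dyadicAvg n m u x * v x := by
  set T := {p : EE n × EE n | p.2 ∈ dyadicCubeOf n m p.1} with hT
  have hTm : MeasurableSet T := same_meas n m
  have key : ∀ (u v : EE n → ℝ), ∀ x, u x * dyadicAvg n m v x =
      ∫ y, (((2:ℝ) ^ m) ^ n)⁻¹ * (T.indicator (fun p => u p.1 * v p.2) (x, y)) := by
    intro u v x
    have e : ∀ y, (T.indicator (fun p => u p.1 * v p.2) (x, y))
        = u x * (dyadicCubeOf n m x).indicator v y := by
      intro y
      by_cases h : y ∈ dyadicCubeOf n m x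
      · rw [Set.indicator_of_mem (show (x, y) ∈ T from h), Set.indicator_of_mem h]
      · rw [Set.indicator_of_notMem (show (x, y) ∉ T from h), Set.indicator_of_notMem h, mul_zero]
    simp_rw [e]
    rw [integral_const_mul, integral_const_mul, integral_indicator (Q_meas n m x), dyadicAvg_eq]
    ring
  simp_rw [key u v, mul_comm (dyadicAvg n m u _), key v u]
  rw [integral_integral_swap]
  · congr 1; ext y; congr 1; ext x
    congr 1
    have : (x, y) ∈ T ↔ (y, x) ∈ T := Q_symm
    by_cases h : (x, y) ∈ T
    · rw [Set.indicator_of_mem h, Set.indicator_of_mem (this.1 h), mul_comm]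
    · rw [Set.indicator_of_notMem h, Set.indicator_of_notMem (fun h' => h (this.2 h'))]
  · have h1 : AEStronglyMeasurable (fun p : EE n × EE n => u p.1 * v p.2) (volume.prod volume) :=
      hu.comp_fst.mul hv.comp_snd
    have h2 : AEStronglyMeasurable (fun p => (((2:ℝ) ^ m) ^ n)⁻¹ * (T.indicator (fun p => u p.1 * v p.2) p))
      (volume.prod volume) := (h1.indicator hTm).const_mul _
    refine ⟨h2, ?_⟩
    rw [HasFiniteIntegral]
    change ∫⁻ p, ‖(((2:ℝ) ^ m) ^ n)⁻¹ * (T.indicator (fun p => u p.1 * v p.2) p)‖ₑ ∂(volume.prod volume) < ∞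
    rw [lintegral_prod _ h2.enorm]
    refine lt_of_le_of_lt (le_of_eq ?_) (lt_top_iff_ne_top.2 hfin)
    refine lintegral_congr fun x => ?_
    have e : ∀ y, ‖(((2:ℝ) ^ m) ^ n)⁻¹ * (T.indicator (fun p => u p.1 * v p.2) (x, y))‖ₑ
        = (VV n m)⁻¹ * (‖u x‖ₑ * (dyadicCubeOf n m x).indicator (fun y => ‖v y‖ₑ) y) := by
      intro y
      rw [enorm_mul]
      congr 1
      · rw [Real.enorm_eq_ofReal (by positivity), ENNReal.ofReal_inv_of_pos (by positivity), VV]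
      by_cases h : y ∈ dyadicCubeOf n m x
      · rw [Set.indicator_of_mem (show (x, y) ∈ T from h), Set.indicator_of_mem h, enorm_mul]
      · rw [Set.indicator_of_notMem (show (x, y) ∉ T from h), Set.indicator_of_notMem h, mul_zero,
          enorm_zero]
    simp_rw [e]
    have hvi := (hv.enorm).indicator (Q_meas n m x)
    rw [lintegral_const_mul'' _ (by fun_prop), lintegral_const_mul'' _ hvi,
      lintegral_indicator (Q_meas n m x), AA]
    ring

lemma X_tower {n : ℕ} {b : EE n → ℝ} (hb : LocallyIntegrable b volume) {l m : ℤ} (h : l ≤ m)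
    (x : EE n) : dyadicAvg n m (dyadicAvg n l b) x = dyadicAvg n m b x := by
  rw [dyadicAvg_eq, dyadicAvg_eq]
  congr 1
  set Q := dyadicCubeOf n m x with hQ
  have hQm : MeasurableSet Q := Q_meas n m x
  have hbm := hb.aestronglyMeasurable
  rw [← integral_indicator hQm, ← integral_indicator hQm]
  have e : ∀ f : EE n → ℝ, Q.indicator f = fun y => Q.indicator 1 y * f y := by
    intro f; ext y; by_cases hy : y ∈ Q <;> simp [hy]
  have e2 : ∀ f : EE n → ℝ≥0∞, Q.indicator f = fun y => Q.indicator 1 y * f y := by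
    intro f; ext y; by_cases hy : y ∈ Q <;> simp [hy]
  have e3 : ∀ y, dyadicAvg n l (Q.indicator 1) y = Q.indicator 1 y := by
    intro y
    have hc : ∀ z ∈ dyadicCubeOf n l y, Q.indicator (1 : EE n → ℝ) z = Q.indicator 1 y := by
      intro z hz
      have hz' := Q_mono h y hz
      have : z ∈ Q ↔ y ∈ Q := by
        rw [hQ, mem_Q, mem_Q, mem_Q.1 hz']
      by_cases hy : y ∈ Q <;> simp [this, hy]
    rw [dyadicAvg_eq, setIntegral_congr_fun (Q_meas n l y) hc, setIntegral_const, Q_real, smul_eq_mul,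
      ← mul_assoc, inv_mul_cancel₀ (by positivity), one_mul]
  rw [e, e b, real_sa]
  · simp_rw [e3]
  · exact (measurable_one.indicator hQm).aestronglyMeasurable
  · exact hbm
  · have e4 : ∀ y, ‖Q.indicator (1 : EE n → ℝ) y‖ₑ = Q.indicator 1 y := by
      intro y; by_cases hy : y ∈ Q <;> simp [hy]
    simp_rw [e4]
    rw [← e2, lintegral_indicator hQm]
    have : AA n m (AA n l (fun y => ‖b y‖ₑ)) x = AA n m (fun y => ‖b y‖ₑ) x :=
      AA_tower h (by fun_prop) x
    unfold AA at this
    rw [ENNReal.mul_right_inj (by simp [VV_ne_top]) (by simp [VV_ne_zero])] at this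
    change ∫⁻ y in Q, AA n l (fun y => ‖b y‖ₑ) y = _ at this
    rw [this]
    exact ((Q_intOn hb m x).2).ne


lemma en_sq_le (a b : ℝ≥0∞) : (a + b) ^ 2 ≤ 2 * a ^ 2 + 2 * b ^ 2 := by
  rcases eq_or_ne a ∞ with rfl | ha
  · simp
  rcases eq_or_ne b ∞ with rfl | hb
  · simp
  lift a to ℝ≥0 using ha
  lift b to ℝ≥0 using hb
  have := add_sq_le (a := a) (b := b)
  rw [mul_add] at this
  exact_mod_cast this

lemma en_sub_sq_le (a b c : ℝ) : ‖a - c‖ₑ ^ 2 ≤ 2 * ‖a - b‖ₑ ^ 2 + 2 * ‖b - c‖ₑ ^ 2 := by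
  have : a - c = (a - b) + (b - c) := by ring
  rw [this]
  exact (pow_le_pow_left' (enorm_add_le _ _) 2).trans (en_sq_le _ _)

lemma X_bdd {n : ℕ} {b : EE n → ℝ} {M : ℝ} (hb : BM n b M) (l m : ℤ) (x : EE n) :
    ∃ B : ℝ, ∀ y ∈ dyadicCubeOf n m x, ‖dyadicAvg n l b y‖ ≤ B := by
  set c : ℝ≥0∞ := ‖dyadicAvg n l b x‖ₑ + 2 * 2 ^ n * ENNReal.ofReal M *
    ENNReal.ofReal ((1 + (n * 2 ^ m) / 2 ^ l) ^ n) with hc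
  have hct : c ≠ ∞ := by
    rw [hc]
    exact ENNReal.add_ne_top.2 ⟨enorm_ne_top, ENNReal.mul_ne_top (ENNReal.mul_ne_top
      (ENNReal.mul_ne_top (by simp) (by simp)) (by simp)) (by simp)⟩
  refine ⟨c.toReal, fun y hy => ?_⟩
  rw [← toReal_enorm]
  refine ENNReal.toReal_mono hct ?_
  have h := X_growth hb l y x
  have e : dyadicAvg n l b y = dyadicAvg n l b x + (dyadicAvg n l b y - dyadicAvg n l b x) := by ring
  rw [e]
  refine (enorm_add_le _ _).trans ?_
  rw [hc]
  gcongr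
  refine h.trans ?_
  gcongr
  exact Q_dist hy

lemma X_intOn {n : ℕ} {b : EE n → ℝ} {M : ℝ} (hb : BM n b M) (l m : ℤ) (x : EE n) :
    IntegrableOn (dyadicAvg n l b) (dyadicCubeOf n m x) := by
  obtain ⟨B, hB⟩ := X_bdd hb l m x
  refine IntegrableOn.of_bound (by rw [Q_vol]; exact (VV_ne_top n m).lt_top)
    (X_meas n l b).aestronglyMeasurable B ?_
  exact (ae_restrict_iff' (Q_meas n m x)).2 (Filter.Eventually.of_forall hB)

lemma X_avg_le {n : ℕ} {b : EE n → ℝ} {M : ℝ} (hb : BM n b M) {l m : ℤ} (h : l ≤ m) (x : EE n)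
    (c : ℝ) : ‖dyadicAvg n m b x - c‖ₑ ≤ AA n m (fun y => ‖dyadicAvg n l b y - c‖ₑ) x := by
  rw [← X_tower hb.li h x]
  exact X_sub_le (X_intOn hb l m x) c

lemma JN_step {n : ℕ} {Y : EE n → ℝ} (hY : Measurable Y) (c : ℝ) (α β : ℝ≥0∞) (m : ℤ) (x : EE n)
    (h : ∀ y ∈ dyadicCubeOf n (m + 1) x, AA n m (fun z => ‖Y z - c‖ₑ ^ 2) y ≤
      α + β * AA n m (fun z => ‖Y z - c‖ₑ) y) :
    AA n (m + 1) (fun z => ‖Y z - c‖ₑ ^ 2) x ≤ α + β * AA n (m + 1) (fun z => ‖Y z - c‖ₑ) x := by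
  have hl : m ≤ m + 1 := by omega
  rw [← AA_tower hl (by fun_prop), ← AA_tower hl (u := fun z => ‖Y z - c‖ₑ) (by fun_prop)]
  refine (AA_mono h).trans ?_
  have hm := AA_meas n m (fun z => ‖Y z - c‖ₑ)
  rw [AA_add (by fun_prop), AA_const_mul (by fun_prop), AA_const (fun _ _ => rfl)]

lemma JN {n : ℕ} {b : EE n → ℝ} {M : ℝ} (hb : BM n b M) (l : ℤ) (J : ℕ) (x : EE n) :
    AA n (l + J) (fun y => ‖dyadicAvg n l b y - dyadicAvg n (l + J) b x‖ₑ ^ 2) x ≤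
      (32 + (4 + 2 ^ n) ^ 2) * ENNReal.ofReal M ^ 2 := by
  set μ := ENNReal.ofReal M with hμ
  set L : ℝ≥0∞ := 4 + 2 ^ n with hL
  set A : ℝ≥0∞ := 32 + L ^ 2 with hA
  set β : ℝ≥0∞ := 16 + L ^ 2 with hβ
  induction J using Nat.strong_induction_on generalizing x with
  | _ J IH =>
  set c := dyadicAvg n (l + J) b x with hc
  have hXm := X_meas n l b
  have claim : ∀ i : ℕ, i < J → ∀ y, ‖dyadicAvg n (l + i) b y - c‖ₑ ≤ L * μ →
      AA n (l + i) (fun z => ‖dyadicAvg n l b z - c‖ₑ ^ 2) y ≤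
        16 * μ ^ 2 + (β * μ) * AA n (l + i) (fun z => ‖dyadicAvg n l b z - c‖ₑ) y := by
    intro i
    induction i with
    | zero =>
      intro hi y hy
      by_cases h4 : ‖dyadicAvg n (l + (0:ℕ)) b y - c‖ₑ ≤ 4 * μ
      · refine le_trans ?_ le_self_add
        rw [AA_const (c := ‖dyadicAvg n (l + (0:ℕ)) b y - c‖ₑ ^ 2)]
        · calc _ ≤ (4 * μ) ^ 2 := pow_le_pow_left' h4 2
            _ = _ := by ring
        · intro z hz
          have := X_congr b hz
          simp only [Nat.cast_zero, add_zero] at this ⊢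
          rw [this]
      · refine le_trans ?_ le_add_self
        rw [AA_const (c := ‖dyadicAvg n (l + (0:ℕ)) b y - c‖ₑ ^ 2),
          AA_const (c := ‖dyadicAvg n (l + (0:ℕ)) b y - c‖ₑ)]
        · rw [sq]
          gcongr
          refine hy.trans ?_
          gcongr
          rw [hβ, hL]
          have h1 : (1:ℝ≥0∞) ≤ 4 + 2 ^ n := le_trans (by norm_num) (le_self_add (a := 4))
          calc (4 + 2 ^ n : ℝ≥0∞) ≤ (4 + 2 ^ n) ^ 2 := le_self_pow₀ h1 (by norm_num)
            _ ≤ _ := le_add_self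
        · intro z hz
          have := X_congr b hz
          simp only [Nat.cast_zero, add_zero] at this ⊢
          rw [this]
        · intro z hz
          have := X_congr b hz
          simp only [Nat.cast_zero, add_zero] at this ⊢
          rw [this]
    | succ i ih =>
      intro hi y hy
      by_cases h4 : ‖dyadicAvg n (l + (i + 1 : ℕ)) b y - c‖ₑ ≤ 4 * μ
      · have e : l + ((i + 1 : ℕ) : ℤ) = l + i + 1 := by push_cast; ring
        rw [e] at h4 ⊢
        refine JN_step hXm c _ _ (l + i) y fun z hz => ih (by omega) z ?_
        have e2 : dyadicAvg n (l + i) b z - c = (dyadicAvg n (l + i) b z - dyadicAvg n (l + i + 1) b z)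
          + (dyadicAvg n (l + i + 1) b y - c) := by rw [X_congr b hz]; ring
        rw [e2]
        calc _ ≤ _ := enorm_add_le _ _
          _ ≤ 2 ^ n * μ + 4 * μ := add_le_add (X_jump hb _ z) h4
          _ = L * μ := by rw [hL]; ring
      · refine le_trans ?_ le_add_self
        push Not at h4
        have hIH := IH (i + 1) hi y
        have hav := X_avg_le hb (l := l) (m := l + (i + 1 : ℕ)) (by omega) y c
        set e := dyadicAvg n (l + (i + 1 : ℕ)) b y with he
        calc AA n (l + (i + 1 : ℕ)) (fun z => ‖dyadicAvg n l b z - c‖ₑ ^ 2) y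
            ≤ AA n (l + (i + 1 : ℕ)) (fun z => 2 * ‖dyadicAvg n l b z - e‖ₑ ^ 2 + 2 * ‖e - c‖ₑ ^ 2) y :=
              AA_mono fun z _ => en_sub_sq_le _ _ _
          _ = 2 * AA n (l + (i + 1 : ℕ)) (fun z => ‖dyadicAvg n l b z - e‖ₑ ^ 2) y + 2 * ‖e - c‖ₑ ^ 2 := by
              rw [AA_add (by fun_prop), AA_const_mul (by fun_prop), AA_const (fun _ _ => rfl)]
          _ ≤ 2 * (A * μ ^ 2) + 2 * (L * μ) ^ 2 := by gcongr
          _ = β * μ * (4 * μ) := by rw [hA, hβ]; ring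
          _ ≤ β * μ * ‖e - c‖ₑ := by gcongr
          _ ≤ _ := by gcongr
  have htr := X_trunc hb (l := l) (m := l + J) (by omega) x
  rcases J with _ | j
  · rw [AA_const (c := 0)]
    · exact zero_le
    · intro y hy
      have := X_congr b hy
      simp only [Nat.cast_zero, add_zero] at this hc ⊢
      rw [this, hc]; simp
  · have e : l + ((j + 1 : ℕ) : ℤ) = l + j + 1 := by push_cast; ring
    have h1 : AA n (l + j + 1) (fun z => ‖dyadicAvg n l b z - c‖ₑ ^ 2) x ≤
        16 * μ ^ 2 + (β * μ) * AA n (l + j + 1) (fun z => ‖dyadicAvg n l b z - c‖ₑ) x := by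
      refine JN_step hXm c _ _ (l + j) x fun z hz => claim j (by omega) z ?_
      rw [hc, e, ← X_congr b hz]
      refine (X_jump hb _ z).trans ?_
      gcongr
      rw [hL]; exact le_add_self
    rw [← hc] at htr
    rw [e] at htr ⊢
    calc _ ≤ _ := h1
      _ ≤ 16 * μ ^ 2 + (β * μ) * μ := by gcongr
      _ = _ := by rw [hβ, hA]; ring

lemma AA_ofReal {n : ℕ} {m : ℤ} {g : EE n → ℝ} {x : EE n} (hg : ∀ y, 0 ≤ g y)
    (hi : IntegrableOn g (dyadicCubeOf n m x)) :
    AA n m (fun y => ENNReal.ofReal (g y)) x = ENNReal.ofReal (dyadicAvg n m g x) := by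
  rw [AA, dyadicAvg_eq, ENNReal.ofReal_mul (by positivity), ENNReal.ofReal_inv_of_pos (by positivity),
    ofReal_integral_eq_lintegral_ofReal hi (Filter.Eventually.of_forall hg)]
  rfl

lemma variance {n : ℕ} {b : EE n → ℝ} {M : ℝ} (hb : BM n b M) (l : ℤ) (x : EE n) (c : ℝ) :
    ‖dyadicAvg n (l + 1) b x - c‖ₑ ^ 2 +
      AA n (l + 1) (fun y => ‖dyadicAvg n l b y - dyadicAvg n (l + 1) b x‖ₑ ^ 2) x ≤
    AA n (l + 1) (fun y => ‖dyadicAvg n l b y - c‖ₑ ^ 2) x := by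
  set e := dyadicAvg n (l + 1) b x with he
  set Q := dyadicCubeOf n (l + 1) x with hQ
  have hesq : ∀ t : ℝ, ‖t‖ₑ ^ 2 = ENNReal.ofReal (t ^ 2) := by
    intro t
    rw [Real.enorm_eq_ofReal_abs, ← ENNReal.ofReal_pow (abs_nonneg t), sq_abs]
  have hX := X_intOn hb l (l + 1) x
  have hQt : volume Q ≠ ∞ := by rw [hQ, Q_vol]; exact VV_ne_top _ _
  have hc : ∀ d : ℝ, IntegrableOn (fun _ : EE n => d) Q := fun d => integrableOn_const hQt
  obtain ⟨B, hB⟩ := X_bdd hb l (l + 1) x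
  have hXm := X_meas n l b
  have hsq : ∀ d : ℝ, IntegrableOn (fun y => (dyadicAvg n l b y - d) ^ 2) Q := by
    intro d
    refine IntegrableOn.of_bound hQt.lt_top (by fun_prop) ((B + |d|) ^ 2) ?_
    refine (ae_restrict_iff' (Q_meas n _ x)).2 (Filter.Eventually.of_forall fun y hy => ?_)
    rw [norm_pow]
    gcongr
    exact (norm_sub_le _ _).trans (add_le_add (hB y hy) le_rfl)
  simp_rw [hesq]
  rw [AA_ofReal (fun _ => sq_nonneg _) (hsq c), AA_ofReal (fun _ => sq_nonneg _) (hsq e),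
    ← ENNReal.ofReal_add (sq_nonneg _)]
  · apply ENNReal.ofReal_le_ofReal
    apply le_of_eq
    have htow := X_tower hb.li (show l ≤ l + 1 by omega) x
    rw [← he] at htow
    rw [dyadicAvg_eq] at htow ⊢
    rw [dyadicAvg_eq, ← hQ]
    rw [← hQ] at htow
    have hpos : (0:ℝ) < (2 ^ (l + 1)) ^ n := by positivity
    have hs2 : IntegrableOn (fun y => (dyadicAvg n l b y - e) ^ 2 + 2 * (e - c) * dyadicAvg n l b y) Q :=
      (hsq e).add (hX.const_mul _)
    have h1 : ∫ y in Q, (dyadicAvg n l b y - c) ^ 2 =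
        (∫ y in Q, (dyadicAvg n l b y - e) ^ 2) + (2 * (e - c)) * (∫ y in Q, dyadicAvg n l b y)
          + (2 ^ (l + 1)) ^ n * (c ^ 2 - e ^ 2) := by
      rw [← integral_const_mul, ← Q_real n (l + 1) x, ← hQ, ← smul_eq_mul (volume.real Q),
        ← setIntegral_const, ← integral_add (hsq e) (hX.const_mul _),
        ← integral_add hs2 (hc _)]
      congr 1; ext y; ring
    have h2 : ∫ y in Q, dyadicAvg n l b y = (2 ^ (l + 1)) ^ n * e := by
      rw [← htow]; field_simp
    rw [h1, h2]
    field_simp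
    ring
  · rw [dyadicAvg_eq]
    exact mul_nonneg (by positivity) (integral_nonneg fun y => sq_nonneg _)

/-- martingale differences -/
def hh (n : ℕ) (b : EE n → ℝ) (m : ℤ) (x : EE n) : ℝ := dyadicAvg n m b x - dyadicAvg n (m + 1) b x

lemma hh_meas (n : ℕ) (b : EE n → ℝ) (m : ℤ) : Measurable (hh n b m) :=
  (X_meas n m b).sub (X_meas n (m + 1) b)

lemma energy {n : ℕ} {b : EE n → ℝ} {M : ℝ} (hb : BM n b M) (K : ℤ) (i : ℕ) (x : EE n) (c : ℝ) :
    ∑ j ∈ Finset.range i, AA n K (fun y => ‖hh n b (K - 1 - j) y‖ₑ ^ 2) x ≤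
      AA n K (fun y => ‖dyadicAvg n (K - i) b y - c‖ₑ ^ 2) x := by
  induction i with
  | zero => simp
  | succ i ih =>
    rw [Finset.sum_range_succ]
    set l : ℤ := K - 1 - i with hl
    have e1 : K - ((i + 1 : ℕ) : ℤ) = l := by push_cast; omega
    have e2 : K - (i : ℤ) = l + 1 := by omega
    rw [e2] at ih
    rw [e1]
    have hle : l + 1 ≤ K := by omega
    have hX := X_meas n l b
    have hX1 := X_meas n (l + 1) b
    have hhm := hh_meas n b l
    rw [← AA_tower hle (u := fun y => ‖hh n b l y‖ₑ ^ 2) (by fun_prop),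
      ← AA_tower hle (u := fun y => ‖dyadicAvg n l b y - c‖ₑ ^ 2) (by fun_prop)]
    calc _ ≤ AA n K (fun y => ‖dyadicAvg n (l + 1) b y - c‖ₑ ^ 2) x +
          AA n K (AA n (l + 1) (fun y => ‖hh n b l y‖ₑ ^ 2)) x := by gcongr
      _ = AA n K (fun y => ‖dyadicAvg n (l + 1) b y - c‖ₑ ^ 2 +
          AA n (l + 1) (fun y => ‖hh n b l y‖ₑ ^ 2) y) x := by
        rw [AA_add (AA_meas n (l + 1) _).aemeasurable]
      _ ≤ _ := by
        refine AA_mono fun y _ => ?_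
        refine le_trans (le_of_eq ?_) (variance hb l y c)
        congr 1
        refine AA_eq fun z hz => ?_
        rw [hh, X_congr b hz]

lemma energy_tsum {n : ℕ} {b : EE n → ℝ} {M : ℝ} (hb : BM n b M) (K : ℤ) (x : EE n) :
    ∑' j : ℕ, AA n K (fun y => ‖hh n b (K - 1 - j) y‖ₑ ^ 2) x ≤
      (32 + (4 + 2 ^ n) ^ 2) * ENNReal.ofReal M ^ 2 := by
  refine ENNReal.tsum_le_of_sum_range_le fun i => ?_
  refine (energy hb K i x (dyadicAvg n K b x)).trans ?_
  have := JN hb (K - i) i x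
  rwa [sub_add_cancel] at this


lemma zpow_le_two {m k : ℤ} (h : m ≤ k) : (2:ℝ) ^ m ≤ 2 ^ k := zpow_le_zpow_right₀ (by norm_num) h

lemma kap_avg (n N : ℕ) {m : ℤ} {S : ℝ} (hS : (2:ℝ) ^ m ≤ S) (a y : EE n) :
    kap n N S (y - a) ≤ ENNReal.ofReal ((1 + n) ^ N) * AA n m (fun z => kap n N S (z - a)) y := by
  have h2 : (0:ℝ) < 2 ^ m := by positivity
  have hk := kap_meas n N S
  rw [← AA_const_mul (by fun_prop)]
  rw [← AA_const (n := n) (m := m) (x := y) (u := fun _ => kap n N S (y - a)) (fun _ _ => rfl)]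
  refine AA_mono fun z hz => kap_comp n N (h2.trans_le hS) (by positivity) ?_
  rw [sub_sub_sub_cancel_right, norm_sub_rev]
  exact (Q_dist hz).trans (by gcongr)

lemma kap_int_avg (n N : ℕ) {m : ℤ} {S : ℝ} (hS : (2:ℝ) ^ m ≤ S) (a : EE n) {f : EE n → ℝ≥0∞}
    (hf : AEMeasurable f) :
    ∫⁻ y, kap n N S (y - a) * f y ≤
      ENNReal.ofReal ((1 + n) ^ N) * ∫⁻ y, kap n N S (y - a) * AA n m f y := by
  have hk := kap_meas n N S
  have hm := AA_meas n m f
  rw [AA_sa (by fun_prop) hf, ← lintegral_const_mul' _ _ ENNReal.ofReal_ne_top]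
  refine lintegral_mono fun y => ?_
  rw [← mul_assoc]
  gcongr
  exact kap_avg n N hS a y

lemma kap_shift (n N : ℕ) (s : ℝ) (x : EE n) : ∫⁻ y, kap n N s (x - y) = ∫⁻ z, kap n N s z :=
  lintegral_sub_left_eq_self (fun z => kap n N s z) x

lemma kap_shift' (n N : ℕ) (s : ℝ) (x : EE n) : ∫⁻ y, kap n N s (y - x) = ∫⁻ z, kap n N s z := by
  rw [← kap_shift n N s x]
  exact lintegral_congr fun y => kap_symm _ _ _ _ _

/-- boundedness of convolution with kap on the weighted space -/
lemma conv_bdd (n p q : ℕ) (hq : n + 1 ≤ q) :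
    ∃ C : ℝ≥0, ∀ (s S : ℝ), 0 < s → s ≤ S → ∀ (a : EE n) (g : EE n → ℝ≥0∞), AEMeasurable g →
      ∫⁻ x, kap n p S (x - a) * (∫⁻ y, kap n (q + p) s (x - y) * g y) ^ 2 ≤
        C * ∫⁻ y, kap n p S (y - a) * g y ^ 2 := by
  obtain ⟨C, hC⟩ := kap_int n q hq
  refine ⟨C * C, fun s S hs hS a g hg => ?_⟩
  have hk := kap_meas n (q + p) s
  have hkq := kap_meas n q s
  have hw := kap_meas n p S
  have hI : ∀ x : EE n, ∫⁻ y, kap n (q + p) s (x - y) ≤ C := fun x => by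
    rw [kap_shift]
    exact (lintegral_mono fun z => kap_mono n (by omega) hs z).trans (hC s hs)
  have hgs : AEMeasurable (fun p : EE n × EE n => g p.2) (volume.prod volume) := hg.comp_snd
  calc ∫⁻ x, kap n p S (x - a) * (∫⁻ y, kap n (q + p) s (x - y) * g y) ^ 2
      ≤ ∫⁻ x, kap n p S (x - a) * (C * ∫⁻ y, kap n (q + p) s (x - y) * g y ^ 2) := by
        refine lintegral_mono fun x => ?_
        gcongr
        refine (lint_CS volume (by fun_prop) hg).trans ?_
        gcongr
        exact hI x
    _ = C * ∫⁻ x, ∫⁻ y, kap n p S (x - a) * (kap n (q + p) s (x - y) * g y ^ 2) := by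
        rw [← lintegral_const_mul' _ _ (by simp)]
        refine lintegral_congr fun x => ?_
        rw [lintegral_const_mul'' _ (by fun_prop)]
        ring
    _ ≤ C * ∫⁻ x, ∫⁻ y, kap n p S (y - a) * kap n q s (x - y) * g y ^ 2 := by
        refine mul_le_mul' le_rfl (lintegral_mono fun x => lintegral_mono fun y => ?_)
        rw [← mul_assoc]
        exact mul_le_mul' (kap_peetre n q p hs hS a x y) le_rfl
    _ = C * ∫⁻ y, ∫⁻ x, kap n p S (y - a) * kap n q s (x - y) * g y ^ 2 := by
        rw [lintegral_lintegral_swap]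
        have h1 : Measurable (fun z : EE n × EE n => kap n p S (z.2 - a) * kap n q s (z.1 - z.2)) := by
          fun_prop
        exact h1.aemeasurable.mul (hgs.pow_const 2)
    _ ≤ C * ∫⁻ y, C * (kap n p S (y - a) * g y ^ 2) := by
        gcongr with y
        calc ∫⁻ x, kap n p S (y - a) * kap n q s (x - y) * g y ^ 2
            = ∫⁻ x, (kap n p S (y - a) * g y ^ 2) * kap n q s (x - y) := by
              refine lintegral_congr fun x => by ring
          _ = (kap n p S (y - a) * g y ^ 2) * ∫⁻ x, kap n q s (x - y) :=
              lintegral_const_mul _ (by fun_prop)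
          _ ≤ (kap n p S (y - a) * g y ^ 2) * C := by
              gcongr; rw [kap_shift']; exact hC s hs
          _ = _ := by ring
    _ = _ := by
        rw [lintegral_const_mul' _ _ (by simp)]; push_cast; ring

lemma vol_slab (n : ℕ) (m : ℤ) (x z : EE n) :
    volume {y | y ∈ dyadicCubeOf n m x ∧ y + z ∉ dyadicCubeOf n m x} ≤
      VV n m * ENNReal.ofReal (n * ‖z‖ / 2 ^ m) := by
  have h2 : (0:ℝ) < 2 ^ m := by positivity
  set c : EE n := WithLp.toLp 2 fun i => ((⌈x i / (2:ℝ) ^ m⌉ : ℝ) - 1) * (2:ℝ) ^ m with hc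
  set s : ℝ := 2 ^ m with hs
  rw [Q_eq_cube, ← hc, ← hs]
  set U : Fin n → Set ℝ := fun i => if 0 ≤ z i then Set.Ioc (c i + s - z i) (c i + s)
    else Set.Ioc (c i) (c i - z i) with hU
  have hUm : ∀ i, MeasurableSet (U i) := by
    intro i; simp only [hU]; split_ifs <;> exact measurableSet_Ioc
  have hUv : ∀ i, volume (U i) = ENNReal.ofReal |z i| := by
    intro i; simp only [hU]; split_ifs with h
    · rw [Real.volume_Ioc, abs_of_nonneg h]; congr 1; ring
    · rw [Real.volume_Ioc, abs_of_neg (not_le.1 h)]; congr 1; ring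
  have hsub : {y | y ∈ cube n c s ∧ y + z ∉ cube n c s} ⊆
      ⋃ i, {y : EE n | ∀ j, y j ∈ if j = i then U j else Set.Ioc (c j) (c j + s)} := by
    rintro y ⟨hy, hyz⟩
    simp only [cube, Set.mem_setOf_eq, not_forall] at hyz
    obtain ⟨i, hi⟩ := hyz
    rw [Set.mem_iUnion]
    refine ⟨i, fun j => ?_⟩
    have hyj := hy j
    split_ifs with hji
    · subst hji
      simp only [hU]
      simp only [PiLp.add_apply] at hi
      split_ifs with h0
      · refine ⟨?_, hyj.2⟩
        by_contra hcon
        push Not at hcon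
        exact hi ⟨by linarith, by linarith⟩
      · refine ⟨hyj.1, ?_⟩
        by_contra hcon
        push Not at hcon
        push Not at h0
        exact hi ⟨by linarith, by linarith⟩
    · exact hyj
  refine (measure_mono hsub).trans ((measure_iUnion_le _).trans ?_)
  rw [tsum_fintype]
  have hbox : ∀ i, volume {y : EE n | ∀ j, y j ∈ if j = i then U j else Set.Ioc (c j) (c j + s)} ≤
      VV n m * ENNReal.ofReal (‖z‖ / s) := by
    intro i
    rw [vol_box n (fun j => if j = i then U j else Set.Ioc (c j) (c j + s))
      (fun j => by split_ifs; exacts [hUm j, measurableSet_Ioc])]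
    have e : ∀ j, volume (if j = i then U j else Set.Ioc (c j) (c j + s)) =
        (if j = i then ENNReal.ofReal (|z i| / s) else 1) * ENNReal.ofReal s := by
      intro j
      split_ifs with hji
      · subst hji
        rw [hUv, ← ENNReal.ofReal_mul (by positivity)]; congr 1; field_simp
      · rw [Real.volume_Ioc, one_mul]; congr 1; ring
    simp_rw [e]
    rw [Finset.prod_mul_distrib, Finset.prod_ite_eq' Finset.univ i, mul_comm]
    simp only [Finset.mem_univ, if_true, Finset.prod_const, Finset.card_univ, Fintype.card_fin]
    rw [VV, ENNReal.ofReal_pow (by positivity)]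
    gcongr
    exact coord_le_norm z i
  calc _ ≤ ∑ i : Fin n, VV n m * ENNReal.ofReal (‖z‖ / s) := Finset.sum_le_sum fun i _ => hbox i
    _ = VV n m * (n * ENNReal.ofReal (‖z‖ / s)) := by
        simp [Finset.sum_const, nsmul_eq_mul]; ring
    _ = _ := by
        rw [mul_div_assoc, ENNReal.ofReal_mul (by positivity)]; simp

open Classical in
/-- indicator of lying in different dyadic cubes -/
def FF (n : ℕ) (m : ℤ) (x y : EE n) : ℝ≥0∞ := if y ∈ dyadicCubeOf n m x then 0 else 1

lemma FF_symm {n : ℕ} {m : ℤ} (x y : EE n) : FF n m x y = FF n m y x := by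
  have h : y ∈ dyadicCubeOf n m x ↔ x ∈ dyadicCubeOf n m y := Q_symm
  by_cases h1 : y ∈ dyadicCubeOf n m x
  · simp [FF, h1, h.1 h1]
  · have h2 : x ∉ dyadicCubeOf n m y := fun h2 => h1 (h.2 h2)
    simp [FF, h1, h2]

lemma FF_meas (n : ℕ) (m : ℤ) : Measurable (fun p : EE n × EE n => FF n m p.1 p.2) :=
  Measurable.ite (same_meas n m) measurable_const measurable_const

lemma FF_le {n : ℕ} {m : ℤ} (x y : EE n) : FF n m x y ≤ 1 := by
  unfold FF; split_ifs <;> simp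

def bet (n : ℕ) (k m : ℤ) (y : EE n) : ℝ≥0∞ := ∫⁻ x, kap n (n + 2) ((2:ℝ) ^ k) (y - x) * FF n m y x

lemma bet_meas (n : ℕ) (k m : ℤ) : Measurable (bet n k m) := by
  have hk := kap_meas n (n + 2) ((2:ℝ) ^ k)
  have hF := FF_meas n m
  have : Measurable (fun p : EE n × EE n => kap n (n + 2) ((2:ℝ) ^ k) (p.1 - p.2) * FF n m p.1 p.2) := by
    fun_prop
  exact this.lintegral_prod_right'

lemma bet_aux_meas (n : ℕ) (k m : ℤ) : Measurable (fun p : EE n × EE n =>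
    kap n (n + 2) ((2:ℝ) ^ k) p.2 * FF n m p.1 (p.1 + p.2)) := by
  have hg : Measurable (fun p : EE n × EE n => (p.1, p.1 + p.2)) :=
    measurable_fst.prodMk (measurable_fst.add measurable_snd)
  exact ((kap_meas n (n + 2) ((2:ℝ) ^ k)).comp measurable_snd).mul ((FF_meas n m).comp hg)

lemma bet_avg (n : ℕ) : ∃ C : ℝ≥0, ∀ (k m : ℤ) (x : EE n),
    AA n m (bet n k m) x ≤ C * ENNReal.ofReal ((2:ℝ) ^ (k - m)) := by
  obtain ⟨C, hC⟩ := kap_int n (n + 1) le_rfl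
  refine ⟨n * C, fun k m x => ?_⟩
  have hk := kap_meas n (n + 2) ((2:ℝ) ^ k)
  have hF := FF_meas n m
  have hpos : (0:ℝ) < 2 ^ k := by positivity
  have e1 : ∀ y, bet n k m y = ∫⁻ z, kap n (n + 2) ((2:ℝ) ^ k) z * FF n m y (y + z) := by
    intro y
    rw [bet, ← lintegral_add_left_eq_self _ y]
    refine lintegral_congr fun z => ?_
    rw [kap_symm]; simp
  unfold AA
  simp_rw [e1]
  rw [lintegral_lintegral_swap]
  swap
  · exact (bet_aux_meas n k m).aemeasurable
  have e2 : ∀ z : EE n, ∫⁻ y in dyadicCubeOf n m x, kap n (n + 2) ((2:ℝ) ^ k) z * FF n m y (y + z) ≤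
      VV n m * (n * ENNReal.ofReal ((2:ℝ) ^ (k - m))) * kap n (n + 1) ((2:ℝ) ^ k) z := by
    intro z
    rw [lintegral_const_mul' _ _ (kap_ne_top _ _ _ _)]
    have h1 : ∫⁻ y in dyadicCubeOf n m x, FF n m y (y + z) ≤ VV n m * ENNReal.ofReal (n * ‖z‖ / 2 ^ m) := by
      refine le_trans (le_of_eq ?_) (vol_slab n m x z)
      have hm : MeasurableSet {y | y ∈ dyadicCubeOf n m x ∧ y + z ∉ dyadicCubeOf n m x} :=
        (Q_meas n m x).inter (((Q_meas n m x).preimage (by fun_prop : Measurable fun y : EE n => y + z)).compl)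
      rw [← lintegral_indicator (Q_meas n m x), ← lintegral_indicator_one hm]
      refine lintegral_congr fun y => ?_
      by_cases hy : y ∈ dyadicCubeOf n m x
      · by_cases hyz : y + z ∈ dyadicCubeOf n m x
        · simp [hy, hyz, FF, Q_congr hy]
        · simp [hy, hyz, FF, Q_congr hy]
      · simp [hy]
    calc _ ≤ kap n (n + 2) ((2:ℝ) ^ k) z * (VV n m * ENNReal.ofReal (n * ‖z‖ / 2 ^ m)) := by gcongr
      _ ≤ kap n (n + 2) ((2:ℝ) ^ k) z * (VV n m * (n * ENNReal.ofReal ((2:ℝ) ^ (k - m)) *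
            ENNReal.ofReal ((1 + ‖z‖ / 2 ^ k) ^ 1))) := by
          gcongr
          rw [← ENNReal.ofReal_natCast, ← ENNReal.ofReal_mul (by positivity),
            ← ENNReal.ofReal_mul (by positivity)]
          apply ENNReal.ofReal_le_ofReal
          rw [pow_one, mul_add, mul_one, zpow_sub₀ two_ne_zero]
          have h3 : (n:ℝ) * ‖z‖ / 2 ^ m = n * (2 ^ k / 2 ^ m) * (‖z‖ / 2 ^ k) := by field_simp
          rw [h3]
          have : (0:ℝ) ≤ n * (2 ^ k / 2 ^ m) := by positivity
          linarith
      _ = _ := by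
          rw [← kap_mul_pow n (n + 1) 1 hpos]; ring
  calc (VV n m)⁻¹ * ∫⁻ z, ∫⁻ y in dyadicCubeOf n m x, kap n (n + 2) ((2:ℝ) ^ k) z * FF n m y (y + z)
      ≤ (VV n m)⁻¹ * ∫⁻ z, VV n m * (n * ENNReal.ofReal ((2:ℝ) ^ (k - m))) * kap n (n + 1) ((2:ℝ) ^ k) z := by
        gcongr with z; exact e2 z
    _ = (VV n m)⁻¹ * (VV n m * (n * ENNReal.ofReal ((2:ℝ) ^ (k - m))) * ∫⁻ z, kap n (n + 1) ((2:ℝ) ^ k) z) := by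
        rw [lintegral_const_mul _ (kap_meas _ _ _)]
    _ ≤ (VV n m)⁻¹ * (VV n m * (n * ENNReal.ofReal ((2:ℝ) ^ (k - m))) * C) := by
        gcongr; exact hC _ hpos
    _ = _ := by
        rw [← mul_assoc, ← mul_assoc, ENNReal.inv_mul_cancel (VV_ne_zero n m) (VV_ne_top n m)]
        push_cast; ring


lemma FF_meas1 (n : ℕ) (m : ℤ) (x : EE n) : Measurable (FF n m x) := by
  refine Measurable.ite ?_ measurable_const measurable_const
  exact Q_meas n m x

lemma FF_meas' (n : ℕ) (m : ℤ) : Measurable (fun p : EE n × EE n => FF n m p.2 p.1) := by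
  have : (fun p : EE n × EE n => FF n m p.2 p.1) = fun p => FF n m p.1 p.2 := by
    ext p; exact FF_symm _ _
  rw [this]; exact FF_meas n m

lemma kap_avg_le (n N : ℕ) {m : ℤ} {S : ℝ} (hS : (2:ℝ) ^ m ≤ S) (x y : EE n) :
    AA n m (fun z => kap n N S (x - z)) y ≤ ENNReal.ofReal ((1 + n) ^ N) * kap n N S (x - y) := by
  have h2 : (0:ℝ) < 2 ^ m := by positivity
  rw [← AA_const (n := n) (m := m) (x := y)
    (u := fun _ => ENNReal.ofReal ((1 + n) ^ N) * kap n N S (x - y)) (fun _ _ => rfl)]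
  refine AA_mono fun z hz => kap_comp n N (h2.trans_le hS) (by positivity) ?_
  rw [(by abel : x - z - (x - y) = y - z), norm_sub_rev]
  exact (Q_dist hz).trans (by gcongr)

lemma ker_mul_int {n N : ℕ} {φ : SchwartzMap (EE n) ℝ} {C : ℝ≥0}
    (hC : ∀ k z, ‖ker n φ k z‖ₑ ≤ C * kap n N ((2:ℝ) ^ k) z) (k : ℤ) (x : EE n) {v : EE n → ℝ}
    (hv : AEStronglyMeasurable v)
    (hfin : ∫⁻ y, kap n N ((2:ℝ) ^ k) (x - y) * ‖v y‖ₑ ≠ ∞) :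
    Integrable (fun y => ker n φ k (x - y) * v y) := by
  have hcont : Continuous (fun y => ker n φ k (x - y)) := (ker_cont n φ k).comp (by fun_prop)
  refine ⟨hcont.aestronglyMeasurable.mul hv, ?_⟩
  rw [hasFiniteIntegral_iff_enorm]
  calc ∫⁻ y, ‖ker n φ k (x - y) * v y‖ₑ ≤ ∫⁻ y, C * (kap n N ((2:ℝ) ^ k) (x - y) * ‖v y‖ₑ) := by
        refine lintegral_mono fun y => ?_
        rw [enorm_mul, ← mul_assoc]
        exact mul_le_mul' (hC _ _) le_rfl
    _ = C * ∫⁻ y, (kap n N ((2:ℝ) ^ k) (x - y) * ‖v y‖ₑ) := lintegral_const_mul' _ _ (by simp)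
    _ < ∞ := ENNReal.mul_lt_top (by simp) hfin.lt_top

lemma ker_intg (n : ℕ) (φ : SchwartzMap (EE n) ℝ) (k : ℤ) (x : EE n) :
    Integrable (fun y => ker n φ k (x - y)) := by
  obtain ⟨C, hC⟩ := ker_bound n (n + 1) φ
  obtain ⟨C', hC'⟩ := kap_int n (n + 1) le_rfl
  have := ker_mul_int hC k x (v := fun _ => 1) (by fun_prop) (by
    simp only [enorm_one, mul_one]
    rw [kap_shift]
    exact ((hC' _ (by positivity)).trans_lt (by simp)).ne)
  simpa using this

lemma est2 (n N : ℕ) (φ : SchwartzMap (EE n) ℝ) :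
    ∃ C : ℝ≥0, ∀ k m : ℤ, m ≤ k → ∀ (x : EE n) (v : EE n → ℝ), AEStronglyMeasurable v →
      (∀ y, dyadicAvg n m v y = 0) → ∫⁻ y, kap n N ((2:ℝ) ^ k) (x - y) * ‖v y‖ₑ ≠ ∞ →
      ‖∫ y, ker n φ k (x - y) * v y‖ₑ ≤ C * ENNReal.ofReal ((2:ℝ) ^ (m - k)) *
        ∫⁻ y, kap n N ((2:ℝ) ^ k) (x - y) * ‖v y‖ₑ := by
  obtain ⟨C, hC⟩ := ker_bound n N φ
  obtain ⟨C', hC'⟩ := ker_diff n N φ n (by positivity)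
  refine ⟨C', fun k m hmk x v hv hv0 hfin => ?_⟩
  have hk := kap_meas n N ((2:ℝ) ^ k)
  have hcont : Continuous (fun y => ker n φ k (x - y)) := (ker_cont n φ k).comp (by fun_prop)
  set u : EE n → ℝ := fun y => ker n φ k (x - y) with hu
  have hve : AEMeasurable (fun y => ‖v y‖ₑ) := hv.enorm
  have hAu : ∀ y, AA n m (fun z => ‖u z‖ₑ) y ≤
      C * ENNReal.ofReal ((1 + n) ^ N) * kap n N ((2:ℝ) ^ k) (x - y) := by
    intro y
    calc _ ≤ AA n m (fun z => C * kap n N ((2:ℝ) ^ k) (x - z)) y := AA_mono fun z _ => hC _ _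
      _ = C * AA n m (fun z => kap n N ((2:ℝ) ^ k) (x - z)) y := AA_const_mul (by fun_prop) _
      _ ≤ _ := by
        rw [mul_assoc]; gcongr; exact kap_avg_le n N (zpow_le_two hmk) x y
  have hfin2 : ∫⁻ y, AA n m (fun z => ‖u z‖ₑ) y * ‖v y‖ₑ < ∞ := by
    calc _ ≤ ∫⁻ y, (C * ENNReal.ofReal ((1 + n) ^ N)) * (kap n N ((2:ℝ) ^ k) (x - y) * ‖v y‖ₑ) := by
          refine lintegral_mono fun y => ?_
          rw [← mul_assoc]
          exact mul_le_mul' (hAu y) le_rfl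
      _ = _ := lintegral_const_mul' _ _ (ENNReal.mul_ne_top (by simp) (by simp))
      _ < ∞ := ENNReal.mul_lt_top (ENNReal.mul_lt_top (by simp) (by simp)) hfin.lt_top
  have hsa := real_sa (m := m) (u := u) (v := v) hcont.aestronglyMeasurable hv (by
    rw [AA_sa (by fun_prop) hve]; exact hfin2.ne)
  simp only [hv0, mul_zero, integral_zero] at hsa
  have hui : Integrable u := ker_intg n φ k x
  have hub : ∀ y, ‖dyadicAvg n m u y‖ₑ ≤ AA n m (fun z => ‖u z‖ₑ) y := by
    intro y
    simpa using X_sub_le (m := m) (x := y) hui.integrableOn 0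
  have hi1 : Integrable (fun y => u y * v y) := ker_mul_int hC k x hv hfin
  have hi2 : Integrable (fun y => dyadicAvg n m u y * v y) := by
    refine ⟨(X_meas n m u).aestronglyMeasurable.mul hv, ?_⟩
    rw [hasFiniteIntegral_iff_enorm]
    refine lt_of_le_of_lt (lintegral_mono fun y => ?_) hfin2
    rw [enorm_mul]
    exact mul_le_mul' (hub y) le_rfl
  have he : ∫ y, u y * v y = ∫ y, (u y - dyadicAvg n m u y) * v y := by
    simp_rw [sub_mul]
    rw [integral_sub hi1 hi2, ← hsa, sub_zero]
  rw [he]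
  refine (enorm_integral_le_lintegral_enorm _).trans ?_
  rw [← lintegral_const_mul' _ _ (ENNReal.mul_ne_top (by simp) (by simp))]
  refine lintegral_mono fun y => ?_
  rw [enorm_mul, ← mul_assoc]
  refine mul_le_mul' ?_ le_rfl
  rw [enorm_sub_rev]
  refine (X_sub_le (m := m) (x := y) hui.integrableOn (u y)).trans ?_
  rw [← AA_const (n := n) (m := m) (x := y)
    (u := fun _ => C' * ENNReal.ofReal ((2:ℝ) ^ (m - k)) * kap n N ((2:ℝ) ^ k) (x - y)) (fun _ _ => rfl)]
  refine AA_mono fun z hz => ?_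
  rw [enorm_sub_rev]
  refine hC' k (x - y) (x - z) _ (by positivity) ?_ ?_
  · rw [(by abel : x - y - (x - z) = z - y), mul_assoc, ← zpow_add₀ two_ne_zero, sub_add_cancel]
    exact Q_dist hz
  · exact zpow_le_one_of_nonpos₀ (by norm_num) (by omega)

lemma est2w (n p : ℕ) (φ : SchwartzMap (EE n) ℝ) :
    ∃ C : ℝ≥0, ∀ k m K : ℤ, m ≤ k → k ≤ K → ∀ (a : EE n) (v : EE n → ℝ), AEStronglyMeasurable v →
      (∀ y, dyadicAvg n m v y = 0) →
      (∀ x, ∫⁻ y, kap n (n + 2 + p) ((2:ℝ) ^ k) (x - y) * ‖v y‖ₑ ≠ ∞) →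
      ∫⁻ x, kap n p ((2:ℝ) ^ K) (x - a) * ‖∫ y, ker n φ k (x - y) * v y‖ₑ ^ 2 ≤
        C * ENNReal.ofReal ((2:ℝ) ^ (m - k)) *
          ∫⁻ y, kap n p ((2:ℝ) ^ K) (y - a) * ‖v y‖ₑ ^ 2 := by
  obtain ⟨C, hC⟩ := est2 n (n + 2 + p) φ
  obtain ⟨C', hC'⟩ := conv_bdd n p (n + 2) (by omega)
  refine ⟨C ^ 2 * C', fun k m K hmk hkK a v hv hv0 hfin => ?_⟩
  have hr : ENNReal.ofReal ((2:ℝ) ^ (m - k)) ≤ 1 := by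
    rw [ENNReal.ofReal_le_one]
    exact zpow_le_one_of_nonpos₀ (by norm_num) (by omega)
  set r := ENNReal.ofReal ((2:ℝ) ^ (m - k)) with hrr
  calc _ ≤ ∫⁻ x, (C ^ 2 * r) * (kap n p ((2:ℝ) ^ K) (x - a) *
          (∫⁻ y, kap n (n + 2 + p) ((2:ℝ) ^ k) (x - y) * ‖v y‖ₑ) ^ 2) := by
        refine lintegral_mono fun x => ?_
        calc _ ≤ kap n p ((2:ℝ) ^ K) (x - a) *
              (C * r * ∫⁻ y, kap n (n + 2 + p) ((2:ℝ) ^ k) (x - y) * ‖v y‖ₑ) ^ 2 := by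
              gcongr; exact hC k m hmk x v hv hv0 (hfin x)
          _ = C ^ 2 * (r * r) * (kap n p ((2:ℝ) ^ K) (x - a) *
              (∫⁻ y, kap n (n + 2 + p) ((2:ℝ) ^ k) (x - y) * ‖v y‖ₑ) ^ 2) := by ring
          _ ≤ C ^ 2 * (r * 1) * (kap n p ((2:ℝ) ^ K) (x - a) *
              (∫⁻ y, kap n (n + 2 + p) ((2:ℝ) ^ k) (x - y) * ‖v y‖ₑ) ^ 2) := by gcongr
          _ = _ := by rw [mul_one]
    _ = (C ^ 2 * r) * ∫⁻ x, (kap n p ((2:ℝ) ^ K) (x - a) *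
          (∫⁻ y, kap n (n + 2 + p) ((2:ℝ) ^ k) (x - y) * ‖v y‖ₑ) ^ 2) :=
        lintegral_const_mul' _ _ (ENNReal.mul_ne_top (by simp) (by simp [hrr]))
    _ ≤ (C ^ 2 * r) * (C' * ∫⁻ y, kap n p ((2:ℝ) ^ K) (y - a) * ‖v y‖ₑ ^ 2) := by
        gcongr
        exact hC' _ _ (by positivity) (zpow_le_two hkK) a _ hv.enorm
    _ = _ := by push_cast; ring

set_option maxHeartbeats 800000 in
lemma est1_pt (n p : ℕ) (φ : SchwartzMap (EE n) ℝ) (hφ : ∫ x, φ x = 1) :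
    ∃ C : ℝ≥0, ∀ k m : ℤ, ∀ (h : EE n → ℝ), (∀ x y, y ∈ dyadicCubeOf n m x → h y = h x) →
      ∀ (x : EE n) (c : ℝ), Integrable (fun y => ker n φ k (x - y) * h y) →
      ‖(∫ y, ker n φ k (x - y) * h y) - h x‖ₑ ^ 2 ≤
        C * ∫⁻ y, kap n (n + 2 + p) ((2:ℝ) ^ k) (x - y) * FF n m x y *
          (‖h y - c‖ₑ ^ 2 + ‖h x - c‖ₑ ^ 2) := by
  obtain ⟨C, hC⟩ := ker_bound n (n + 2 + p) φ
  obtain ⟨C', hC'⟩ := kap_int n (n + 2 + p) (by omega)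
  refine ⟨C ^ 2 * C' * 2, fun k m h hh x c hintg => ?_⟩
  have hk := kap_meas n (n + 2 + p) ((2:ℝ) ^ k)
  have hm : Measurable h := meas_of_idx hh
  have hF : Measurable (FF n m x) := FF_meas1 n m x
  have e1 : (∫ y, ker n φ k (x - y) * h y) - h x = ∫ y, ker n φ k (x - y) * (h y - h x) := by
    simp_rw [mul_sub]
    rw [integral_sub hintg ((ker_intg n φ k x).mul_const _), integral_mul_const,
      ker_integral n φ hφ, one_mul]
  have e2 : ‖(∫ y, ker n φ k (x - y) * h y) - h x‖ₑ ≤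
      C * ∫⁻ y, kap n (n + 2 + p) ((2:ℝ) ^ k) (x - y) * FF n m x y * (‖h y - c‖ₑ + ‖h x - c‖ₑ) := by
    rw [e1, ← lintegral_const_mul' _ _ (by simp)]
    refine (enorm_integral_le_lintegral_enorm _).trans (lintegral_mono fun y => ?_)
    rw [enorm_mul]
    by_cases hy : y ∈ dyadicCubeOf n m x
    · simp [hh x y hy]
    · have : ‖h y - h x‖ₑ ≤ ‖h y - c‖ₑ + ‖h x - c‖ₑ := by
        have := enorm_sub_le (a := h y - c) (b := h x - c)
        simpa using this
      simp only [FF, hy, if_false, mul_one]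
      rw [← mul_assoc]
      exact mul_le_mul' (hC _ _) this
  calc _ ≤ (C * ∫⁻ y, kap n (n + 2 + p) ((2:ℝ) ^ k) (x - y) * FF n m x y *
          (‖h y - c‖ₑ + ‖h x - c‖ₑ)) ^ 2 := by gcongr
    _ = C ^ 2 * (∫⁻ y, kap n (n + 2 + p) ((2:ℝ) ^ k) (x - y) * FF n m x y *
          (‖h y - c‖ₑ + ‖h x - c‖ₑ)) ^ 2 := by ring
    _ ≤ C ^ 2 * ((∫⁻ y, kap n (n + 2 + p) ((2:ℝ) ^ k) (x - y) * FF n m x y) *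
          ∫⁻ y, kap n (n + 2 + p) ((2:ℝ) ^ k) (x - y) * FF n m x y *
          (‖h y - c‖ₑ + ‖h x - c‖ₑ) ^ 2) := by
        gcongr
        exact lint_CS volume (by fun_prop) (by fun_prop)
    _ ≤ C ^ 2 * (C' * ∫⁻ y, 2 * (kap n (n + 2 + p) ((2:ℝ) ^ k) (x - y) * FF n m x y *
          (‖h y - c‖ₑ ^ 2 + ‖h x - c‖ₑ ^ 2))) := by
        refine mul_le_mul' le_rfl (mul_le_mul' ?_ (lintegral_mono fun y => ?_))
        · refine le_trans (lintegral_mono fun y => ?_)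
            ((kap_shift n (n + 2 + p) ((2:ℝ) ^ k) x).le.trans (hC' _ (by positivity)))
          exact mul_le_of_le_one_right' (FF_le _ _)
        · calc _ ≤ kap n (n + 2 + p) ((2:ℝ) ^ k) (x - y) * FF n m x y *
                (2 * ‖h y - c‖ₑ ^ 2 + 2 * ‖h x - c‖ₑ ^ 2) := by gcongr; exact en_sq_le _ _
            _ = _ := by ring
    _ = _ := by
        rw [lintegral_const_mul' _ _ (by simp)]; push_cast; ring

set_option maxHeartbeats 800000 in
lemma est1_swap (n p : ℕ) {k m K : ℤ} (hkK : k ≤ K) (a : EE n) {g : EE n → ℝ≥0∞} (hg : Measurable g) :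
    ∫⁻ x, kap n p ((2:ℝ) ^ K) (x - a) * ∫⁻ y, kap n (n + 2 + p) ((2:ℝ) ^ k) (x - y) * FF n m x y *
      (g y + g x) ≤ 2 * ∫⁻ y, kap n p ((2:ℝ) ^ K) (y - a) * (g y * bet n k m y) := by
  have hw := kap_meas n p ((2:ℝ) ^ K)
  have hkN := kap_meas n (n + 2 + p) ((2:ℝ) ^ k)
  have hk := kap_meas n (n + 2) ((2:ℝ) ^ k)
  have hF := FF_meas n m
  have hFx : ∀ x, Measurable (FF n m x) := FF_meas1 n m
  have hbet := bet_meas n k m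
  have hpos : (0:ℝ) < 2 ^ k := by positivity
  have hA : ∫⁻ x, ∫⁻ y, kap n p ((2:ℝ) ^ K) (x - a) * (kap n (n + 2 + p) ((2:ℝ) ^ k) (x - y) *
      FF n m x y * g y) ≤ ∫⁻ y, kap n p ((2:ℝ) ^ K) (y - a) * (g y * bet n k m y) := by
    calc _ ≤ ∫⁻ x, ∫⁻ y, kap n p ((2:ℝ) ^ K) (y - a) * g y * (kap n (n + 2) ((2:ℝ) ^ k) (y - x) *
          FF n m y x) := by
          refine lintegral_mono fun x => lintegral_mono fun y => ?_
          calc _ = (kap n p ((2:ℝ) ^ K) (x - a) * kap n (n + 2 + p) ((2:ℝ) ^ k) (x - y)) *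
                (FF n m x y * g y) := by ring
            _ ≤ (kap n p ((2:ℝ) ^ K) (y - a) * kap n (n + 2) ((2:ℝ) ^ k) (x - y)) *
                (FF n m x y * g y) :=
                mul_le_mul' (kap_peetre n (n + 2) p hpos (zpow_le_two hkK) a x y) le_rfl
            _ = _ := by rw [kap_symm n (n + 2) _ x y, FF_symm x y]; ring
      _ = ∫⁻ y, ∫⁻ x, kap n p ((2:ℝ) ^ K) (y - a) * g y * (kap n (n + 2) ((2:ℝ) ^ k) (y - x) *
          FF n m y x) := by
          rw [lintegral_lintegral_swap]
          have h1 : Measurable (fun z : EE n × EE n => FF n m z.2 z.1) :=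
            FF_meas' n m
          have h2 : Measurable (fun z : EE n × EE n => kap n p ((2:ℝ) ^ K) (z.2 - a) * g z.2) := by
            fun_prop
          have h3 : Measurable (fun z : EE n × EE n => kap n (n + 2) ((2:ℝ) ^ k) (z.2 - z.1)) := by
            fun_prop
          exact (h2.mul (h3.mul h1)).aemeasurable
      _ = _ := by
          refine lintegral_congr fun y => ?_
          have := hFx y
          rw [lintegral_const_mul _ (by fun_prop), bet, mul_assoc]
  have hB : ∫⁻ x, ∫⁻ y, kap n p ((2:ℝ) ^ K) (x - a) * (kap n (n + 2 + p) ((2:ℝ) ^ k) (x - y) *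
      FF n m x y * g x) ≤ ∫⁻ y, kap n p ((2:ℝ) ^ K) (y - a) * (g y * bet n k m y) := by
    refine lintegral_mono fun x => ?_
    calc _ ≤ ∫⁻ y, kap n p ((2:ℝ) ^ K) (x - a) * g x * (kap n (n + 2) ((2:ℝ) ^ k) (x - y) *
          FF n m x y) := by
          refine lintegral_mono fun y => ?_
          calc _ = kap n p ((2:ℝ) ^ K) (x - a) * g x * (kap n (n + 2 + p) ((2:ℝ) ^ k) (x - y) *
                FF n m x y) := by ring
            _ ≤ _ := by gcongr; exact kap_mono n (by omega) hpos _
      _ = _ := by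
          have := hFx x
          rw [lintegral_const_mul _ (by fun_prop), bet, mul_assoc]
  rw [two_mul]
  refine le_trans (le_of_eq ?_) (add_le_add hA hB)
  have hmA : Measurable (fun x => ∫⁻ y, kap n p ((2:ℝ) ^ K) (x - a) *
      (kap n (n + 2 + p) ((2:ℝ) ^ k) (x - y) * FF n m x y * g y)) := by
    have h2 : Measurable (fun z : EE n × EE n => kap n p ((2:ℝ) ^ K) (z.1 - a) *
      (kap n (n + 2 + p) ((2:ℝ) ^ k) (z.1 - z.2) * FF n m z.1 z.2 * g z.2)) := by fun_prop
    exact h2.lintegral_prod_right'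
  rw [← lintegral_add_left hmA]
  refine lintegral_congr fun x => ?_
  have := hFx x
  rw [← lintegral_add_left (by fun_prop), ← lintegral_const_mul _ (by fun_prop)]
  refine lintegral_congr fun y => by ring

lemma est1 (n p : ℕ) (φ : SchwartzMap (EE n) ℝ) (hφ : ∫ x, φ x = 1) :
    ∃ C : ℝ≥0, ∀ k m K : ℤ, k ≤ m → m ≤ K → ∀ (a : EE n) (h : EE n → ℝ),
      (∀ x y, y ∈ dyadicCubeOf n m x → h y = h x) → ∀ (c : ℝ),
      (∀ x, Integrable (fun y => ker n φ k (x - y) * h y)) →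
      ∫⁻ x, kap n p ((2:ℝ) ^ K) (x - a) * ‖(∫ y, ker n φ k (x - y) * h y) - h x‖ₑ ^ 2 ≤
        C * ENNReal.ofReal ((2:ℝ) ^ (k - m)) *
          ∫⁻ y, kap n p ((2:ℝ) ^ K) (y - a) * ‖h y - c‖ₑ ^ 2 := by
  obtain ⟨C, hC⟩ := est1_pt n p φ hφ
  obtain ⟨C', hC'⟩ := bet_avg n
  refine ⟨C * 2 * Real.toNNReal ((1 + n) ^ p) * C', fun k m K hkm hmK a h hh c hintg => ?_⟩
  have hm : Measurable h := meas_of_idx hh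
  have hbet := bet_meas n k m
  set w : EE n → ℝ≥0∞ := fun x => kap n p ((2:ℝ) ^ K) (x - a) with hw
  set G : EE n → ℝ≥0∞ := fun y => ‖h y - c‖ₑ ^ 2 with hG
  have hGm : Measurable G := by fun_prop
  calc _ ≤ ∫⁻ x, C * (w x * ∫⁻ y, kap n (n + 2 + p) ((2:ℝ) ^ k) (x - y) * FF n m x y *
          (G y + G x)) := by
        refine lintegral_mono fun x => ?_
        calc _ ≤ w x * (C * ∫⁻ y, kap n (n + 2 + p) ((2:ℝ) ^ k) (x - y) * FF n m x y *
              (G y + G x)) := mul_le_mul' le_rfl (hC k m h hh x c (hintg x))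
          _ = _ := by ring
    _ = C * ∫⁻ x, (w x * ∫⁻ y, kap n (n + 2 + p) ((2:ℝ) ^ k) (x - y) * FF n m x y *
          (G y + G x)) := lintegral_const_mul' _ _ (by simp)
    _ ≤ C * (2 * ∫⁻ y, w y * (G y * bet n k m y)) :=
        mul_le_mul' le_rfl (est1_swap n p (hkm.trans hmK) a hGm)
    _ ≤ C * (2 * (ENNReal.ofReal ((1 + n) ^ p) * ∫⁻ y, w y * AA n m (fun y => G y * bet n k m y) y)) := by
        refine mul_le_mul' le_rfl (mul_le_mul' le_rfl ?_)
        exact kap_int_avg n p (zpow_le_two hmK) a (hGm.mul hbet).aemeasurable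
    _ ≤ C * (2 * (ENNReal.ofReal ((1 + n) ^ p) * ∫⁻ y, (C' * ENNReal.ofReal ((2:ℝ) ^ (k - m))) *
          (w y * G y))) := by
        refine mul_le_mul' le_rfl (mul_le_mul' le_rfl (mul_le_mul' le_rfl (lintegral_mono fun y => ?_)))
        have : AA n m (fun z => G z * bet n k m z) y = G y * AA n m (bet n k m) y := by
          rw [← AA_const_mul hbet.aemeasurable]
          refine AA_eq fun z hz => ?_
          simp only [hG, hh y z hz]
        rw [this]
        calc _ ≤ w y * (G y * (C' * ENNReal.ofReal ((2:ℝ) ^ (k - m)))) := by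
              gcongr; exact hC' k m y
          _ = _ := by ring
    _ = _ := by
        rw [lintegral_const_mul' _ _ (ENNReal.mul_ne_top (by simp) (by simp))]
        push_cast
        rw [← ENNReal.ofReal]
        ring


/-- convolution with the dilated kernel -/
def PP (n : ℕ) (φ : SchwartzMap (EE n) ℝ) (k : ℤ) (g : EE n → ℝ) (x : EE n) : ℝ :=
  ∫ y, ker n φ k (x - y) * g y

lemma PP_meas {n : ℕ} (φ : SchwartzMap (EE n) ℝ) (k : ℤ) {g : EE n → ℝ} (hg : Measurable g) :
    Measurable (PP n φ k g) := by
  have hk : Measurable (ker n φ k) := (ker_cont n φ k).measurable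
  have h : Measurable (fun z : EE n × EE n => ker n φ k (z.1 - z.2) * g z.2) := by fun_prop
  exact (h.stronglyMeasurable.integral_prod_right').measurable

lemma fin_b (n N : ℕ) (hN : n + 1 ≤ N) : ∃ C : ℝ≥0, ∀ (b : EE n → ℝ) (M : ℝ), BM n b M →
    ∀ k m : ℤ, m ≤ k → ∀ x : EE n,
      ∫⁻ y, kap n N ((2:ℝ) ^ k) (x - y) * ‖b y - dyadicAvg n m b y‖ₑ ≤ C * ENNReal.ofReal M := by
  obtain ⟨C, hC⟩ := kap_int n N hN
  refine ⟨Real.toNNReal ((1 + n) ^ N) * C, fun b M hb k m hmk x => ?_⟩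
  have hbm := bm_aem hb
  have hX := X_meas n m b
  have hk := kap_meas n N ((2:ℝ) ^ k)
  calc _ = ∫⁻ y, kap n N ((2:ℝ) ^ k) (y - x) * ‖b y - dyadicAvg n m b y‖ₑ := by
        refine lintegral_congr fun y => by rw [kap_symm]
    _ ≤ ENNReal.ofReal ((1 + n) ^ N) * ∫⁻ y, kap n N ((2:ℝ) ^ k) (y - x) *
          AA n m (fun y => ‖b y - dyadicAvg n m b y‖ₑ) y :=
        kap_int_avg n N (zpow_le_two hmk) x (by fun_prop)
    _ ≤ ENNReal.ofReal ((1 + n) ^ N) * ∫⁻ y, kap n N ((2:ℝ) ^ k) (y - x) * ENNReal.ofReal M := by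
        refine mul_le_mul' le_rfl (lintegral_mono fun y => mul_le_mul' le_rfl (X_osc' hb m y))
    _ = ENNReal.ofReal ((1 + n) ^ N) * ((∫⁻ y, kap n N ((2:ℝ) ^ k) (y - x)) * ENNReal.ofReal M) := by
        rw [lintegral_mul_const' _ _ (by simp)]
    _ ≤ ENNReal.ofReal ((1 + n) ^ N) * (C * ENNReal.ofReal M) := by
        gcongr
        rw [kap_shift']
        exact hC _ (by positivity)
    _ = _ := by
        push_cast
        rw [← ENNReal.ofReal]
        ring

lemma fin_X {n N : ℕ} (hN : n + 1 ≤ N) {b : EE n → ℝ} {M : ℝ} (hb : BM n b M) (k m : ℤ) (x : EE n) :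
    ∫⁻ y, kap n (N + n) ((2:ℝ) ^ k) (x - y) * ‖dyadicAvg n m b y‖ₑ ≠ ∞ := by
  obtain ⟨C, hC⟩ := kap_int n N hN
  have hk : (0:ℝ) < 2 ^ k := by positivity
  have hm : (0:ℝ) < 2 ^ m := by positivity
  set A : ℝ≥0∞ := ‖dyadicAvg n m b x‖ₑ with hA
  set D : ℝ := 1 + 2 ^ k / 2 ^ m with hD
  set B : ℝ≥0∞ := 2 * 2 ^ n * ENNReal.ofReal M * ENNReal.ofReal (D ^ n) with hB
  have hBf : B ≠ ∞ := by
    rw [hB]; exact ENNReal.mul_ne_top (ENNReal.mul_ne_top (ENNReal.mul_ne_top (by simp) (by simp)) (by simp)) (by simp)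
  have h1 : ∀ y, ‖dyadicAvg n m b y‖ₑ ≤ (A + B) * ENNReal.ofReal ((1 + ‖x - y‖ / 2 ^ k) ^ n) := by
    intro y
    have e0 : ‖dyadicAvg n m b y‖ₑ ≤ A + ‖dyadicAvg n m b x - dyadicAvg n m b y‖ₑ := by
      have := enorm_sub_le (a := dyadicAvg n m b x) (b := dyadicAvg n m b x - dyadicAvg n m b y)
      simpa using this
    have ht : 0 ≤ ‖x - y‖ / 2 ^ k := by positivity
    have e1 : (1:ℝ≥0∞) ≤ ENNReal.ofReal ((1 + ‖x - y‖ / 2 ^ k) ^ n) := by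
      rw [ENNReal.one_le_ofReal]
      exact one_le_pow₀ (by linarith)
    have e2 : ENNReal.ofReal ((1 + ‖x - y‖ / 2 ^ m) ^ n) ≤
        ENNReal.ofReal (D ^ n) * ENNReal.ofReal ((1 + ‖x - y‖ / 2 ^ k) ^ n) := by
      rw [← ENNReal.ofReal_mul (by positivity), ← mul_pow]
      apply ENNReal.ofReal_le_ofReal
      apply pow_le_pow_left₀ (by positivity)
      have e3 : ‖x - y‖ / 2 ^ m = (2 ^ k / 2 ^ m) * (‖x - y‖ / 2 ^ k) := by field_simp
      have : (0:ℝ) ≤ 2 ^ k / 2 ^ m := by positivity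
      rw [e3, hD]
      nlinarith
    calc _ ≤ A * 1 + 2 * 2 ^ n * ENNReal.ofReal M * ENNReal.ofReal ((1 + ‖x - y‖ / 2 ^ m) ^ n) := by
          rw [mul_one]; exact e0.trans (add_le_add le_rfl (X_growth hb m x y))
      _ ≤ A * ENNReal.ofReal ((1 + ‖x - y‖ / 2 ^ k) ^ n) + 2 * 2 ^ n * ENNReal.ofReal M *
          (ENNReal.ofReal (D ^ n) * ENNReal.ofReal ((1 + ‖x - y‖ / 2 ^ k) ^ n)) := by gcongr
      _ = _ := by rw [hB]; ring
  refine ne_of_lt ?_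
  calc _ ≤ ∫⁻ y, (A + B) * kap n N ((2:ℝ) ^ k) (x - y) := by
        refine lintegral_mono fun y => ?_
        rw [← kap_mul_pow n N n hk]
        calc _ ≤ kap n (N + n) ((2:ℝ) ^ k) (x - y) *
              ((A + B) * ENNReal.ofReal ((1 + ‖x - y‖ / 2 ^ k) ^ n)) := by gcongr; exact h1 y
          _ = _ := by ring
    _ = (A + B) * ∫⁻ y, kap n N ((2:ℝ) ^ k) (x - y) :=
        lintegral_const_mul' _ _ (ENNReal.add_ne_top.2 ⟨by simp [hA], hBf⟩)
    _ ≤ (A + B) * C := by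
        gcongr; rw [kap_shift]; exact hC _ hk
    _ < ∞ := ENNReal.mul_lt_top (ENNReal.add_lt_top.2 ⟨by simp [hA], hBf.lt_top⟩) (by simp)

lemma avg_sub {n : ℕ} {m : ℤ} {f g : EE n → ℝ} {x : EE n} (hf : IntegrableOn f (dyadicCubeOf n m x))
    (hg : IntegrableOn g (dyadicCubeOf n m x)) :
    dyadicAvg n m (fun y => f y - g y) x = dyadicAvg n m f x - dyadicAvg n m g x := by
  rw [dyadicAvg_eq, dyadicAvg_eq, dyadicAvg_eq, integral_sub hf hg, mul_sub]

lemma hh_avg {n : ℕ} {b : EE n → ℝ} {M : ℝ} (hb : BM n b M) (m : ℤ) (x : EE n) :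
    dyadicAvg n (m + 1) (hh n b m) x = 0 := by
  have := avg_sub (X_intOn hb m (m + 1) x) (X_intOn hb (m + 1) (m + 1) x)
  rw [X_tower hb.li (by omega), X_tower hb.li le_rfl, sub_self] at this
  exact this

lemma bX_avg {n : ℕ} {b : EE n → ℝ} {M : ℝ} (hb : BM n b M) (m : ℤ) (x : EE n) :
    dyadicAvg n m (fun y => b y - dyadicAvg n m b y) x = 0 := by
  rw [avg_sub (Q_intOn hb.li m x) (X_intOn hb m m x), X_tower hb.li le_rfl, sub_self]

lemma hh_congr {n : ℕ} (b : EE n → ℝ) (m : ℤ) (x y : EE n) (h : y ∈ dyadicCubeOf n m x) :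
    hh n b m y = hh n b m x := by
  rw [hh, hh, X_congr b h, X_congr b (Q_succ m x h)]

/-- the weight exponent -/
abbrev pp (n : ℕ) : ℕ := n + 1 + 2 * n
/-- the kernel exponent -/
abbrev NN (n : ℕ) : ℕ := n + 2 + pp n

lemma fin_X' {n : ℕ} {b : EE n → ℝ} {M : ℝ} (hb : BM n b M) (k m : ℤ) (x : EE n) :
    ∫⁻ y, kap n (NN n) ((2:ℝ) ^ k) (x - y) * ‖dyadicAvg n m b y‖ₑ ≠ ∞ := by
  have := fin_X (n := n) (N := n + 2 + (n + 1 + n)) (by omega) hb k m x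
  have e : n + 2 + (n + 1 + n) + n = NN n := by simp only [NN, pp]; ring
  rwa [e] at this

lemma fin_hh {n : ℕ} {b : EE n → ℝ} {M : ℝ} (hb : BM n b M) (k m : ℤ) (x : EE n) :
    ∫⁻ y, kap n (NN n) ((2:ℝ) ^ k) (x - y) * ‖hh n b m y‖ₑ ≠ ∞ := by
  have hX := X_meas n m b
  have hk := kap_meas n (NN n) ((2:ℝ) ^ k)
  refine ne_of_lt (lt_of_le_of_lt ?_ (ENNReal.add_lt_top.2
    ⟨(fin_X' hb k m x).lt_top, (fin_X' hb k (m + 1) x).lt_top⟩))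
  rw [← lintegral_add_left (by fun_prop)]
  refine lintegral_mono fun y => ?_
  rw [← mul_add]
  exact mul_le_mul' le_rfl enorm_sub_le

lemma ker_X_int {n : ℕ} (φ : SchwartzMap (EE n) ℝ) {b : EE n → ℝ} {M : ℝ} (hb : BM n b M) (k m : ℤ)
    (x : EE n) : Integrable (fun y => ker n φ k (x - y) * dyadicAvg n m b y) := by
  obtain ⟨C, hC⟩ := ker_bound n (NN n) φ
  exact ker_mul_int hC k x (X_meas n m b).aestronglyMeasurable (fin_X' hb k m x)

lemma ker_hh_int {n : ℕ} (φ : SchwartzMap (EE n) ℝ) {b : EE n → ℝ} {M : ℝ} (hb : BM n b M) (k m : ℤ)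
    (x : EE n) : Integrable (fun y => ker n φ k (x - y) * hh n b m y) := by
  obtain ⟨C, hC⟩ := ker_bound n (NN n) φ
  exact ker_mul_int hC k x (hh_meas n b m).aestronglyMeasurable (fin_hh hb k m x)

lemma PP_hh {n : ℕ} (φ : SchwartzMap (EE n) ℝ) {b : EE n → ℝ} {M : ℝ} (hb : BM n b M) (k m : ℤ)
    (x : EE n) : PP n φ k (hh n b m) x =
      PP n φ k (dyadicAvg n m b) x - PP n φ k (dyadicAvg n (m + 1) b) x := by
  unfold PP hh
  simp_rw [mul_sub]
  rw [integral_sub (ker_X_int φ hb k m x) (ker_X_int φ hb k (m + 1) x)]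

lemma PP_tendsto {n : ℕ} (φ : SchwartzMap (EE n) ℝ) {b : EE n → ℝ} {M : ℝ} (hb : BM n b M) (k K : ℤ)
    (x : EE n) : Filter.Tendsto (fun i : ℕ => PP n φ k (dyadicAvg n (K - i) b) x) Filter.atTop
      (nhds (PP n φ k b x)) := by
  obtain ⟨C, hC⟩ := est2 n (NN n) φ
  obtain ⟨C', hC'⟩ := fin_b n (NN n) (by simp only [NN]; omega)
  obtain ⟨C₀, hC₀⟩ := ker_bound n (NN n) φ
  rw [tendsto_iff_edist_tendsto_0]
  have key : ∀ i : ℕ, K - i ≤ k → edist (PP n φ k (dyadicAvg n (K - i) b) x) (PP n φ k b x) ≤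
      C * ENNReal.ofReal ((2:ℝ) ^ (K - i - k)) * (C' * ENNReal.ofReal M) := by
    intro i hi
    have hv : AEStronglyMeasurable (fun y => b y - dyadicAvg n (K - i) b y) volume :=
      hb.li.aestronglyMeasurable.sub (X_meas n _ b).aestronglyMeasurable
    have hf := hC' b M hb k (K - i) hi x
    have hfin : ∫⁻ y, kap n (NN n) ((2:ℝ) ^ k) (x - y) * ‖b y - dyadicAvg n (K - i) b y‖ₑ ≠ ∞ :=
      (hf.trans_lt (ENNReal.mul_lt_top (by simp) (by simp))).ne
    have h := hC k (K - i) hi x _ hv (bX_avg hb _) hfin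
    have hintg := ker_mul_int hC₀ k x hv hfin
    have e : PP n φ k b x - PP n φ k (dyadicAvg n (K - i) b) x =
        ∫ y, ker n φ k (x - y) * (b y - dyadicAvg n (K - i) b y) := by
      have h2 := ker_X_int φ hb k (K - i) x
      have h3 : PP n φ k b x = ∫ y, (ker n φ k (x - y) * (b y - dyadicAvg n (K - i) b y) +
          ker n φ k (x - y) * dyadicAvg n (K - i) b y) := by
        unfold PP
        congr 1; ext y; ring
      rw [h3, integral_add hintg h2, PP, add_sub_cancel_right]
    rw [edist_comm, edist_eq_enorm_sub, e]
    exact h.trans (by gcongr)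
  refine tendsto_of_tendsto_of_tendsto_of_le_of_le' tendsto_const_nhds ?_
    (Filter.Eventually.of_forall fun _ => zero_le)
    (h := fun i : ℕ => C * ENNReal.ofReal ((2:ℝ) ^ (K - i - k)) * (C' * ENNReal.ofReal M)) ?_
  · have h1 : Filter.Tendsto (fun i : ℕ => (2:ℝ) ^ (K - i - k)) Filter.atTop (nhds 0) := by
      have e : ∀ i : ℕ, (2:ℝ) ^ (K - i - k) = 2 ^ (K - k) * (1 / 2) ^ i := by
        intro i
        rw [(by ring : K - i - k = (K - k) - i), zpow_sub₀ two_ne_zero, zpow_natCast]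
        simp [div_eq_mul_inv]
      simp_rw [e]
      simpa using (tendsto_pow_atTop_nhds_zero_of_lt_one (by norm_num : (0:ℝ) ≤ 1/2)
        (by norm_num)).const_mul ((2:ℝ) ^ (K - k))
    have h2 := ENNReal.tendsto_ofReal h1
    rw [ENNReal.ofReal_zero] at h2
    have h3 := ENNReal.Tendsto.const_mul (a := (C : ℝ≥0∞)) h2 (Or.inr (by simp))
    have h4 := ENNReal.Tendsto.mul_const (b := (C' * ENNReal.ofReal M : ℝ≥0∞)) h3
      (Or.inr (ENNReal.mul_ne_top (by simp) (by simp)))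
    simpa using h4
  · filter_upwards [Filter.eventually_ge_atTop (K - k).toNat] with i hi
    exact key i (by omega)

lemma H0_bound (n : ℕ) : ∃ C : ℝ≥0, ∀ (b : EE n → ℝ) (M : ℝ), BM n b M → ∀ (K : ℤ) (a : EE n),
    ∫⁻ y, kap n (pp n) ((2:ℝ) ^ K) (y - a) * ‖dyadicAvg n K b y - dyadicAvg n K b a‖ₑ ^ 2 ≤
      C * ENNReal.ofReal M ^ 2 := by
  obtain ⟨C, hC⟩ := kap_int n (n + 1) le_rfl
  refine ⟨(2 * 2 ^ n) ^ 2 * C, fun b M hb K a => ?_⟩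
  have hK : (0:ℝ) < 2 ^ K := by positivity
  calc _ ≤ ∫⁻ y, ((2 * 2 ^ n) ^ 2 * ENNReal.ofReal M ^ 2) * kap n (n + 1) ((2:ℝ) ^ K) (y - a) := by
        refine lintegral_mono fun y => ?_
        rw [← kap_mul_pow n (n + 1) (2 * n) hK]
        calc _ ≤ kap n (pp n) ((2:ℝ) ^ K) (y - a) * (2 * 2 ^ n * ENNReal.ofReal M *
              ENNReal.ofReal ((1 + ‖y - a‖ / 2 ^ K) ^ n)) ^ 2 := by
              gcongr; exact X_growth hb K y a
          _ = _ := by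
              have e : ENNReal.ofReal ((1 + ‖y - a‖ / 2 ^ K) ^ (2 * n)) =
                  ENNReal.ofReal ((1 + ‖y - a‖ / 2 ^ K) ^ n) ^ 2 := by
                rw [← ENNReal.ofReal_pow (by positivity), ← pow_mul, mul_comm]
              rw [e]; ring
    _ = ((2 * 2 ^ n) ^ 2 * ENNReal.ofReal M ^ 2) * ∫⁻ y, kap n (n + 1) ((2:ℝ) ^ K) (y - a) :=
        lintegral_const_mul _ ((kap_meas _ _ _).comp (measurable_id.sub_const a))
    _ ≤ ((2 * 2 ^ n) ^ 2 * ENNReal.ofReal M ^ 2) * C := by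
        gcongr; rw [kap_shift']; exact hC _ hK
    _ = _ := by push_cast; ring

lemma Hs_bound (n : ℕ) : ∃ C : ℝ≥0, ∀ (b : EE n → ℝ) (M : ℝ), BM n b M → ∀ (K : ℤ) (a : EE n),
    ∑' j : ℕ, ∫⁻ y, kap n (pp n) ((2:ℝ) ^ K) (y - a) * ‖hh n b (K - 1 - j) y‖ₑ ^ 2 ≤
      C * ENNReal.ofReal M ^ 2 := by
  obtain ⟨C, hC⟩ := kap_int n (pp n) (by simp only [pp]; omega)
  refine ⟨Real.toNNReal ((1 + n) ^ pp n) * (32 + (4 + 2 ^ n) ^ 2) * C, fun b M hb K a => ?_⟩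
  have hK : (0:ℝ) < 2 ^ K := by positivity
  have hk := kap_meas n (pp n) ((2:ℝ) ^ K)
  have hm := hh_meas n b
  have hA : ∀ j : ℕ, Measurable (AA n K (fun y => ‖hh n b (K - 1 - j) y‖ₑ ^ 2)) := fun j => AA_meas _ _ _
  calc _ ≤ ∑' j : ℕ, ENNReal.ofReal ((1 + n) ^ pp n) * ∫⁻ y, kap n (pp n) ((2:ℝ) ^ K) (y - a) *
          AA n K (fun y => ‖hh n b (K - 1 - j) y‖ₑ ^ 2) y := by
        refine ENNReal.tsum_le_tsum fun j => ?_
        have := hm (K - 1 - j)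
        exact kap_int_avg n (pp n) le_rfl a (by fun_prop)
    _ = ENNReal.ofReal ((1 + n) ^ pp n) * ∫⁻ y, kap n (pp n) ((2:ℝ) ^ K) (y - a) *
          ∑' j : ℕ, AA n K (fun y => ‖hh n b (K - 1 - j) y‖ₑ ^ 2) y := by
        rw [ENNReal.tsum_mul_left, ← lintegral_tsum]
        · simp_rw [ENNReal.tsum_mul_left]
        · intro j
          have := hA j
          fun_prop
    _ ≤ ENNReal.ofReal ((1 + n) ^ pp n) * ∫⁻ y, kap n (pp n) ((2:ℝ) ^ K) (y - a) *
          ((32 + (4 + 2 ^ n) ^ 2) * ENNReal.ofReal M ^ 2) := by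
        refine mul_le_mul' le_rfl (lintegral_mono fun y => mul_le_mul' le_rfl (energy_tsum hb K y))
    _ = ENNReal.ofReal ((1 + n) ^ pp n) * ((∫⁻ y, kap n (pp n) ((2:ℝ) ^ K) (y - a)) *
          ((32 + (4 + 2 ^ n) ^ 2) * ENNReal.ofReal M ^ 2)) := by
        rw [lintegral_mul_const _ (by fun_prop)]
    _ ≤ ENNReal.ofReal ((1 + n) ^ pp n) * (C *
          ((32 + (4 + 2 ^ n) ^ 2) * ENNReal.ofReal M ^ 2)) := by
        gcongr; rw [kap_shift']; exact hC _ hK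
    _ = _ := by
        push_cast
        rw [← ENNReal.ofReal]
        ring


/-- the pieces of the telescoping decomposition -/
def tt (n : ℕ) (φ : SchwartzMap (EE n) ℝ) (b : EE n → ℝ) (K k : ℤ) : ℕ → EE n → ℝ
  | 0 => fun x => PP n φ k (dyadicAvg n K b) x - dyadicAvg n K b x
  | j + 1 => fun x => if k ≤ K - 1 - j then PP n φ k (hh n b (K - 1 - j)) x - hh n b (K - 1 - j) x
      else PP n φ k (hh n b (K - 1 - j)) x

lemma tt_meas (n : ℕ) (φ : SchwartzMap (EE n) ℝ) (b : EE n → ℝ) (K k : ℤ) (j : ℕ) :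
    Measurable (tt n φ b K k j) := by
  cases j with
  | zero => exact (PP_meas φ k (X_meas n K b)).sub (X_meas n K b)
  | succ j =>
    by_cases h : k ≤ K - 1 - j
    · simp only [tt, h, if_true]
      exact (PP_meas φ k (hh_meas n b _)).sub (hh_meas n b _)
    · simp only [tt, h, if_false]
      exact PP_meas φ k (hh_meas n b _)

lemma tt_sum {n : ℕ} (φ : SchwartzMap (EE n) ℝ) {b : EE n → ℝ} {M : ℝ} (hb : BM n b M) {k K : ℤ}
    (hk : k ≤ K) (x : EE n) (i : ℕ) :
    ∑ j ∈ Finset.range (i + 1), tt n φ b K k j x =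
      PP n φ k (dyadicAvg n (K - i) b) x - dyadicAvg n (max (K - i) k) b x := by
  induction i with
  | zero => simp [tt, hk]
  | succ i ih =>
    rw [Finset.sum_range_succ, ih]
    have e1 : K - ((i + 1 : ℕ) : ℤ) = K - 1 - i := by push_cast; ring
    have e2 : K - (i : ℤ) = (K - 1 - i) + 1 := by ring
    rw [e1, e2]
    set m : ℤ := K - 1 - i with hm
    simp only [tt, ← hm]
    rw [PP_hh φ hb]
    split_ifs with h
    · rw [max_eq_left h, max_eq_left (by omega), hh]; ring
    · rw [max_eq_right (by omega), max_eq_right (by omega)]; ring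

lemma tt_bound {n : ℕ} (φ : SchwartzMap (EE n) ℝ) {b : EE n → ℝ} {M : ℝ} (hb : BM n b M) {k K : ℤ}
    (hk : k ≤ K) (x : EE n) :
    ‖PP n φ k b x - dyadicAvg n k b x‖ₑ ≤ ∑' j, ‖tt n φ b K k j x‖ₑ := by
  have h1 : Filter.Tendsto (fun i : ℕ => ∑ j ∈ Finset.range (i + 1), tt n φ b K k j x) Filter.atTop
      (nhds (PP n φ k b x - dyadicAvg n k b x)) := by
    simp_rw [tt_sum φ hb hk]
    refine (PP_tendsto φ hb k K x).sub ?_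
    refine tendsto_const_nhds.congr' ?_
    filter_upwards [Filter.eventually_ge_atTop (K - k).toNat] with i hi
    rw [max_eq_right (by omega)]
  refine le_of_tendsto h1.enorm (Filter.Eventually.of_forall fun i => ?_)
  exact (enorm_sum_le _ _).trans (ENNReal.sum_le_tsum _)

/-- the distance between indices -/
def dd (i j : ℕ) : ℕ := ((i : ℤ) - j).natAbs

def HH (n : ℕ) (b : EE n → ℝ) (K : ℤ) (a : EE n) : ℕ → ℝ≥0∞
  | 0 => ∫⁻ y, kap n (pp n) ((2:ℝ) ^ K) (y - a) * ‖dyadicAvg n K b y - dyadicAvg n K b a‖ₑ ^ 2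
  | j + 1 => ∫⁻ y, kap n (pp n) ((2:ℝ) ^ K) (y - a) * ‖hh n b (K - 1 - j) y‖ₑ ^ 2

lemma tsum_split_le {f : ℕ → ℝ≥0∞} {A B : ℝ≥0∞} (h0 : f 0 ≤ A) (h1 : ∑' j, f (j + 1) ≤ B) :
    ∑' j, f j ≤ A + B := by
  have h : ∑' j, f j = f 0 + ∑' j, f (j + 1) := tsum_eq_zero_add' ENNReal.summable
  exact h.le.trans (add_le_add h0 h1)

lemma HH_bound (n : ℕ) : ∃ C : ℝ≥0, ∀ (b : EE n → ℝ) (M : ℝ), BM n b M → ∀ (K : ℤ) (a : EE n),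
    ∑' j, HH n b K a j ≤ C * ENNReal.ofReal M ^ 2 := by
  obtain ⟨C, hC⟩ := H0_bound n
  obtain ⟨C', hC'⟩ := Hs_bound n
  refine ⟨C + C', fun b M hb K a => ?_⟩
  have h0 : HH n b K a 0 ≤ C * ENNReal.ofReal M ^ 2 := by
    rw [HH]; exact hC b M hb K a
  have h1 : ∑' j, HH n b K a (j + 1) ≤ C' * ENNReal.ofReal M ^ 2 := by
    simp only [HH]; exact hC' b M hb K a
  refine (tsum_split_le h0 h1).trans (le_of_eq ?_)
  rw [ENNReal.coe_add, add_mul]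

lemma tt_est (n : ℕ) (φ : SchwartzMap (EE n) ℝ) (hφ : ∫ x, φ x = 1) : ∃ C : ℝ≥0,
    ∀ (b : EE n → ℝ) (M : ℝ), BM n b M → ∀ (K : ℤ) (a : EE n) (i j : ℕ),
    ∫⁻ x, kap n (pp n) ((2:ℝ) ^ K) (x - a) * ‖tt n φ b K (K - i) j x‖ₑ ^ 2 ≤
      C * ENNReal.ofReal ((1 / 2) ^ dd i j) * HH n b K a j := by
  obtain ⟨C, hC⟩ := est1 n (pp n) φ hφ
  obtain ⟨C', hC'⟩ := est2w n (pp n) φ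
  refine ⟨C + 2 * C', fun b M hb K a i j => ?_⟩
  have hz : ∀ (z : ℤ) (d : ℕ), z = -d → (2:ℝ) ^ z = (1 / 2) ^ d := by
    rintro z d rfl
    rw [zpow_neg, zpow_natCast]; simp
  have hle1 : (C : ℝ≥0∞) ≤ ((C + 2 * C' : ℝ≥0) : ℝ≥0∞) := by
    exact_mod_cast le_self_add
  have hle2 : (2 * C' : ℝ≥0∞) ≤ ((C + 2 * C' : ℝ≥0) : ℝ≥0∞) := by
    push_cast; exact le_add_self
  cases j with
  | zero =>
    have h := hC (K - i) K K (by omega) le_rfl a (dyadicAvg n K b) (fun x y hy => X_congr b hy)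
      (dyadicAvg n K b a) (fun x => ker_X_int φ hb _ _ x)
    rw [hz (K - i - K) (dd i 0) (by simp only [dd]; omega)] at h
    exact h.trans (mul_le_mul' (mul_le_mul' hle1 le_rfl) le_rfl)
  | succ j =>
    by_cases hk : K - i ≤ K - 1 - j
    · have h := hC (K - i) (K - 1 - j) K hk (by omega) a (hh n b (K - 1 - j))
        (fun x y hy => hh_congr b _ x y hy) 0 (fun x => ker_hh_int φ hb _ _ x)
      rw [hz (K - i - (K - 1 - j)) (dd i (j + 1)) (by simp only [dd]; omega)] at h
      simp only [sub_zero] at h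
      simp only [tt, hk, if_true]
      exact h.trans (mul_le_mul' (mul_le_mul' hle1 le_rfl) le_rfl)
    · have h := hC' (K - i) (K - 1 - j + 1) K (by omega) (by omega) a (hh n b (K - 1 - j))
        (hh_meas n b _).aestronglyMeasurable (hh_avg hb _) (fun x => fin_hh hb _ _ x)
      have e : (2:ℝ) ^ (K - 1 - j + 1 - (K - i)) = 2 * (1 / 2) ^ dd i (j + 1) := by
        rw [← hz (K - 1 - j - (K - i)) (dd i (j + 1)) (by simp only [dd]; omega)]
        rw [(by ring : K - 1 - (j:ℤ) + 1 - (K - i) = 1 + (K - 1 - j - (K - i))),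
          zpow_add₀ two_ne_zero, zpow_one]
      rw [e, ENNReal.ofReal_mul (by norm_num)] at h
      simp only [tt, hk, if_false]
      refine h.trans ?_
      calc _ = (2 * C') * ENNReal.ofReal ((1 / 2) ^ dd i (j + 1)) * HH n b K a (j + 1) := by
            rw [HH]; simp only [ENNReal.ofReal_ofNat]; ring
        _ ≤ _ := by gcongr

lemma geom_Z (r : ℝ≥0∞) (hr : r < 1) : ∃ Z : ℝ≥0, (∀ i, ∑' j, r ^ dd i j ≤ Z) ∧
    (∀ j, ∑' i, r ^ dd i j ≤ Z) := by
  have hf : ∑' z : ℤ, r ^ z.natAbs ≠ ∞ := by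
    have h := HasSum.of_nat_of_neg_add_one (f := fun z : ℤ => r ^ z.natAbs)
      (ENNReal.summable.hasSum) (ENNReal.summable.hasSum)
    rw [h.tsum_eq]
    have e : ∀ k : ℕ, (-((k:ℤ) + 1)).natAbs = k + 1 := by intro k; omega
    simp_rw [e, Int.natAbs_natCast, pow_succ, ENNReal.tsum_mul_right, ENNReal.tsum_geometric]
    have : (1 - r)⁻¹ ≠ ∞ := by
      rw [ENNReal.inv_ne_top]
      exact (tsub_pos_of_lt hr).ne'
    exact ENNReal.add_ne_top.2 ⟨this, ENNReal.mul_ne_top this hr.ne_top⟩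
  refine ⟨(∑' z : ℤ, r ^ z.natAbs).toNNReal, fun i => ?_, fun j => ?_⟩ <;>
    rw [ENNReal.coe_toNNReal hf]
  · exact ENNReal.tsum_comp_le_tsum_of_injective (f := fun j : ℕ => (i:ℤ) - j)
      (fun a b h => by simpa using h) (fun z : ℤ => r ^ z.natAbs)
  · exact ENNReal.tsum_comp_le_tsum_of_injective (f := fun i : ℕ => (i:ℤ) - j)
      (fun a b h => by simpa using h) (fun z : ℤ => r ^ z.natAbs)

lemma schur_pt : ∃ Z : ℝ≥0, ∀ (i : ℕ) (t : ℕ → ℝ≥0∞),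
    (∑' j, t j) ^ 2 ≤ Z * ∑' j, ENNReal.ofReal ((4 / 3) ^ dd i j) * t j ^ 2 := by
  obtain ⟨Z, hZ, -⟩ := geom_Z (ENNReal.ofReal (3 / 4)) (by rw [ENNReal.ofReal_lt_one]; norm_num)
  refine ⟨Z, fun i t => ?_⟩
  have h := lint_CS (Measure.count : Measure ℕ) (f := fun j => ENNReal.ofReal (3 / 4) ^ dd i j)
    (u := fun j => ENNReal.ofReal ((4 / 3) ^ dd i j) * t j)
    (Measurable.of_discrete).aemeasurable (Measurable.of_discrete).aemeasurable
  simp only [lintegral_count] at h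
  have e : ∀ j, ENNReal.ofReal (3 / 4) ^ dd i j * ENNReal.ofReal ((4 / 3) ^ dd i j) = 1 := by
    intro j
    rw [← ENNReal.ofReal_pow (by norm_num), ← ENNReal.ofReal_mul (by positivity), ← mul_pow]
    norm_num
  have e1 : ∀ j, ENNReal.ofReal (3 / 4) ^ dd i j * (ENNReal.ofReal ((4 / 3) ^ dd i j) * t j) = t j := by
    intro j; rw [← mul_assoc, e, one_mul]
  have e2 : ∀ j, ENNReal.ofReal (3 / 4) ^ dd i j * (ENNReal.ofReal ((4 / 3) ^ dd i j) * t j) ^ 2 =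
      ENNReal.ofReal ((4 / 3) ^ dd i j) * t j ^ 2 := by
    intro j
    calc _ = (ENNReal.ofReal (3 / 4) ^ dd i j * ENNReal.ofReal ((4 / 3) ^ dd i j)) *
          (ENNReal.ofReal ((4 / 3) ^ dd i j) * t j ^ 2) := by ring
      _ = _ := by rw [e, one_mul]
  simp_rw [e1, e2] at h
  exact h.trans (mul_le_mul' (hZ i) le_rfl)

lemma main_w (n : ℕ) (φ : SchwartzMap (EE n) ℝ) (hφ : ∫ x, φ x = 1) : ∃ C : ℝ≥0,
    ∀ (b : EE n → ℝ) (M : ℝ), BM n b M → ∀ (K : ℤ) (a : EE n),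
    ∑' i : ℕ, ∫⁻ x, kap n (pp n) ((2:ℝ) ^ K) (x - a) *
      ‖PP n φ (K - i) b x - dyadicAvg n (K - i) b x‖ₑ ^ 2 ≤ C * ENNReal.ofReal M ^ 2 := by
  obtain ⟨C, hC⟩ := tt_est n φ hφ
  obtain ⟨Z, hZ⟩ := schur_pt
  obtain ⟨Z', -, hZ'⟩ := geom_Z (ENNReal.ofReal (2 / 3)) (by rw [ENNReal.ofReal_lt_one]; norm_num)
  obtain ⟨C', hC'⟩ := HH_bound n
  refine ⟨Z * C * Z' * C', fun b M hb K a => ?_⟩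
  have hw : Measurable (fun x : EE n => kap n (pp n) ((2:ℝ) ^ K) (x - a)) :=
    (kap_meas _ _ _).comp (measurable_id.sub_const a)
  have hm := tt_meas n φ b K
  have step : ∀ i : ℕ, ∫⁻ x, kap n (pp n) ((2:ℝ) ^ K) (x - a) *
      ‖PP n φ (K - i) b x - dyadicAvg n (K - i) b x‖ₑ ^ 2 ≤
      Z * C * ∑' j, ENNReal.ofReal (2 / 3) ^ dd i j * HH n b K a j := by
    intro i
    calc _ ≤ ∫⁻ x, Z * ∑' j, ENNReal.ofReal ((4 / 3) ^ dd i j) *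
            (kap n (pp n) ((2:ℝ) ^ K) (x - a) * ‖tt n φ b K (K - i) j x‖ₑ ^ 2) := by
          refine lintegral_mono fun x => ?_
          calc _ ≤ kap n (pp n) ((2:ℝ) ^ K) (x - a) * (Z * ∑' j, ENNReal.ofReal ((4 / 3) ^ dd i j) *
                ‖tt n φ b K (K - i) j x‖ₑ ^ 2) := by
                refine mul_le_mul' le_rfl (le_trans ?_ (hZ i _))
                gcongr
                exact tt_bound φ hb (by omega) x
            _ = _ := by
                rw [mul_left_comm, ← ENNReal.tsum_mul_left]
                congr 2; ext j; ring
      _ = Z * ∑' j, ENNReal.ofReal ((4 / 3) ^ dd i j) *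
            ∫⁻ x, (kap n (pp n) ((2:ℝ) ^ K) (x - a) * ‖tt n φ b K (K - i) j x‖ₑ ^ 2) := by
          rw [lintegral_const_mul' _ _ (by simp), lintegral_tsum]
          · congr 2; ext j
            rw [lintegral_const_mul' _ _ (by simp)]
          · intro j
            have := hm (K - i) j
            fun_prop
      _ ≤ Z * ∑' j, ENNReal.ofReal ((4 / 3) ^ dd i j) *
            (C * ENNReal.ofReal ((1 / 2) ^ dd i j) * HH n b K a j) := by
          gcongr with j; exact hC b M hb K a i j
      _ = _ := by
          rw [mul_assoc, ← ENNReal.tsum_mul_left (a := (C : ℝ≥0∞))]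
          congr 2; ext j
          have : ENNReal.ofReal (2 / 3) ^ dd i j =
              ENNReal.ofReal ((4 / 3) ^ dd i j) * ENNReal.ofReal ((1 / 2) ^ dd i j) := by
            rw [← ENNReal.ofReal_pow (by norm_num), ← ENNReal.ofReal_mul (by positivity), ← mul_pow]
            norm_num
          rw [this]; ring
  calc _ ≤ ∑' i : ℕ, Z * C * ∑' j, ENNReal.ofReal (2 / 3) ^ dd i j * HH n b K a j :=
        ENNReal.tsum_le_tsum step
    _ = Z * C * ∑' j, (∑' i, ENNReal.ofReal (2 / 3) ^ dd i j) * HH n b K a j := by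
        rw [ENNReal.tsum_mul_left, ENNReal.tsum_comm]
        simp_rw [ENNReal.tsum_mul_right]
    _ ≤ Z * C * ∑' j, Z' * HH n b K a j := by
        gcongr with j; exact hZ' j
    _ = Z * C * Z' * ∑' j, HH n b K a j := by rw [ENNReal.tsum_mul_left]; ring
    _ ≤ Z * C * Z' * (C' * ENNReal.ofReal M ^ 2) := by gcongr; exact hC' b M hb K a
    _ = _ := by push_cast; ring

lemma main_cube (n : ℕ) (φ : SchwartzMap (EE n) ℝ) (hφ : ∫ x, φ x = 1) : ∃ C : ℝ≥0,
    ∀ (b : EE n → ℝ) (M : ℝ), BM n b M → ∀ (a : EE n) (ℓ : ℝ), 0 < ℓ →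
      ∑' k : {k : ℤ // (2:ℝ) ^ k ≤ ℓ}, ∫⁻ x in cube n a ℓ,
        ‖PP n φ k.1 b x - dyadicAvg n k.1 b x‖ₑ ^ 2 ≤
      C * ENNReal.ofReal M ^ 2 * volume (cube n a ℓ) := by
  obtain ⟨C, hC⟩ := main_w n φ hφ
  refine ⟨Real.toNNReal ((1 + 2 * n) ^ pp n) * C, fun b M hb a ℓ hℓ => ?_⟩
  obtain ⟨K, hK1, hK2⟩ := exists_mem_Ico_zpow (y := (2:ℝ)) hℓ (by norm_num)
  have hK : (0:ℝ) < 2 ^ K := by positivity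
  have hcube : ∀ x ∈ cube n a ℓ, 1 ≤ ENNReal.ofReal ((1 + 2 * n) ^ pp n) * volume (cube n a ℓ) *
      kap n (pp n) ((2:ℝ) ^ K) (x - a) := by
    intro x hx
    have hd : ‖x - a‖ ≤ n * ℓ := by
      refine norm_le_coord _ hℓ.le fun i => ?_
      have := hx i
      rw [PiLp.sub_apply, abs_le]
      constructor <;> linarith
    have hd2 : ‖x - a‖ / 2 ^ K ≤ 2 * n := by
      rw [div_le_iff₀ hK]
      rw [zpow_add_one₀ two_ne_zero] at hK2
      have : (n:ℝ) * ℓ ≤ n * (2 ^ K * 2) := by gcongr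
      linarith
    rw [cube_vol n a hℓ, kap, ← ENNReal.ofReal_mul (by positivity), ← ENNReal.ofReal_mul (by positivity),
      ENNReal.one_le_ofReal]
    have h1 : (1:ℝ) ≤ ℓ ^ n * ((2 ^ K) ^ n)⁻¹ := by
      rw [← div_eq_mul_inv, one_le_div (by positivity)]
      gcongr
    have h2 : (1:ℝ) ≤ (1 + 2 * n) ^ pp n * ((1 + ‖x - a‖ / 2 ^ K) ^ pp n)⁻¹ := by
      rw [← div_eq_mul_inv, one_le_div (by positivity)]
      gcongr
    calc (1:ℝ) = 1 * 1 := by norm_num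
      _ ≤ (ℓ ^ n * ((2 ^ K) ^ n)⁻¹) * ((1 + 2 * n) ^ pp n * ((1 + ‖x - a‖ / 2 ^ K) ^ pp n)⁻¹) := by
          gcongr
      _ = _ := by ring
  set V : ℝ≥0∞ := ENNReal.ofReal ((1 + 2 * n) ^ pp n) * volume (cube n a ℓ) with hV
  have hVt : V ≠ ∞ := by
    rw [hV, cube_vol n a hℓ]; exact ENNReal.mul_ne_top (by simp) (by simp)
  have step : ∀ k : ℤ, ∫⁻ x in cube n a ℓ, ‖PP n φ k b x - dyadicAvg n k b x‖ₑ ^ 2 ≤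
      V * ∫⁻ x, kap n (pp n) ((2:ℝ) ^ K) (x - a) * ‖PP n φ k b x - dyadicAvg n k b x‖ₑ ^ 2 := by
    intro k
    rw [← lintegral_const_mul' _ _ hVt]
    refine le_trans ?_ (setLIntegral_le_lintegral (cube n a ℓ) _)
    refine setLIntegral_mono' (cube_meas n a ℓ) fun x hx => ?_
    rw [← mul_assoc]
    exact le_mul_of_one_le_left' (hcube x hx)
  have hkK : ∀ k : {k : ℤ // (2:ℝ) ^ k ≤ ℓ}, k.1 ≤ K := by
    rintro ⟨k, hk⟩
    have := hk.trans_lt hK2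
    rw [zpow_lt_zpow_iff_right₀ (by norm_num)] at this
    simp only; omega
  calc _ ≤ ∑' k : {k : ℤ // (2:ℝ) ^ k ≤ ℓ}, V * ∫⁻ x, kap n (pp n) ((2:ℝ) ^ K) (x - a) *
          ‖PP n φ k.1 b x - dyadicAvg n k.1 b x‖ₑ ^ 2 := ENNReal.tsum_le_tsum fun k => step k.1
    _ = V * ∑' k : {k : ℤ // (2:ℝ) ^ k ≤ ℓ}, ∫⁻ x, kap n (pp n) ((2:ℝ) ^ K) (x - a) *
          ‖PP n φ k.1 b x - dyadicAvg n k.1 b x‖ₑ ^ 2 := ENNReal.tsum_mul_left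
    _ ≤ V * ∑' i : ℕ, ∫⁻ x, kap n (pp n) ((2:ℝ) ^ K) (x - a) *
          ‖PP n φ (K - i) b x - dyadicAvg n (K - i) b x‖ₑ ^ 2 := by
        refine mul_le_mul' le_rfl ?_
        refine le_trans (le_of_eq ?_) (ENNReal.tsum_comp_le_tsum_of_injective
          (f := fun k : {k : ℤ // (2:ℝ) ^ k ≤ ℓ} => (K - k.1).toNat) ?_
          (fun i : ℕ => ∫⁻ x, kap n (pp n) ((2:ℝ) ^ K) (x - a) *
            ‖PP n φ (K - i) b x - dyadicAvg n (K - i) b x‖ₑ ^ 2))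
        · refine tsum_congr fun k => ?_
          have e : K - (((K - k.1).toNat : ℕ) : ℤ) = k.1 := by
            have := hkK k; omega
          simp only [e]
        · intro k k' h
          have h1 := hkK k
          have h2 := hkK k'
          simp only at h
          exact Subtype.ext (by omega)
    _ ≤ V * (C * ENNReal.ofReal M ^ 2) := by gcongr; exact hC b M hb K a
    _ = _ := by
        rw [hV]; push_cast; rw [← ENNReal.ofReal]; ring

lemma final_aux (n : ℕ)
    (φ : SchwartzMap (EuclideanSpace ℝ (Fin n)) ℝ)
    (hφ : ∫ x, φ x = 1) :
    ∃ C : ℝ, 0 < C ∧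
      ∀ b : EuclideanSpace ℝ (Fin n) → ℝ, LocallyIntegrable b volume →
      ∀ M : ℝ, 0 ≤ M →
      (∀ (a : EuclideanSpace ℝ (Fin n)) (ℓ : ℝ), 0 < ℓ →
        ⨍ y in cube n a ℓ, |b y - ⨍ z in cube n a ℓ, b z| ≤ M) →
      ∀ (a : EuclideanSpace ℝ (Fin n)) (ℓ : ℝ), 0 < ℓ →
      ∑' k : {k : ℤ // (2:ℝ) ^ k ≤ ℓ},
          ∫⁻ x in cube n a ℓ,
            ENNReal.ofReal ((schwartzConv n φ k.1 b x - dyadicAvg n k.1 b x) ^ 2)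
        ≤ ENNReal.ofReal (C * M ^ 2) * volume (cube n a ℓ) := by
  obtain ⟨C, hC⟩ := main_cube n φ hφ
  refine ⟨C + 1, by positivity, fun b hb M hM hosc a ℓ hℓ => ?_⟩
  have h := hC b M ⟨hb, hM, hosc⟩ a ℓ hℓ
  have e : ∀ (k : ℤ) (x : EE n), ENNReal.ofReal ((schwartzConv n φ k b x - dyadicAvg n k b x) ^ 2) =
      ‖PP n φ k b x - dyadicAvg n k b x‖ₑ ^ 2 := by
    intro k x
    rw [schwartzConv_eq, PP, Real.enorm_eq_ofReal_abs, ← ENNReal.ofReal_pow (abs_nonneg _), sq_abs]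
  simp_rw [e]
  refine h.trans (mul_le_mul' ?_ le_rfl)
  rw [ENNReal.ofReal_mul (by positivity), ENNReal.ofReal_pow hM]
  refine mul_le_mul' ?_ le_rfl
  rw [← ENNReal.ofReal_coe_nnreal]
  exact ENNReal.ofReal_le_ofReal (by linarith)

theorem stmt9 (n : ℕ) (hn : 1 ≤ n)
    (φ : SchwartzMap (EuclideanSpace ℝ (Fin n)) ℝ)
    -- φ̂(0) = 1, i.e. ∫ φ = 1
    (hφ : ∫ x, φ x = 1) :
    ∃ C : ℝ, 0 < C ∧
      ∀ b : EuclideanSpace ℝ (Fin n) → ℝ, LocallyIntegrable b volume →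
      ∀ M : ℝ, 0 ≤ M →
      -- b ∈ BMO with ‖b‖_{BMO} ≤ M
      (∀ (a : EuclideanSpace ℝ (Fin n)) (ℓ : ℝ), 0 < ℓ →
        ⨍ y in cube n a ℓ, |b y - ⨍ z in cube n a ℓ, b z| ≤ M) →
      ∀ (a : EuclideanSpace ℝ (Fin n)) (ℓ : ℝ), 0 < ℓ →
      ∑' k : {k : ℤ // (2:ℝ) ^ k ≤ ℓ},
          ∫⁻ x in cube n a ℓ,
            ENNReal.ofReal ((schwartzConv n φ k.1 b x - dyadicAvg n k.1 b x) ^ 2)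
        ≤ ENNReal.ofReal (C * M ^ 2) * volume (cube n a ℓ) := by
  exact final_aux n φ hφ
end
end

section
/- There exists a constant C > 0, depending only on n, such that for every b ∈ BMO(ℝ^n), every decreasing sequence {t_k}_{k≥0} of dyadic stopping times, and every cube Q ⊂ ℝ^n with side length ℓ(Q), Σ_{k≥0} ∫_Q χ_{{x : 2^{t_k(x)} ≤ ℓ(Q)}}(x) |E_{t_{k+1}} b(x) − E_{t_k} b(x)|² dx ≤ C ‖b‖_{BMO}² |Q|; the constant C does not depend on the stopping times. -/
open MeasureTheory ENNReal NNReal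
noncomputable section

lemma mem_D {n : ℕ} {j : ℤ} {x y : EuclideanSpace ℝ (Fin n)} :
    y ∈ dyadicCubeOf n j x ↔ ∀ i, ⌈y i / (2:ℝ) ^ j⌉ = ⌈x i / (2:ℝ) ^ j⌉ := by
  have h2 : (0:ℝ) < (2:ℝ) ^ j := by positivity
  simp only [dyadicCubeOf, Set.mem_ofPred_eq]
  refine forall_congr' fun i => ?_
  rw [Int.ceil_eq_iff, lt_div_iff₀ h2, div_le_iff₀ h2]

lemma self_mem_D {n : ℕ} (j : ℤ) (x : EuclideanSpace ℝ (Fin n)) : x ∈ dyadicCubeOf n j x :=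
  mem_D.2 fun _ => rfl

lemma D_eq {n : ℕ} {j : ℤ} {x y : EuclideanSpace ℝ (Fin n)} (h : y ∈ dyadicCubeOf n j x) :
    dyadicCubeOf n j y = dyadicCubeOf n j x := by
  rw [mem_D] at h
  ext z
  simp only [mem_D, h]

lemma mem_D_symm {n : ℕ} {j : ℤ} {x y : EuclideanSpace ℝ (Fin n)} (h : y ∈ dyadicCubeOf n j x) :
    x ∈ dyadicCubeOf n j y := by
  rw [D_eq h]; exact self_mem_D _ _

lemma D_mono {n : ℕ} {i j : ℤ} (hij : i ≤ j) (x : EuclideanSpace ℝ (Fin n)) :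
    dyadicCubeOf n i x ⊆ dyadicCubeOf n j x := by
  obtain ⟨k, rfl⟩ := Int.le.dest hij
  intro y hy
  rw [mem_D] at hy ⊢
  intro l
  have key : ∀ u : ℝ, ⌈u / (2:ℝ) ^ (i + (k:ℤ))⌉ = ⌈((⌈u / (2:ℝ) ^ i⌉ : ℤ) : ℝ) / (2:ℝ) ^ k⌉ := by
    intro u
    have h2 : (0:ℝ) < (2:ℝ) ^ k := by positivity
    have e : u / (2:ℝ) ^ (i + (k:ℤ)) = (u / (2:ℝ) ^ i) / (2:ℝ) ^ k := by
      rw [zpow_add₀ (by norm_num), zpow_natCast, div_div]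
    rw [e]
    set w := u / (2:ℝ) ^ i
    apply le_antisymm
    · apply Int.ceil_le_ceil
      exact div_le_div_of_nonneg_right (Int.le_ceil w) h2.le
    · rw [Int.ceil_le, div_le_iff₀ h2]
      have : w ≤ ((⌈w / 2 ^ k⌉ * 2 ^ k : ℤ) : ℝ) := by
        push_cast
        rw [← div_le_iff₀ h2]; exact Int.le_ceil _
      have := Int.ceil_le.2 this
      exact_mod_cast this
  rw [key, key, hy l]

lemma D_eq_cube {n : ℕ} (j : ℤ) (x : EuclideanSpace ℝ (Fin n)) :
    dyadicCubeOf n j x =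
      cube n (WithLp.toLp 2 fun i => ((⌈x i / (2:ℝ) ^ j⌉ : ℝ) - 1) * (2:ℝ) ^ j) ((2:ℝ) ^ j) := by
  ext y
  simp only [dyadicCubeOf, cube, Set.mem_ofPred_eq]
  refine forall_congr' fun i => ?_
  have : ((⌈x i / (2:ℝ) ^ j⌉ : ℝ) - 1) * (2:ℝ) ^ j + (2:ℝ) ^ j
    = (⌈x i / (2:ℝ) ^ j⌉ : ℝ) * (2:ℝ) ^ j := by ring
  rw [this]

lemma cube_eq_preimage {n : ℕ} (a : EuclideanSpace ℝ (Fin n)) (ℓ : ℝ) :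
    cube n a ℓ = (WithLp.ofLp : EuclideanSpace ℝ (Fin n) → (Fin n → ℝ)) ⁻¹'
      (Set.univ.pi fun i => Set.Ioc (a i) (a i + ℓ)) := by
  ext y
  simp [cube, Set.mem_pi]

lemma measurableSet_cube {n : ℕ} (a : EuclideanSpace ℝ (Fin n)) (ℓ : ℝ) :
    MeasurableSet (cube n a ℓ) := by
  rw [cube_eq_preimage]
  exact (PiLp.volume_preserving_ofLp (Fin n)).measurable
    (MeasurableSet.univ_pi fun i => measurableSet_Ioc)

lemma volume_cube {n : ℕ} (a : EuclideanSpace ℝ (Fin n)) (ℓ : ℝ) :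
    volume (cube n a ℓ) = ENNReal.ofReal ℓ ^ n := by
  rw [cube_eq_preimage, (PiLp.volume_preserving_ofLp (Fin n)).measure_preimage
    (MeasurableSet.univ_pi fun i => measurableSet_Ioc).nullMeasurableSet]
  rw [Real.volume_pi_Ioc]
  simp

lemma volume_real_cube {n : ℕ} (a : EuclideanSpace ℝ (Fin n)) {ℓ : ℝ} (h : 0 ≤ ℓ) :
    volume.real (cube n a ℓ) = ℓ ^ n := by
  rw [Measure.real, volume_cube, ENNReal.toReal_pow, ENNReal.toReal_ofReal h]

lemma measurableSet_D {n : ℕ} (j : ℤ) (x : EuclideanSpace ℝ (Fin n)) :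
    MeasurableSet (dyadicCubeOf n j x) := by
  rw [D_eq_cube]; exact measurableSet_cube _ _

lemma volume_D {n : ℕ} (j : ℤ) (x : EuclideanSpace ℝ (Fin n)) :
    volume.real (dyadicCubeOf n j x) = ((2:ℝ) ^ j) ^ n := by
  rw [D_eq_cube, volume_real_cube _ (by positivity)]

lemma volume_D_ne_top {n : ℕ} (j : ℤ) (x : EuclideanSpace ℝ (Fin n)) :
    volume (dyadicCubeOf n j x) ≠ ⊤ := by
  rw [D_eq_cube, volume_cube]; exact ENNReal.pow_ne_top ENNReal.ofReal_ne_top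

lemma integrableOn_cube {n : ℕ} {b : EuclideanSpace ℝ (Fin n) → ℝ} (hb : LocallyIntegrable b volume)
    (a : EuclideanSpace ℝ (Fin n)) (ℓ : ℝ) : IntegrableOn b (cube n a ℓ) volume := by
  let h := (EuclideanSpace.equiv (Fin n) ℝ).toHomeomorph
  have hc : IsCompact (h ⁻¹' (Set.univ.pi fun i => Set.Icc (a i) (a i + ℓ))) :=
    h.isCompact_preimage.2 (isCompact_univ_pi fun i => isCompact_Icc)
  refine (hb.integrableOn_isCompact hc).mono_set ?_
  intro y hy
  simp only [Set.mem_preimage, Set.mem_pi, Set.mem_univ, true_imp_iff]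
  intro i
  exact ⟨(hy i).1.le, (hy i).2⟩

lemma integrableOn_D {n : ℕ} {b : EuclideanSpace ℝ (Fin n) → ℝ} (hb : LocallyIntegrable b volume)
    (j : ℤ) (x : EuclideanSpace ℝ (Fin n)) : IntegrableOn b (dyadicCubeOf n j x) volume := by
  rw [D_eq_cube]; exact integrableOn_cube hb _ _

lemma vol_mul_avg {n : ℕ} (b : EuclideanSpace ℝ (Fin n) → ℝ) (j : ℤ)
    (x : EuclideanSpace ℝ (Fin n)) :
    ∫ y in dyadicCubeOf n j x, b y = ((2:ℝ) ^ j) ^ n * dyadicAvg n j b x := by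
  rw [dyadicAvg, setAverage_eq, volume_D, smul_eq_mul, mul_inv_cancel_left₀ (by positivity)]

lemma avg_eq {n : ℕ} (b : EuclideanSpace ℝ (Fin n) → ℝ) {j : ℤ}
    {x y : EuclideanSpace ℝ (Fin n)} (h : y ∈ dyadicCubeOf n j x) :
    dyadicAvg n j b y = dyadicAvg n j b x := by
  rw [dyadicAvg, dyadicAvg, D_eq h]

lemma stopping_const {n : ℕ} (j : ℤ) : IsDyadicStopping n (fun _ => j) :=
  ⟨measurable_const, fun _ _ _ => rfl⟩

lemma measurable_coord {n : ℕ} (i : Fin n) : Measurable fun x : EuclideanSpace ℝ (Fin n) => x i := by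
  fun_prop

lemma measurable_ceil {n : ℕ} (j : ℤ) :
    Measurable fun x : EuclideanSpace ℝ (Fin n) => fun i => ⌈x i / (2:ℝ) ^ j⌉ := by
  rw [measurable_pi_iff]
  intro i
  exact Int.measurable_ceil.comp ((measurable_coord i).div_const _)

lemma measurable_avg {n : ℕ} (b : EuclideanSpace ℝ (Fin n) → ℝ) (j : ℤ) :
    Measurable (dyadicAvg n j b) := by
  have : dyadicAvg n j b = (fun m : Fin n → ℤ => ⨍ y in {y : EuclideanSpace ℝ (Fin n) |
      ∀ i, ((m i : ℝ) - 1) * (2:ℝ) ^ j < y i ∧ y i ≤ (m i : ℝ) * (2:ℝ) ^ j}, b y) ∘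
      (fun x => fun i => ⌈x i / (2:ℝ) ^ j⌉) := rfl
  rw [this]
  exact (measurable_of_countable _).comp (measurable_ceil j)

lemma measurable_glue {n : ℕ} {f : ℤ → EuclideanSpace ℝ (Fin n) → ℝ} (hf : ∀ j, Measurable (f j))
    {s : EuclideanSpace ℝ (Fin n) → ℤ} (hs : Measurable s) :
    Measurable (fun x => f (s x) x) := by
  intro B hB
  have : (fun x => f (s x) x) ⁻¹' B = ⋃ j : ℤ, (s ⁻¹' {j}) ∩ (f j ⁻¹' B) := by
    ext x; simp
  rw [this]
  exact MeasurableSet.iUnion fun j => (hs (measurableSet_singleton j)).inter (hf j hB)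

/-- The stopped average. -/
def vs {n : ℕ} (s : EuclideanSpace ℝ (Fin n) → ℤ) (b : EuclideanSpace ℝ (Fin n) → ℝ)
    (x : EuclideanSpace ℝ (Fin n)) : ℝ := dyadicAvg n (s x) b x

lemma measurable_vs {n : ℕ} (b : EuclideanSpace ℝ (Fin n) → ℝ)
    {s : EuclideanSpace ℝ (Fin n) → ℤ} (hs : Measurable s) :
    Measurable (vs s b) :=
  measurable_glue (f := fun j => dyadicAvg n j b) (fun j => measurable_avg b j) hs

/-- Local to global principle. -/
lemma l2g {n : ℕ} {s : EuclideanSpace ℝ (Fin n) → ℤ} (hs : IsDyadicStopping n s)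
    {U : Set (EuclideanSpace ℝ (Fin n))} (hUm : MeasurableSet U)
    (hU : ∀ y ∈ U, dyadicCubeOf n (s y) y ⊆ U) {F : EuclideanSpace ℝ (Fin n) → ℝ}
    (hF : IntegrableOn F U volume)
    (h : ∀ y ∈ U, ∫ x in dyadicCubeOf n (s y) y, F x ≤ 0) : ∫ x in U, F x ≤ 0 := by
  let A : ℤ × (Fin n → ℤ) → Set (EuclideanSpace ℝ (Fin n)) := fun p =>
    U ∩ ((fun x => (s x, fun i => ⌈x i / (2:ℝ) ^ p.1⌉)) ⁻¹' {p})
  have hA : ∀ p, MeasurableSet (A p) := fun p =>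
    hUm.inter ((hs.1.prodMk (measurable_ceil p.1)) (measurableSet_singleton p))
  have hAU : (⋃ p, A p) = U := by
    ext x
    simp only [Set.mem_iUnion]
    constructor
    · rintro ⟨p, hp⟩; exact hp.1
    · intro hx
      exact ⟨(s x, fun i => ⌈x i / (2:ℝ) ^ (s x)⌉), hx, rfl⟩
  have hd : Pairwise (Function.onFun Disjoint A) := by
    intro p q hpq
    refine Set.disjoint_left.2 fun x hp hq => hpq ?_
    have hp := hp.2
    have hq := hq.2
    simp only [Set.mem_preimage, Set.mem_singleton_iff] at hp hq
    have e1 : p.1 = q.1 := by rw [← hp, ← hq]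
    rw [e1] at hp
    exact hp.symm.trans hq
  rw [← hAU, integral_iUnion hA hd (by rwa [hAU])]
  refine tsum_nonpos fun p => ?_
  rcases (A p).eq_empty_or_nonempty with he | ⟨y, hy⟩
  · rw [he]; simp
  · have : A p = dyadicCubeOf n (s y) y := by
      have hy2 := hy.2
      simp only [Set.mem_preimage, Set.mem_singleton_iff] at hy2
      have e1 : s y = p.1 := by rw [← hy2]
      ext x
      constructor
      · rintro ⟨hx, hx2⟩
        simp only [Set.mem_preimage, Set.mem_singleton_iff] at hx2
        rw [e1, mem_D]
        intro i
        have := congrArg Prod.snd (hx2.trans hy2.symm)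
        exact congrFun this i
      · intro hx
        refine ⟨hU y hy.1 hx, ?_⟩
        have e2 := hs.2 y x hx
        simp only [Set.mem_preimage, Set.mem_singleton_iff]
        refine Eq.trans ?_ hy2
        rw [e2]
        rw [e1, mem_D] at hx
        congr 1
        funext i
        exact hx i
    rw [this]
    exact h y hy.1

lemma l2g0 {n : ℕ} {s : EuclideanSpace ℝ (Fin n) → ℤ} (hs : IsDyadicStopping n s)
    {U : Set (EuclideanSpace ℝ (Fin n))} (hUm : MeasurableSet U)
    (hU : ∀ y ∈ U, dyadicCubeOf n (s y) y ⊆ U) {F : EuclideanSpace ℝ (Fin n) → ℝ}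
    (hF : IntegrableOn F U volume)
    (h : ∀ y ∈ U, ∫ x in dyadicCubeOf n (s y) y, F x = 0) : ∫ x in U, F x = 0 := by
  apply le_antisymm
  · exact l2g hs hUm hU hF fun y hy => (h y hy).le
  · have := l2g hs hUm hU (F := fun x => - F x) hF.neg fun y hy => by
      rw [integral_neg, h y hy, neg_zero]
    rw [integral_neg] at this
    linarith

/-- Measurable and bounded on `U`. -/
def Nice {n : ℕ} (U : Set (EuclideanSpace ℝ (Fin n))) (g : EuclideanSpace ℝ (Fin n) → ℝ) : Prop :=
  Measurable g ∧ ∃ B : ℝ, ∀ x ∈ U, |g x| ≤ B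

lemma Nice.sub {n : ℕ} {U : Set (EuclideanSpace ℝ (Fin n))} {g h : EuclideanSpace ℝ (Fin n) → ℝ}
    (hg : Nice U g) (hh : Nice U h) : Nice U (fun x => g x - h x) := by
  obtain ⟨B, hB⟩ := hg.2
  obtain ⟨B', hB'⟩ := hh.2
  exact ⟨hg.1.sub hh.1, B + B', fun x hx => (abs_sub _ _).trans (add_le_add (hB x hx) (hB' x hx))⟩

lemma Nice.mul {n : ℕ} {U : Set (EuclideanSpace ℝ (Fin n))} {g h : EuclideanSpace ℝ (Fin n) → ℝ}
    (hg : Nice U g) (hh : Nice U h) : Nice U (fun x => g x * h x) := by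
  obtain ⟨B, hB⟩ := hg.2
  obtain ⟨B', hB'⟩ := hh.2
  refine ⟨hg.1.mul hh.1, B * B', fun x hx => ?_⟩
  rw [abs_mul]
  exact mul_le_mul (hB x hx) (hB' x hx) (abs_nonneg _) ((abs_nonneg _).trans (hB x hx))

lemma Nice.sq {n : ℕ} {U : Set (EuclideanSpace ℝ (Fin n))} {g : EuclideanSpace ℝ (Fin n) → ℝ}
    (hg : Nice U g) : Nice U (fun x => g x ^ 2) := by
  simpa only [pow_two] using hg.mul hg

lemma Nice.abs {n : ℕ} {U : Set (EuclideanSpace ℝ (Fin n))} {g : EuclideanSpace ℝ (Fin n) → ℝ}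
    (hg : Nice U g) : Nice U (fun x => |g x|) := by
  obtain ⟨B, hB⟩ := hg.2
  exact ⟨hg.1.abs, B, fun x hx => by rw [abs_abs]; exact hB x hx⟩

lemma nice_const {n : ℕ} {U : Set (EuclideanSpace ℝ (Fin n))} (a : ℝ) : Nice U (fun _ => a) :=
  ⟨measurable_const, |a|, fun _ _ => le_rfl⟩

lemma Nice.mono {n : ℕ} {U V : Set (EuclideanSpace ℝ (Fin n))} {g : EuclideanSpace ℝ (Fin n) → ℝ}
    (hg : Nice U g) (h : V ⊆ U) : Nice V g :=
  ⟨hg.1, hg.2.imp fun _ hB x hx => hB x (h hx)⟩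

lemma Nice.integrable {n : ℕ} {U : Set (EuclideanSpace ℝ (Fin n))}
    {g : EuclideanSpace ℝ (Fin n) → ℝ} (hg : Nice U g) (hUm : MeasurableSet U)
    (hUf : volume U ≠ ⊤) : IntegrableOn g U volume := by
  obtain ⟨B, hB⟩ := hg.2
  exact Measure.integrableOn_of_bounded hUf hg.1.aestronglyMeasurable
    ((ae_restrict_iff' hUm).2 (Filter.Eventually.of_forall fun x hx => hB x hx))

lemma Nice.integrable_mul {n : ℕ} {U : Set (EuclideanSpace ℝ (Fin n))}
    {g b : EuclideanSpace ℝ (Fin n) → ℝ} (hg : Nice U g) (hUm : MeasurableSet U)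
    (hb : IntegrableOn b U volume) : IntegrableOn (fun x => g x * b x) U volume := by
  obtain ⟨B, hB⟩ := hg.2
  exact Integrable.bdd_mul (c := B) hb hg.1.aestronglyMeasurable
    ((ae_restrict_iff' hUm).2 (Filter.Eventually.of_forall fun x hx => hB x hx))

lemma vs_eq {n : ℕ} {s : EuclideanSpace ℝ (Fin n) → ℤ} (hs : IsDyadicStopping n s)
    (b : EuclideanSpace ℝ (Fin n) → ℝ) {x y : EuclideanSpace ℝ (Fin n)}
    (hx : x ∈ dyadicCubeOf n (s y) y) : vs s b x = vs s b y := by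
  unfold vs
  rw [hs.2 y x hx, avg_eq b hx]

lemma nice_vs {n : ℕ} {s : EuclideanSpace ℝ (Fin n) → ℤ} (hs : Measurable s)
    {b : EuclideanSpace ℝ (Fin n) → ℝ} {c : ℤ} (hc : ∀ x, c ≤ s x)
    {U : Set (EuclideanSpace ℝ (Fin n))} (hU : ∀ y ∈ U, dyadicCubeOf n (s y) y ⊆ U)
    (hb : IntegrableOn b U volume) : Nice U (vs s b) := by
  refine ⟨measurable_vs b hs, (((2:ℝ) ^ c) ^ n)⁻¹ * ∫ x in U, |b x|, fun x hx => ?_⟩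
  unfold vs dyadicAvg
  rw [setAverage_eq, volume_D, smul_eq_mul, abs_mul, abs_of_nonneg (by positivity)]
  refine mul_le_mul ?_ ?_ (abs_nonneg _) (by positivity)
  · gcongr
    · norm_num
    · exact hc x
  · refine abs_integral_le_integral_abs.trans ?_
    exact setIntegral_mono_set hb.abs (Filter.Eventually.of_forall fun x => abs_nonneg _)
      (hU x hx).eventuallyLE

lemma intc {n : ℕ} (a : ℝ) (j : ℤ) (x : EuclideanSpace ℝ (Fin n)) :
    Integrable (fun _ : EuclideanSpace ℝ (Fin n) => a) (volume.restrict (dyadicCubeOf n j x)) :=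
  integrableOn_const (volume_D_ne_top _ _)

lemma int_sub_const {n : ℕ} {g : EuclideanSpace ℝ (Fin n) → ℝ} (a : ℝ) {j : ℤ}
    {x : EuclideanSpace ℝ (Fin n)} (hg : IntegrableOn g (dyadicCubeOf n j x) volume) :
    ∫ y in dyadicCubeOf n j x, (g y - a) =
      (∫ y in dyadicCubeOf n j x, g y) - ((2:ℝ) ^ j) ^ n * a := by
  rw [integral_sub hg (intc _ _ _), setIntegral_const, volume_D, smul_eq_mul]

lemma int_mul_vs {n : ℕ} {s : EuclideanSpace ℝ (Fin n) → ℤ} (hs : IsDyadicStopping n s)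
    {b : EuclideanSpace ℝ (Fin n) → ℝ} {c : ℤ} (hc : ∀ x, c ≤ s x)
    {U : Set (EuclideanSpace ℝ (Fin n))} (hUm : MeasurableSet U) (hUf : volume U ≠ ⊤)
    (hU : ∀ y ∈ U, dyadicCubeOf n (s y) y ⊆ U)
    (hb : IntegrableOn b U volume) {h : EuclideanSpace ℝ (Fin n) → ℝ} (hh : Nice U h)
    (hconst : ∀ y, ∀ x ∈ dyadicCubeOf n (s y) y, h x = h y) :
    ∫ x in U, h x * vs s b x = ∫ x in U, h x * b x := by
  have hv := nice_vs hs.1 hc hU hb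
  have i1 := (hh.mul hv).integrable hUm hUf
  have i2 := hh.integrable_mul hUm hb
  rw [← sub_eq_zero, ← integral_sub i1 i2]
  refine l2g0 hs hUm hU (i1.sub i2) fun y hy => ?_
  have : ∫ x in dyadicCubeOf n (s y) y, (h x * vs s b x - h x * b x) =
      ∫ x in dyadicCubeOf n (s y) y, (h y * vs s b y - h y * b x) := by
    refine setIntegral_congr_fun (measurableSet_D _ _) fun x hx => ?_
    simp only [hconst y x hx, vs_eq hs b hx]
  rw [this, integral_sub (intc _ _ _)
    ((hb.mono_set (hU y hy)).const_mul _), setIntegral_const, volume_D,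
    integral_const_mul, vol_mul_avg b]
  simp only [vs, smul_eq_mul]
  ring

lemma pyth {n : ℕ} {s s' : EuclideanSpace ℝ (Fin n) → ℤ} (hs : IsDyadicStopping n s)
    (hs' : IsDyadicStopping n s') (hle : ∀ x, s x ≤ s' x)
    {b : EuclideanSpace ℝ (Fin n) → ℝ} {c : ℤ} (hc : ∀ x, c ≤ s x)
    {U : Set (EuclideanSpace ℝ (Fin n))} (hUm : MeasurableSet U) (hUf : volume U ≠ ⊤)
    (hU : ∀ y ∈ U, dyadicCubeOf n (s' y) y ⊆ U)
    (hb : IntegrableOn b U volume) :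
    ∫ x in U, (vs s b x - vs s' b x) ^ 2 =
      (∫ x in U, vs s b x ^ 2) - ∫ x in U, vs s' b x ^ 2 := by
  have hU1 : ∀ y ∈ U, dyadicCubeOf n (s y) y ⊆ U := fun y hy =>
    (D_mono (hle y) y).trans (hU y hy)
  have hc' : ∀ x, c ≤ s' x := fun x => (hc x).trans (hle x)
  have n1 := nice_vs hs.1 hc hU1 hb
  have n2 := nice_vs hs'.1 hc' hU hb
  have e1 := int_mul_vs hs hc hUm hUf hU1 hb n2
    fun y x hx => vs_eq hs' b (D_mono (hle y) y hx)
  have e2 := int_mul_vs hs' hc' hUm hUf hU hb n2 fun y x hx => vs_eq hs' b hx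
  have e3 : ∫ x in U, (vs s b x - vs s' b x) ^ 2 =
      ∫ x in U, (vs s b x ^ 2 - (2 * (vs s' b x * vs s b x) - vs s' b x * vs s' b x)) := by
    congr 1; funext x; ring
  have j1 := (n2.mul n1).integrable hUm hUf
  have j2 := (n2.mul n2).integrable hUm hUf
  have j3 : IntegrableOn (fun x => 2 * (vs s' b x * vs s b x) - vs s' b x * vs s' b x) U volume :=
    (j1.const_mul 2).sub j2
  rw [e3, integral_sub (n1.sq.integrable hUm hUf) j3,
    integral_sub (j1.const_mul 2) j2, integral_const_mul, e1, ← e2]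
  simp only [pow_two]
  ring

/-- The BMO condition. -/
def BMOle {n : ℕ} (b : EuclideanSpace ℝ (Fin n) → ℝ) (M : ℝ) : Prop :=
  ∀ (a : EuclideanSpace ℝ (Fin n)) (ℓ : ℝ), 0 < ℓ →
        ⨍ y in cube n a ℓ, |b y - ⨍ z in cube n a ℓ, b z| ≤ M

lemma bmo_D {n : ℕ} {b : EuclideanSpace ℝ (Fin n) → ℝ} {M : ℝ} (hM : BMOle b M) (j : ℤ)
    (x : EuclideanSpace ℝ (Fin n)) :
    ∫ y in dyadicCubeOf n j x, |b y - dyadicAvg n j b x| ≤ ((2:ℝ) ^ j) ^ n * M := by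
  have h := hM (WithLp.toLp 2 fun i => ((⌈x i / (2:ℝ) ^ j⌉ : ℝ) - 1) * (2:ℝ) ^ j) ((2:ℝ) ^ j)
    (by positivity)
  rw [← D_eq_cube, setAverage_eq, volume_D, smul_eq_mul,
    inv_mul_le_iff₀ (by positivity)] at h
  exact h

lemma jump {n : ℕ} {b : EuclideanSpace ℝ (Fin n) → ℝ} (hb : LocallyIntegrable b volume)
    {M : ℝ} (hM : BMOle b M) (j : ℤ) (x : EuclideanSpace ℝ (Fin n)) :
    |dyadicAvg n j b x - dyadicAvg n (j + 1) b x| ≤ 2 ^ n * M := by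
  set B := dyadicAvg n (j + 1) b x
  have hp : 0 < ((2:ℝ) ^ j) ^ n := by positivity
  have h1 := bmo_D hM (j + 1) x
  have h2 := int_sub_const B (integrableOn_D hb j x)
  rw [vol_mul_avg b, ← mul_sub] at h2
  have h3 : |∫ y in dyadicCubeOf n j x, (b y - B)| ≤ ∫ y in dyadicCubeOf n j x, |b y - B| :=
    abs_integral_le_integral_abs
  have h4 : ∫ y in dyadicCubeOf n j x, |b y - B| ≤ ∫ y in dyadicCubeOf n (j + 1) x, |b y - B| := by
    have i1 : Integrable (fun y => b y - B) (volume.restrict (dyadicCubeOf n (j + 1) x)) :=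
      Integrable.sub (integrableOn_D hb (j + 1) x) (intc _ _ _)
    exact setIntegral_mono_set i1.abs (Filter.Eventually.of_forall fun x => abs_nonneg _)
      (D_mono (by omega) x).eventuallyLE
  rw [h2, abs_mul, abs_of_pos hp] at h3
  have h5 : ((2:ℝ) ^ (j + 1)) ^ n * M = ((2:ℝ) ^ j) ^ n * (2 ^ n * M) := by
    rw [zpow_add₀ (by norm_num), zpow_one, mul_pow]; ring
  rw [h5] at h1
  exact le_of_mul_le_mul_left (h3.trans (h4.trans h1)) hp

lemma int_avg {n : ℕ} {b : EuclideanSpace ℝ (Fin n) → ℝ} (hb : LocallyIntegrable b volume)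
    {c j : ℤ} (hcj : c ≤ j) (x : EuclideanSpace ℝ (Fin n)) :
    ∫ y in dyadicCubeOf n j x, dyadicAvg n c b y = ((2:ℝ) ^ j) ^ n * dyadicAvg n j b x := by
  have h := int_mul_vs (stopping_const (n := n) c) (fun _ => le_rfl) (measurableSet_D j x)
    (volume_D_ne_top j x) (fun y hy => (D_mono hcj y).trans (D_eq hy).subset)
    (integrableOn_D hb j x) (nice_const 1) (fun _ _ _ => rfl)
  simp only [one_mul] at h
  rw [← vol_mul_avg, ← h]
  rfl

lemma nice_avg {n : ℕ} {b : EuclideanSpace ℝ (Fin n) → ℝ} (hb : LocallyIntegrable b volume)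
    {c j : ℤ} (hcj : c ≤ j) (x : EuclideanSpace ℝ (Fin n)) :
    Nice (dyadicCubeOf n j x) (dyadicAvg n c b) :=
  nice_vs (s := fun _ => c) (measurable_const) (fun _ => le_rfl)
    (fun y hy => (D_mono hcj y).trans (D_eq hy).subset)
    (integrableOn_D hb j x)

lemma int_abs_avg {n : ℕ} {b : EuclideanSpace ℝ (Fin n) → ℝ} (hb : LocallyIntegrable b volume)
    {c j : ℤ} (hcj : c ≤ j) (x : EuclideanSpace ℝ (Fin n)) (A : ℝ) :
    ∫ y in dyadicCubeOf n j x, |dyadicAvg n c b y - A| ≤ ∫ y in dyadicCubeOf n j x, |b y - A| := by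
  have i1 : Integrable (fun y => |dyadicAvg n c b y - A|) (volume.restrict (dyadicCubeOf n j x)) :=
    ((nice_avg hb hcj x).sub (nice_const A)).abs.integrable (measurableSet_D j x)
      (volume_D_ne_top j x)
  have i2 : ∀ j x, Integrable (fun y => |b y - A|) (volume.restrict (dyadicCubeOf n j x)) :=
    fun j x => (Integrable.sub (integrableOn_D hb j x) (intc _ _ _)).abs
  rw [← sub_nonpos, ← integral_sub i1 (i2 j x)]
  refine l2g (stopping_const c) (measurableSet_D j x)
    (fun y hy => (D_mono hcj y).trans (D_eq hy).subset) (i1.sub (i2 j x)) fun y hy => ?_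
  have : ∫ z in dyadicCubeOf n c y, (|dyadicAvg n c b z - A| - |b z - A|) =
      ∫ z in dyadicCubeOf n c y, (|dyadicAvg n c b y - A| - |b z - A|) := by
    refine setIntegral_congr_fun (measurableSet_D _ _) fun z hz => ?_
    simp only [avg_eq b hz]
  rw [this, integral_sub (intc _ _ _) (i2 c y), setIntegral_const, volume_D, smul_eq_mul,
    sub_nonpos]
  have h2 := int_sub_const A (integrableOn_D hb c y)
  rw [vol_mul_avg b, ← mul_sub] at h2
  have hp : 0 < ((2:ℝ) ^ c) ^ n := by positivity
  have h3 : |∫ z in dyadicCubeOf n c y, (b z - A)| ≤ ∫ z in dyadicCubeOf n c y, |b z - A| :=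
    abs_integral_le_integral_abs
  rwa [h2, abs_mul, abs_of_pos hp] at h3

lemma int_sq_shift {n : ℕ} {b : EuclideanSpace ℝ (Fin n) → ℝ} (hb : LocallyIntegrable b volume)
    {c j : ℤ} (hcj : c ≤ j) (x : EuclideanSpace ℝ (Fin n)) (A : ℝ) :
    ∫ y in dyadicCubeOf n j x, (dyadicAvg n c b y - A) ^ 2 =
      (∫ y in dyadicCubeOf n j x, (dyadicAvg n c b y - dyadicAvg n j b x) ^ 2) +
      ((2:ℝ) ^ j) ^ n * (dyadicAvg n j b x - A) ^ 2 := by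
  set a := dyadicAvg n j b x with ha
  have hN := nice_avg hb hcj x
  have i0 : Integrable (dyadicAvg n c b) (volume.restrict (dyadicCubeOf n j x)) :=
    hN.integrable (measurableSet_D j x) (volume_D_ne_top j x)
  have i1 : Integrable (fun y => (dyadicAvg n c b y - a) ^ 2)
      (volume.restrict (dyadicCubeOf n j x)) :=
    (hN.sub (nice_const a)).sq.integrable (measurableSet_D j x) (volume_D_ne_top j x)
  have i2 : Integrable (fun y => 2 * (a - A) * (dyadicAvg n c b y - a))
      (volume.restrict (dyadicCubeOf n j x)) := (i0.sub (intc _ _ _)).const_mul _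
  have i3 : Integrable (fun y => (dyadicAvg n c b y - a) ^ 2 +
      2 * (a - A) * (dyadicAvg n c b y - a))
      (volume.restrict (dyadicCubeOf n j x)) := i1.add i2
  have e : ∫ y in dyadicCubeOf n j x, (dyadicAvg n c b y - A) ^ 2 =
      ∫ y in dyadicCubeOf n j x, ((dyadicAvg n c b y - a) ^ 2 +
      2 * (a - A) * (dyadicAvg n c b y - a) + (a - A) ^ 2) := by
    congr 1; funext y; ring
  rw [e, integral_add i3 (intc _ _ _), integral_add i1 i2, integral_const_mul,
    int_sub_const a i0, int_avg hb hcj x, ← ha, setIntegral_const, volume_D, smul_eq_mul]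
  ring

/-- The constant. -/
def KK (n : ℕ) : ℝ := 8 + (2 + 2 ^ n) ^ 2

lemma jn {n : ℕ} {b : EuclideanSpace ℝ (Fin n) → ℝ} (hb : LocallyIntegrable b volume)
    {M : ℝ} (hM0 : 0 < M) (hM : BMOle b M) (c : ℤ) (m : ℕ) :
    ∀ x : EuclideanSpace ℝ (Fin n),
      ∫ y in dyadicCubeOf n (c + m) x, (dyadicAvg n c b y - dyadicAvg n (c + m) b x) ^ 2
        ≤ ((2:ℝ) ^ (c + m)) ^ n * (KK n * M ^ 2) := by
  induction m using Nat.strong_induction_on with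
  | _ m ih =>
  intro x
  set A := dyadicAvg n (c + m) b x with hA
  set β : ℝ := (KK n + (2 + 2 ^ n) ^ 2) * M ^ 2 with hβ
  have hβ0 : 0 ≤ β := by
    have : 0 ≤ KK n := by unfold KK; positivity
    positivity
  set f := dyadicAvg n c b with hf
  let G : EuclideanSpace ℝ (Fin n) → ℝ := fun y =>
    2 * M * (f y - A) ^ 2 - 8 * M ^ 3 - β * |f y - A|
  have hle : ∀ i : ℕ, c ≤ c + i := fun i => by omega
  have hN : ∀ (i : ℕ) y, Nice (dyadicCubeOf n (c + i) y) f := fun i y => nice_avg hb (hle i) y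
  have i1 : ∀ (i : ℕ) y, Integrable (fun z => (f z - A) ^ 2)
      (volume.restrict (dyadicCubeOf n (c + i) y)) := fun i y =>
    ((hN i y).sub (nice_const A)).sq.integrable (measurableSet_D _ _) (volume_D_ne_top _ _)
  have i2 : ∀ (i : ℕ) y, Integrable (fun z => |f z - A|)
      (volume.restrict (dyadicCubeOf n (c + i) y)) := fun i y =>
    ((hN i y).sub (nice_const A)).abs.integrable (measurableSet_D _ _) (volume_D_ne_top _ _)
  have i3 : ∀ (i : ℕ) y, Integrable (fun z => 2 * M * (f z - A) ^ 2 - 8 * M ^ 3)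
      (volume.restrict (dyadicCubeOf n (c + i) y)) := fun i y =>
    ((i1 i y).const_mul (2 * M)).sub (intc _ _ _)
  have iG : ∀ (i : ℕ) y, Integrable G
      (volume.restrict (dyadicCubeOf n (c + i) y)) := fun i y =>
    (i3 i y).sub ((i2 i y).const_mul β)
  have eG : ∀ (i : ℕ) y, ∫ z in dyadicCubeOf n (c + i) y, G z =
      2 * M * (∫ z in dyadicCubeOf n (c + i) y, (f z - A) ^ 2)
        - ((2:ℝ) ^ (c + i)) ^ n * (8 * M ^ 3)
        - β * ∫ z in dyadicCubeOf n (c + i) y, |f z - A| := fun i y => by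
    simp only [G]
    rw [integral_sub (i3 i y) ((i2 i y).const_mul β), integral_const_mul,
      int_sub_const _ ((i1 i y).const_mul (2 * M)), integral_const_mul]
  have caseBig : ∀ i : ℕ, i ≤ m → ∀ y ∈ dyadicCubeOf n (c + m) x,
      |dyadicAvg n (c + i) b y - A| ≤ (2 + 2 ^ n) * M →
      2 * M < |dyadicAvg n (c + i) b y - A| →
      ∫ z in dyadicCubeOf n (c + i) y, G z ≤ 0 := by
    intro i him y hy hyA hst
    have hlt : i < m := by
      refine lt_of_le_of_ne him fun h => ?_
      subst h
      rw [avg_eq b hy, ← hA, sub_self, abs_zero] at hst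
      linarith
    have h1 := ih i hlt y
    have h2 := int_sq_shift hb (hle i) y A
    set p : ℝ := ((2:ℝ) ^ (c + i)) ^ n
    have hp : 0 < p := by positivity
    set a := dyadicAvg n (c + i) b y with ha
    have h3 : p * |a - A| ≤ ∫ z in dyadicCubeOf n (c + i) y, |f z - A| := by
      have e := int_sub_const A ((hN i y).integrable (measurableSet_D _ _) (volume_D_ne_top _ _))
      rw [int_avg hb (hle i) y, ← mul_sub] at e
      have h : |∫ z in dyadicCubeOf n (c + i) y, (f z - A)| ≤
        ∫ z in dyadicCubeOf n (c + i) y, |f z - A| := abs_integral_le_integral_abs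
      rwa [e, abs_mul, abs_of_pos hp] at h
    have h4 : (a - A) ^ 2 ≤ ((2 + 2 ^ n) * M) ^ 2 := by
      rw [← sq_abs (a - A)]
      exact pow_le_pow_left₀ (abs_nonneg _) hyA 2
    have h5 : ∫ z in dyadicCubeOf n (c + i) y, (f z - A) ^ 2 ≤ p * β := by
      rw [h2]
      refine (add_le_add h1 (mul_le_mul_of_nonneg_left h4 hp.le)).trans (le_of_eq ?_)
      rw [hβ]; ring
    rw [eG]
    have h6 := mul_le_mul_of_nonneg_left h5 (show 0 ≤ 2 * M by positivity)
    have h7 := mul_le_mul_of_nonneg_left h3 hβ0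
    have h8 := mul_le_mul_of_nonneg_left hst.le (show 0 ≤ p * β by positivity)
    have h9 : 0 ≤ p * (8 * M ^ 3) := by positivity
    linarith
  have claim : ∀ i : ℕ, i ≤ m → ∀ y ∈ dyadicCubeOf n (c + m) x,
      |dyadicAvg n (c + i) b y - A| ≤ (2 + 2 ^ n) * M →
      ∫ z in dyadicCubeOf n (c + i) y, G z ≤ 0 := by
    intro i
    induction i with
    | zero =>
      intro him y hy hyA
      by_cases hst : 2 * M < |dyadicAvg n (c + (0:ℕ)) b y - A|
      · exact caseBig 0 him y hy hyA hst
      push Not at hst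
      refine setIntegral_nonpos (measurableSet_D _ _) fun z hz => ?_
      simp only [G]
      have e : f z = dyadicAvg n (c + (0:ℕ)) b y := by
        rw [← avg_eq b hz]; simp [hf]
      rw [← e] at hst
      have h1 : (f z - A) ^ 2 ≤ (2 * M) ^ 2 := by
        rw [← sq_abs (f z - A)]
        exact pow_le_pow_left₀ (abs_nonneg _) hst 2
      have h2 := mul_le_mul_of_nonneg_left h1 (show 0 ≤ 2 * M by positivity)
      have h3 : 0 ≤ β * |f z - A| := by positivity
      nlinarith
    | succ i ihi =>
      intro him y hy hyA
      by_cases hst : 2 * M < |dyadicAvg n (c + (i + 1 : ℕ)) b y - A|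
      · exact caseBig (i + 1) him y hy hyA hst
      push Not at hst
      have hii : c + (i:ℤ) ≤ c + (i + 1 : ℕ) := by push_cast; omega
      have him' : c + ((i + 1 : ℕ) : ℤ) ≤ c + m := by omega
      refine l2g (stopping_const (c + (i:ℤ))) (measurableSet_D _ _)
        (fun z hz => (D_mono hii z).trans (D_eq hz).subset) (iG _ _) fun z hz => ?_
      refine ihi (by omega) z ?_ ?_
      · rw [← D_eq hy]; exact D_mono him' y hz
      · have hj := jump hb hM (c + i) z
        have e : c + (i:ℤ) + 1 = c + (i + 1 : ℕ) := by push_cast; ring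
        rw [e, avg_eq b hz] at hj
        have := abs_sub_le (dyadicAvg n (c + i) b z) (dyadicAvg n (c + (i + 1 : ℕ)) b y) A
        linarith
  have h1 := claim m le_rfl x (self_mem_D _ _) (by rw [← hA, sub_self, abs_zero]; positivity)
  rw [eG] at h1
  have h2 := (int_abs_avg hb (hle m) x A).trans (bmo_D hM (c + m) x)
  have h3 := mul_le_mul_of_nonneg_left h2 hβ0
  have h4 : 2 * M * (∫ z in dyadicCubeOf n (c + m) x, (f z - A) ^ 2) ≤
     2 * M * (((2:ℝ) ^ (c + m)) ^ n * (KK n * M ^ 2)) := by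
    refine (show _ ≤ ((2:ℝ) ^ (c + m)) ^ n * (8 * M ^ 3) + β * (((2:ℝ) ^ (c + m)) ^ n * M) by
      linarith).trans (le_of_eq ?_)
    rw [hβ, KK]; ring
  exact le_of_mul_le_mul_left h4 (by positivity)

/-- Clamped stopping time. -/
def clamp {n : ℕ} (J c : ℤ) (t : EuclideanSpace ℝ (Fin n) → ℤ) (x : EuclideanSpace ℝ (Fin n)) : ℤ :=
  max (min (t x) J) c

lemma clamp_stopping {n : ℕ} {J c : ℤ} (hcJ : c ≤ J) {t : EuclideanSpace ℝ (Fin n) → ℤ}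
    (ht : IsDyadicStopping n t) : IsDyadicStopping n (clamp J c t) := by
  refine ⟨(ht.1.min measurable_const).max measurable_const, fun x y hy => ?_⟩
  unfold clamp at hy ⊢
  by_cases h : c ≤ t x
  · have h1 : max (min (t x) J) c ≤ t x := by omega
    rw [ht.2 x y (D_mono h1 x hy)]
  · have h1 : max (min (t x) J) c = c := by omega
    rw [h1] at hy ⊢
    by_cases h2 : c ≤ t y
    · have := ht.2 y x (D_mono h2 y (mem_D_symm hy))
      omega
    · omega

lemma core {n : ℕ} {b : EuclideanSpace ℝ (Fin n) → ℝ} (hb : LocallyIntegrable b volume)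
    {M : ℝ} (hM0 : 0 < M) (hM : BMOle b M) {U : Set (EuclideanSpace ℝ (Fin n))}
    (hUm : MeasurableSet U) (hUf : volume U ≠ ⊤) (hbU : IntegrableOn b U volume) {J c : ℤ}
    (hcJ : c ≤ J) (hU : ∀ y ∈ U, dyadicCubeOf n J y ⊆ U)
    {s : ℕ → EuclideanSpace ℝ (Fin n) → ℤ} (hs : ∀ k, IsDyadicStopping n (s k))
    (hdec : ∀ k x, s (k + 1) x ≤ s k x) (hc : ∀ k x, c ≤ s k x) (hJ : ∀ k x, s k x ≤ J) (K : ℕ) :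
    ∫⁻ x in U, ∑ k ∈ Finset.range K, ENNReal.ofReal ((vs (s (k + 1)) b x - vs (s k) b x) ^ 2)
      ≤ ENNReal.ofReal (KK n * M ^ 2) * volume U := by
  have hUk : ∀ k, ∀ y ∈ U, dyadicCubeOf n (s k y) y ⊆ U := fun k y hy =>
    (D_mono (hJ k y) y).trans (hU y hy)
  have hN : ∀ k, Nice U (vs (s k) b) := fun k => nice_vs (hs k).1 (hc k) (hUk k) hbU
  have hI : ∀ k, Integrable (fun x => (vs (s (k + 1)) b x - vs (s k) b x) ^ 2)
    (volume.restrict U) := fun k => ((hN (k + 1)).sub (hN k)).sq.integrable hUm hUf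
  have e1 : ∀ k, ∫⁻ x in U, ENNReal.ofReal ((vs (s (k + 1)) b x - vs (s k) b x) ^ 2) =
      ENNReal.ofReal ((∫ x in U, vs (s (k + 1)) b x ^ 2) - ∫ x in U, vs (s k) b x ^ 2) := by
    intro k
    rw [← pyth (hs (k + 1)) (hs k) (hdec k) (hc (k + 1)) hUm hUf (hUk k) hbU,
      ofReal_integral_eq_lintegral_ofReal (hI k) (Filter.Eventually.of_forall fun x => sq_nonneg _)]
  have e2 : ∀ k, 0 ≤ (∫ x in U, vs (s (k + 1)) b x ^ 2) - ∫ x in U, vs (s k) b x ^ 2 := by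
    intro k
    rw [← pyth (hs (k + 1)) (hs k) (hdec k) (hc (k + 1)) hUm hUf (hUk k) hbU]
    exact integral_nonneg fun x => sq_nonneg _
  rw [lintegral_finsetSum _ fun k _ => (((hN (k + 1)).sub (hN k)).sq.1).ennreal_ofReal]
  simp only [e1]
  rw [← ENNReal.ofReal_sum_of_nonneg fun k _ => e2 k,
    Finset.sum_range_sub (fun k => ∫ x in U, vs (s k) b x ^ 2)]
  have sc := stopping_const (n := n) c
  have sJ := stopping_const (n := n) J
  have hUc : ∀ y ∈ U, dyadicCubeOf n c y ⊆ U := fun y hy => (D_mono hcJ y).trans (hU y hy)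
  have p1 := pyth sc (hs K) (hc K) (fun _ => le_rfl) hUm hUf (hUk K) hbU
  have p2 := pyth (hs 0) sJ (hJ 0) (hc 0) hUm hUf hU hbU
  have p3 := pyth sc sJ (fun _ => hcJ) (fun _ => le_rfl) hUm hUf hU hbU
  have q1 : 0 ≤ ∫ x in U, (vs (fun _ => c) b x - vs (s K) b x) ^ 2 :=
    integral_nonneg fun x => sq_nonneg _
  have q2 : 0 ≤ ∫ x in U, (vs (s 0) b x - vs (fun _ => J) b x) ^ 2 :=
    integral_nonneg fun x => sq_nonneg _
  have nc : Nice U (vs (fun _ => c) b) := nice_vs sc.1 (fun _ => le_rfl) hUc hbU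
  have nJ : Nice U (vs (fun _ => J) b) := nice_vs sJ.1 (fun _ => le_rfl) hU hbU
  have i1 : Integrable (fun x => (vs (fun _ => c) b x - vs (fun _ => J) b x) ^ 2)
    (volume.restrict U) := (nc.sub nJ).sq.integrable hUm hUf
  have i2 : Integrable (fun _ : EuclideanSpace ℝ (Fin n) => KK n * M ^ 2)
    (volume.restrict U) := integrableOn_const hUf
  have main : ∫ x in U, (vs (fun _ => c) b x - vs (fun _ => J) b x) ^ 2 ≤
      volume.real U * (KK n * M ^ 2) := by
    rw [← smul_eq_mul, ← setIntegral_const, ← sub_nonpos, ← integral_sub i1 i2]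
    refine l2g sJ hUm hU (i1.sub i2) fun y hy => ?_
    have : ∫ x in dyadicCubeOf n J y, ((vs (fun _ => c) b x - vs (fun _ => J) b x) ^ 2
        - KK n * M ^ 2) =
      ∫ x in dyadicCubeOf n J y, ((dyadicAvg n c b x - dyadicAvg n J b y) ^ 2
        - KK n * M ^ 2) := by
      refine setIntegral_congr_fun (measurableSet_D _ _) fun x hx => ?_
      simp only [vs, avg_eq b hx]
    rw [this, int_sub_const _ (((nice_avg hb hcJ y).sub (nice_const _)).sq.integrable
      (measurableSet_D _ _) (volume_D_ne_top _ _)), sub_nonpos]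
    obtain ⟨m, rfl⟩ := Int.le.dest hcJ
    exact jn hb hM0 hM c m y
  have hKK : 0 ≤ KK n * M ^ 2 := by unfold KK; positivity
  refine (ENNReal.ofReal_le_ofReal (show _ ≤ KK n * M ^ 2 * volume.real U by linarith)).trans ?_
  rw [ENNReal.ofReal_mul hKK, Measure.real, ENNReal.ofReal_toReal hUf]

lemma pos_case {n : ℕ} {b : EuclideanSpace ℝ (Fin n) → ℝ} (hb : LocallyIntegrable b volume)
    {M : ℝ} (hM0 : 0 < M) (hM : BMOle b M)
    {t : ℕ → EuclideanSpace ℝ (Fin n) → ℤ} (ht : ∀ k, IsDyadicStopping n (t k))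
    (hdec : ∀ k x, t (k + 1) x ≤ t k x) (a : EuclideanSpace ℝ (Fin n)) {ℓ : ℝ} (hℓ : 0 < ℓ) :
    ∑' k : ℕ,
          ∫⁻ x in cube n a ℓ,
            ({x : EuclideanSpace ℝ (Fin n) | (2:ℝ) ^ (t k x) ≤ ℓ}).indicator
              (fun x => ENNReal.ofReal
                ((dyadicAvg n (t (k + 1) x) b x - dyadicAvg n (t k x) b x) ^ 2)) x
        ≤ ENNReal.ofReal (KK n * 3 ^ n * M ^ 2) * volume (cube n a ℓ) := by
  set J := Int.log 2 ℓ with hJdef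
  have hJ1 : (2:ℝ) ^ J ≤ ℓ := by
    have := Int.zpow_log_le_self (b := 2) (by norm_num) hℓ
    simpa using this
  have hJ2 : ∀ i : ℤ, (2:ℝ) ^ i ≤ ℓ → i ≤ J := by
    intro i hi
    have := Int.lt_zpow_succ_log_self (b := 2) (by norm_num) ℓ
    have h2 : (2:ℝ) ^ i < (2:ℝ) ^ (J + 1) := lt_of_le_of_lt hi (by simpa using this)
    have := (zpow_lt_zpow_iff_right₀ (by norm_num : (1:ℝ) < 2)).1 h2
    omega
  let cc : EuclideanSpace ℝ (Fin n) → Fin n → ℤ := fun x i => ⌈x i / (2:ℝ) ^ J⌉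
  let U : Set (EuclideanSpace ℝ (Fin n)) := cc ⁻¹' (cc '' cube n a ℓ)
  have hUm : MeasurableSet U := (measurable_ceil J) (Set.to_countable _).measurableSet
  have hQU : cube n a ℓ ⊆ U := fun x hx => ⟨x, hx, rfl⟩
  have hU : ∀ y ∈ U, dyadicCubeOf n J y ⊆ U := by
    rintro y ⟨q, hq, hqy⟩ z hz
    exact ⟨q, hq, hqy.trans (funext fun i => (mem_D.1 hz i).symm)⟩
  have hUQ : U ⊆ cube n (WithLp.toLp 2 fun i => a i - ℓ) (3 * ℓ) := by
    rintro y ⟨q, hq, hqy⟩ i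
    have h1 : y ∈ dyadicCubeOf n J q := mem_D.2 fun i => (congrFun hqy i).symm
    have h2 := h1 i
    have h3 := self_mem_D J q i
    have h4 := hq i
    have h5 : ((⌈q i / (2:ℝ) ^ J⌉ : ℝ) - 1) * (2:ℝ) ^ J
      = (⌈q i / (2:ℝ) ^ J⌉ : ℝ) * (2:ℝ) ^ J - (2:ℝ) ^ J := by ring
    rw [h5] at h2 h3
    simp only
    constructor <;> linarith [h2.1, h2.2, h3.1, h3.2, h4.1, h4.2]
  have hUv : volume U ≤ ENNReal.ofReal (3 ^ n) * volume (cube n a ℓ) := by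
    refine (measure_mono hUQ).trans (le_of_eq ?_)
    rw [volume_cube, volume_cube, ENNReal.ofReal_mul (by norm_num), mul_pow,
      ENNReal.ofReal_pow (by norm_num)]
  have hUf : volume U ≠ ⊤ := by
    refine ne_top_of_le_ne_top ?_ (measure_mono hUQ)
    rw [volume_cube]; exact ENNReal.pow_ne_top ENNReal.ofReal_ne_top
  have hbU : IntegrableOn b U volume := (integrableOn_cube hb _ _).mono_set hUQ
  have hKK : 0 ≤ KK n * M ^ 2 := by unfold KK; positivity
  have hfin : ENNReal.ofReal (KK n * M ^ 2) * volume U ≤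
      ENNReal.ofReal (KK n * 3 ^ n * M ^ 2) * volume (cube n a ℓ) := by
    refine (mul_le_mul_right hUv _).trans (le_of_eq ?_)
    rw [← mul_assoc, ← ENNReal.ofReal_mul hKK]
    congr 2; ring
  refine le_trans ?_ hfin
  refine ENNReal.tsum_le_of_sum_range_le fun K => ?_
  have hmeas : ∀ k, Measurable (({x : EuclideanSpace ℝ (Fin n) | (2:ℝ) ^ (t k x) ≤ ℓ}).indicator
      (fun x => ENNReal.ofReal
        ((dyadicAvg n (t (k + 1) x) b x - dyadicAvg n (t k x) b x) ^ 2))) := by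
    intro k
    refine Measurable.indicator ?_ ?_
    · exact (((measurable_vs b (ht (k + 1)).1).sub (measurable_vs b (ht k).1)).pow_const
        2).ennreal_ofReal
    · exact (ht k).1 (Set.to_countable {i : ℤ | (2:ℝ) ^ i ≤ ℓ}).measurableSet
  rw [← lintegral_finsetSum _ fun k _ => hmeas k]
  let s : ℕ → ℕ → EuclideanSpace ℝ (Fin n) → ℤ := fun N k => clamp J (J - N) (t k)
  have hs : ∀ N k, IsDyadicStopping n (s N k) := fun N k => clamp_stopping (by omega) (ht k)
  let F : ℕ → EuclideanSpace ℝ (Fin n) → ℝ≥0∞ := fun N x =>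
    ∑ k ∈ Finset.range K, ENNReal.ofReal ((vs (s N (k + 1)) b x - vs (s N k) b x) ^ 2)
  have hF : ∀ N, Measurable (F N) := fun N => Finset.measurable_sum _ fun k _ =>
    (((measurable_vs b (hs N (k + 1)).1).sub (measurable_vs b (hs N k).1)).pow_const
        2).ennreal_ofReal
  have hFU : ∀ N, ∫⁻ x in U, F N x ≤ ENNReal.ofReal (KK n * M ^ 2) * volume U := by
    intro N
    refine core hb hM0 hM hUm hUf hbU (c := J - N) (by omega) hU (hs N) ?_ ?_ ?_ K
    · intro k x
      have := hdec k x
      simp only [s, clamp]; omega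
    · intro k x; simp only [s, clamp]; omega
    · intro k x; simp only [s, clamp]; omega
  have hpt : ∀ x, (∑ k ∈ Finset.range K,
      ({x : EuclideanSpace ℝ (Fin n) | (2:ℝ) ^ (t k x) ≤ ℓ}).indicator
      (fun x => ENNReal.ofReal
        ((dyadicAvg n (t (k + 1) x) b x - dyadicAvg n (t k x) b x) ^ 2)) x) ≤
      Filter.liminf (fun N => F N x) Filter.atTop := by
    intro x
    refine Filter.le_liminf_of_le (by isBoundedDefault) ?_
    have : ∀ k ∈ Finset.range K, ∀ᶠ N : ℕ in Filter.atTop,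
        ({x : EuclideanSpace ℝ (Fin n) | (2:ℝ) ^ (t k x) ≤ ℓ}).indicator
        (fun x => ENNReal.ofReal
        ((dyadicAvg n (t (k + 1) x) b x - dyadicAvg n (t k x) b x) ^ 2)) x ≤
        ENNReal.ofReal ((vs (s N (k + 1)) b x - vs (s N k) b x) ^ 2) := by
      intro k _
      filter_upwards [Filter.eventually_ge_atTop (J - t (k + 1) x).toNat] with N hN
      by_cases hx : (2:ℝ) ^ (t k x) ≤ ℓ
      · have h1 := hJ2 _ hx
        have h2 := hdec k x
        have e1 : s N k x = t k x := by simp only [s, clamp]; omega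
        have e2 : s N (k + 1) x = t (k + 1) x := by simp only [s, clamp]; omega
        refine (Set.indicator_le_self _ _ _).trans ?_
        rw [vs, vs, e1, e2]
      · have hx' : x ∉ {x : EuclideanSpace ℝ (Fin n) | (2:ℝ) ^ (t k x) ≤ ℓ} := hx
        rw [Set.indicator_of_notMem hx']
        exact bot_le
    have := (Finset.eventually_all _).2 this
    filter_upwards [this] with N hN
    exact Finset.sum_le_sum hN
  calc _ ≤ ∫⁻ x in cube n a ℓ, Filter.liminf (fun N => F N x) Filter.atTop := lintegral_mono hpt
    _ ≤ ∫⁻ x in U, Filter.liminf (fun N => F N x) Filter.atTop := lintegral_mono_set hQU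
    _ ≤ Filter.liminf (fun N => ∫⁻ x in U, F N x) Filter.atTop := lintegral_liminf_le hF
    _ ≤ _ := by
      refine Filter.liminf_le_of_frequently_le' (Filter.Frequently.of_forall hFU)

theorem stmt10 (n : ℕ) (hn : 1 ≤ n) :
    ∃ C : ℝ, 0 < C ∧
      ∀ b : EuclideanSpace ℝ (Fin n) → ℝ, LocallyIntegrable b volume →
      ∀ M : ℝ, 0 ≤ M →
      -- b ∈ BMO with ‖b‖_{BMO} ≤ M
      (∀ (a : EuclideanSpace ℝ (Fin n)) (ℓ : ℝ), 0 < ℓ →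
        ⨍ y in cube n a ℓ, |b y - ⨍ z in cube n a ℓ, b z| ≤ M) →
      -- any decreasing sequence of dyadic stopping times
      ∀ t : ℕ → EuclideanSpace ℝ (Fin n) → ℤ,
        (∀ k, IsDyadicStopping n (t k)) →
        (∀ k x, t (k + 1) x ≤ t k x) →
      ∀ (a : EuclideanSpace ℝ (Fin n)) (ℓ : ℝ), 0 < ℓ →
      ∑' k : ℕ,
          ∫⁻ x in cube n a ℓ,
            ({x : EuclideanSpace ℝ (Fin n) | (2:ℝ) ^ (t k x) ≤ ℓ}).indicator
              (fun x => ENNReal.ofReal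
                ((dyadicAvg n (t (k + 1) x) b x - dyadicAvg n (t k x) b x) ^ 2)) x
        ≤ ENNReal.ofReal (C * M ^ 2) * volume (cube n a ℓ) := by
  have hK : 0 < KK n := by unfold KK; positivity
  refine ⟨KK n * 3 ^ n, by positivity, ?_⟩
  intro b hb M hM0 hM t ht hdec a ℓ hℓ
  have key : ∀ ε : ℝ, 0 < ε → _ := fun ε hε =>
    pos_case hb (M := M + ε) (by linarith) (fun a ℓ hℓ => (hM a ℓ hℓ).trans (by linarith))
      ht hdec a hℓ
  have hlim : Filter.Tendsto (fun ε : ℝ => ENNReal.ofReal (KK n * 3 ^ n * (M + ε) ^ 2) *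
      volume (cube n a ℓ)) (nhdsWithin 0 (Set.Ioi 0))
      (nhds (ENNReal.ofReal (KK n * 3 ^ n * M ^ 2) * volume (cube n a ℓ))) := by
    refine ENNReal.Tendsto.mul_const ?_ (Or.inr ?_)
    · have : Continuous fun ε : ℝ => ENNReal.ofReal (KK n * 3 ^ n * (M + ε) ^ 2) :=
        ENNReal.continuous_ofReal.comp (by fun_prop)
      have h := this.tendsto 0
      simp only [add_zero] at h
      exact h.mono_left nhdsWithin_le_nhds
    · rw [volume_cube]; exact ENNReal.pow_ne_top ENNReal.ofReal_ne_top
  refine ge_of_tendsto hlim ?_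
  filter_upwards [self_mem_nhdsWithin] with ε hε
  exact key ε hε
end
end
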